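/- Let n ≥ 1, let b ≥ 1 be an integer, and let α ∈ (1/2, 1] satisfy 2α − 1 < n and nb > (2α−1)(b+1). Let p(·) ∈ P^log(ℝ^n) with p⁻ > b+1 and (2α−1)·p⁺ < n(b+1), and set r = nb/(2α−1). Then there exists ε > 0 with the following property: for every u₀ ∈ L^{p(·)}(ℝ^n) ∩ L^r(ℝ^n) and every measurable 𝓕 : (0,∞)×ℝ^n → ℝ such that ‖u₀‖_{𝓛^{p(·)}_r} + N_{p(·)/(b+1), nb/((b+1)(2α−1))}(𝓕) < ε, there exist R > 0 and a measurable u : (0,∞)×ℝ^n → ℝ with N_{p(·),r}(u) ≤ R which is a mild solution (with γ = 1) of ∂_t u + (−Δ)^α u = 1⃗·∇(|u|^b u) + 1⃗·∇𝓕 with data u₀, and u is the unique mild solution satisfying N_{p(·),r}(u) ≤ R. -/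

import Mathlib

open MeasureTheory Set
open scoped ENNReal FourierTransform

noncomputable section

/-- Euclidean space `ℝ^n`. -/
abbrev Rn (n : ℕ) := EuclideanSpace ℝ (Fin n)

/-- Luxemburg norm of an `ℝ≥0∞`-valued function for a variable exponent `p`. -/
def luxNorm {Ω : Type*} [MeasurableSpace Ω] (μ : Measure Ω) (p : Ω → ℝ) (f : Ω → ℝ≥0∞) : ℝ≥0∞ :=
  sInf {lam : ℝ≥0∞ | 0 < lam ∧ ∫⁻ x, (f x / lam) ^ (p x) ∂μ ≤ 1}

/-- Luxemburg norm `‖f‖_{L^{p(·)}}` of a real-valued function. -/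
def luxNormR {Ω : Type*} [MeasurableSpace Ω] (μ : Measure Ω) (p : Ω → ℝ) (f : Ω → ℝ) : ℝ≥0∞ :=
  luxNorm μ p (fun x => ENNReal.ofReal |f x|)

/-- `p(·) ∈ P^log(Ω)`: measurable, with values in `[1,∞)` on `Ω`, locally log-Hölder
continuous on `Ω`, and satisfying the log-Hölder decay condition on `Ω`. -/
def IsPLog {E : Type*} [NormedAddCommGroup E] [MeasurableSpace E] (Ω : Set E) (p : E → ℝ) : Prop :=
  Measurable p ∧ (∀ x ∈ Ω, 1 ≤ p x) ∧
  ∃ C₁ > (0:ℝ), ∃ C₂ > (0:ℝ), ∃ pinf : ℝ,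
    (∀ x ∈ Ω, ∀ y ∈ Ω, x ≠ y →
      |1 / p x - 1 / p y| ≤ C₁ / Real.log (Real.exp 1 + 1 / ‖x - y‖)) ∧
    (∀ x ∈ Ω, |1 / p x - 1 / pinf| ≤ C₂ / Real.log (Real.exp 1 + ‖x‖))

/-- The fractional heat kernel `𝔤_t^α` on `ℝ^n`: the inverse Fourier transform of
`ξ ↦ exp (-t‖ξ‖^{2α})` (it is real-valued; we take the real part). -/
def gKer (n : ℕ) (α t : ℝ) (x : Rn n) : ℝ :=
  (𝓕⁻ (fun ξ : Rn n => (Real.exp (-t * ‖ξ‖ ^ (2 * α)) : ℂ)) x).re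

/-- Convolution on `ℝ^n`. -/
def conv (n : ℕ) (g f : Rn n → ℝ) (x : Rn n) : ℝ := ∫ y, g (x - y) * f y

/-- The partial derivative `∂_j 𝔤_t^α`. -/
def dKer (n : ℕ) (α t : ℝ) (j : Fin n) (z : Rn n) : ℝ :=
  fderiv ℝ (gKer n α t) z (EuclideanSpace.single j 1)

/-- `x ↦ ess sup_{t>0} |u(t,x)|`, as an `ℝ≥0∞`-valued function. -/
def timeSup (n : ℕ) (u : ℝ → Rn n → ℝ) (x : Rn n) : ℝ≥0∞ :=
  essSup (fun t => ENNReal.ofReal |u t x|) (volume.restrict (Ioi (0:ℝ)))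

/-- Mixed norm `‖f‖_{𝓛^{p(·)}_r} = max {‖f‖_{L^{p(·)}}, ‖f‖_{L^r}}`. -/
def mixedNorm (n : ℕ) (p : Rn n → ℝ) (r : ℝ) (f : Rn n → ℝ) : ℝ≥0∞ :=
  max (luxNormR volume p f) (luxNormR volume (fun _ => r) f)

/-- `N_{p(·),r}(u) = ‖x ↦ ess sup_{t>0}|u(t,x)|‖_{𝓛^{p(·)}_r}`. -/
def mixedN (n : ℕ) (p : Rn n → ℝ) (r : ℝ) (u : ℝ → Rn n → ℝ) : ℝ≥0∞ :=
  max (luxNorm volume p (timeSup n u)) (luxNorm volume (fun _ => r) (timeSup n u))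

/-- Mild solution (γ = 1), on the time set `S`, of
`∂_t u + (-Δ)^α u = 1⃗·∇(|u|^b u) + 1⃗·∇𝓕`, `u(0) = u₀`, the derivatives being
transferred to the kernel: for a.e. `(t,x)` with `t ∈ S`, all integrals converge
absolutely and the Duhamel formula holds. -/
def IsMildSol1 (n : ℕ) (α : ℝ) (b : ℕ) (S : Set ℝ) (F : ℝ → Rn n → ℝ) (u₀ : Rn n → ℝ)
    (u : ℝ → Rn n → ℝ) : Prop :=
  ∀ᵐ tx : ℝ × Rn n ∂((volume.restrict S).prod volume),
    Integrable (fun y => gKer n α tx.1 (tx.2 - y) * u₀ y) volume ∧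
    (∀ j : Fin n, IntegrableOn
      (fun sy : ℝ × Rn n => dKer n α (tx.1 - sy.1) j (tx.2 - sy.2) * F sy.1 sy.2)
      (Ioc 0 tx.1 ×ˢ univ) (volume.prod volume)) ∧
    (∀ j : Fin n, IntegrableOn
      (fun sy : ℝ × Rn n =>
        dKer n α (tx.1 - sy.1) j (tx.2 - sy.2) * (|u sy.1 sy.2| ^ b * u sy.1 sy.2))
      (Ioc 0 tx.1 ×ˢ univ) (volume.prod volume)) ∧
    u tx.1 tx.2 = conv n (gKer n α tx.1) u₀ tx.2
      + (∑ j : Fin n, ∫ s in Ioc (0:ℝ) tx.1, conv n (dKer n α (tx.1 - s) j) (F s) tx.2)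
      - ∑ j : Fin n, ∫ s in Ioc (0:ℝ) tx.1,
          conv n (dKer n α (tx.1 - s) j) (fun y => |u s y| ^ b * u s y) tx.2

/-!
The fractional heat kernel is a mixture of Gauss kernels with respect to the one-sided `α`-stable
law. It is therefore radially decreasing of mass `1`, so that the supremum over all times of the
free evolution is at most the maximal function of the initial value, and the integral over all
times of the norm of its gradient at `x` is at most a multiple of `|x| ^ (-(n - (2 * α - 1)))`, so
that the Duhamel term of a source is dominated by the Riesz potential of order `2 * α - 1` of the
supremum over all times of the source. The maximal operator is bounded on variable Lebesgue spaces
with log-Hölder continuous exponent, and hence, by Hedberg's inequality, the Riesz potential of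
order `2 * α - 1` is bounded from `L^{p(·) / (b + 1)} ∩ L^{r / (b + 1)}` to `L^{p(·)} ∩ L^r` for
`r = n b / (2 α - 1)`, the exponent at which its scaling is compatible with that of the power
`|u| ^ b * u`. Since this power is locally Lipschitz with a constant that vanishes at `0`, the
mild formulation is a fixed point problem for a contraction on a small ball.
-/

section MaximalFunction

variable {E : Type*} [NormedAddCommGroup E] [MeasurableSpace E]

/-- The centred Hardy–Littlewood maximal function of `f` with respect to `μ`, for functions with
values in `ℝ≥0∞` (so that it is always defined). -/
def maximalFunction (μ : Measure E) (f : E → ℝ≥0∞) (x : E) : ℝ≥0∞ :=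
  ⨆ (ρ : ℝ) (_ : 0 < ρ), ⨍⁻ y in Metric.ball x ρ, f y ∂μ

variable {μ : Measure E}

lemma setLAverage_ball_le_maximalFunction (f : E → ℝ≥0∞) (x : E) {ρ : ℝ} (hρ : 0 < ρ) :
    ⨍⁻ y in Metric.ball x ρ, f y ∂μ ≤ maximalFunction μ f x :=
  le_iSup₂_of_le ρ hρ le_rfl

lemma maximalFunction_mono {f g : E → ℝ≥0∞} (h : f ≤ g) (x : E) :
    maximalFunction μ f x ≤ maximalFunction μ g x :=
  iSup₂_mono fun _ _ => lintegral_mono h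

lemma maximalFunction_add_le {f : E → ℝ≥0∞} (hf : Measurable f) (g : E → ℝ≥0∞) (x : E) :
    maximalFunction μ (fun y => f y + g y) x ≤ maximalFunction μ f x + maximalFunction μ g x :=
  iSup₂_le fun _ hρ => by
    rw [laverage, lintegral_add_left hf]
    exact add_le_add (setLAverage_ball_le_maximalFunction f x hρ)
      (setLAverage_ball_le_maximalFunction g x hρ)

lemma maximalFunction_le_of_le {f : E → ℝ≥0∞} {c : ℝ≥0∞} (h : ∀ y, f y ≤ c) (x : E) :
    maximalFunction μ f x ≤ c :=
  iSup₂_le fun ρ _ => (laverage_le_essSup f).trans (essSup_le_of_ae_le c (.of_forall h))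

lemma maximalFunction_div {f : E → ℝ≥0∞} (hf : Measurable f) (c : ℝ≥0∞) (x : E) :
    maximalFunction μ (fun y => f y / c) x = maximalFunction μ f x / c := by
  simp only [maximalFunction, laverage, div_eq_mul_inv, ENNReal.iSup_mul,
    lintegral_mul_const _ hf]

lemma lowerSemicontinuous_measure_ball {X : Type*} [PseudoMetricSpace X] [MeasurableSpace X]
    (ν : Measure X) (ρ : ℝ) : LowerSemicontinuous fun x => ν (Metric.ball x ρ) := by
  intro x a ha
  have hUnion : ⋃ k : ℕ, Metric.ball x (ρ - 1 / (k + 1)) = Metric.ball x ρ := by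
    refine (iUnion_subset fun k => Metric.ball_subset_ball ?_).antisymm fun y hy => ?_
    · exact sub_le_self _ Nat.one_div_pos_of_nat.le
    · obtain ⟨k, hk⟩ := exists_nat_one_div_lt (sub_pos.2 (Metric.mem_ball.1 hy))
      exact mem_iUnion.2 ⟨k, Metric.mem_ball.2 (by linarith)⟩
  have hlt : a < ν (⋃ k : ℕ, Metric.ball x (ρ - 1 / (k + 1))) := by rwa [hUnion]
  rw [Monotone.measure_iUnion fun i j hij => Metric.ball_subset_ball (sub_le_sub_left
    (Nat.one_div_le_one_div hij) ρ)] at hlt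
  obtain ⟨k, hk⟩ := lt_iSup_iff.1 hlt
  filter_upwards [Metric.ball_mem_nhds x (Nat.one_div_pos_of_nat (n := k))] with y hy
  refine hk.trans_le (measure_mono fun z hz => ?_)
  have := dist_triangle_right z y x
  simp only [Metric.mem_ball] at hy hz ⊢
  linarith [dist_triangle_right z y x, dist_comm x y]

lemma lowerSemicontinuous_maximalFunction [BorelSpace E] [μ.IsAddHaarMeasure] (f : E → ℝ≥0∞) :
    LowerSemicontinuous (maximalFunction μ f) := by
  refine lowerSemicontinuous_biSup fun ρ hρ => ?_
  simp only [setLAverage_eq, Measure.addHaar_ball_center μ _ ρ,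
    ← withDensity_apply f Metric.isOpen_ball.measurableSet]
  exact (ENNReal.continuous_div_const _
    (Metric.measure_ball_pos μ _ hρ).ne').comp_lowerSemicontinuous
      (lowerSemicontinuous_measure_ball _ ρ) fun _ _ h => ENNReal.div_le_div_right h _

lemma measurable_maximalFunction [BorelSpace E] [μ.IsAddHaarMeasure] (f : E → ℝ≥0∞) :
    Measurable (maximalFunction μ f) :=
  (lowerSemicontinuous_maximalFunction f).measurable

lemma lintegral_radial_mul_eq_lintegral_ball [BorelSpace E] [SFinite μ] {w : ℝ → ℝ≥0∞}
    (hw : Measurable w) {f : E → ℝ≥0∞} (hf : Measurable f) (x : E) :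
    ∫⁻ y, (∫⁻ ρ in Ioi ‖x - y‖, w ρ) * f y ∂μ =
      ∫⁻ ρ in Ioi 0, w ρ * ∫⁻ y in Metric.ball x ρ, f y ∂μ := by
  let G : ℝ → E → ℝ≥0∞ := fun ρ y =>
    {z : ℝ × E | dist z.2 x < z.1}.indicator (fun z => w z.1 * f z.2) (ρ, y)
  have hG : Measurable (Function.uncurry G) :=
    Measurable.indicator (by fun_prop) (measurableSet_lt (by fun_prop) measurable_fst)
  have hradial (y : E) : (∫⁻ ρ in Ioi ‖x - y‖, w ρ) * f y = ∫⁻ ρ in Ioi 0, G ρ y := by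
    have hGy : (fun ρ => G ρ y) = (Ioi (dist y x)).indicator fun ρ => w ρ * f y := rfl
    rw [hGy, setLIntegral_indicator measurableSet_Ioi,
      inter_eq_left.2 (Ioi_subset_Ioi dist_nonneg), lintegral_mul_const _ hw, dist_eq_norm']
  have hball (ρ : ℝ) : ∫⁻ y, G ρ y ∂μ = w ρ * ∫⁻ y in Metric.ball x ρ, f y ∂μ := by
    rw [← lintegral_const_mul _ hf, ← lintegral_indicator Metric.isOpen_ball.measurableSet]
    rfl
  simp only [hradial, ← hball]
  exact lintegral_lintegral_swap (f := fun y ρ => G ρ y) (hG.comp measurable_swap).aemeasurable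

variable [NormedSpace ℝ E] [FiniteDimensional ℝ E] [BorelSpace E] [μ.IsAddHaarMeasure]

lemma lintegral_radial_mul_le_maximalFunction {w : ℝ → ℝ≥0∞} (hw : Measurable w) {f : E → ℝ≥0∞}
    (hf : Measurable f) (x : E) :
    ∫⁻ y, (∫⁻ ρ in Ioi ‖x - y‖, w ρ) * f y ∂μ ≤
      (∫⁻ y, (∫⁻ ρ in Ioi ‖y‖, w ρ) ∂μ) * maximalFunction μ f x := by
  have hmass : ∫⁻ y, (∫⁻ ρ in Ioi ‖y‖, w ρ) ∂μ = ∫⁻ ρ in Ioi 0, w ρ * μ (Metric.ball x ρ) := by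
    rw [← lintegral_sub_left_eq_self _ x]
    simpa using lintegral_radial_mul_eq_lintegral_ball hw (measurable_const (a := 1)) x (μ := μ)
  have hmeas : Measurable fun ρ : ℝ => w ρ * μ (Metric.ball x ρ) :=
    hw.mul (Monotone.measurable fun _ _ h => measure_mono (Metric.ball_subset_ball h))
  rw [lintegral_radial_mul_eq_lintegral_ball hw hf, hmass, ← lintegral_mul_const _ hmeas]
  refine setLIntegral_mono' measurableSet_Ioi fun ρ hρ => ?_
  rw [mul_assoc, ← measure_mul_setLAverage f measure_ball_lt_top.ne]
  gcongr
  exact setLAverage_ball_le_maximalFunction f x hρ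

lemma exists_forall_le_of_measure_ball_le [Nontrivial E] {C : ℝ≥0∞} (hC : C ≠ ∞) :
    ∃ R : ℝ, ∀ (x : E) (ρ : ℝ), μ (Metric.ball x ρ) ≤ C → ρ ≤ R := by
  have hlim : Filter.Tendsto (fun k : ℕ => μ (Metric.ball (0 : E) k)) Filter.atTop (nhds ∞) := by
    rw [← measure_univ_of_isAddLeftInvariant μ, ← Metric.iUnion_ball_nat (0 : E)]
    exact tendsto_measure_iUnion_atTop fun _ _ h => Metric.ball_subset_ball (Nat.cast_le.2 h)
  obtain ⟨k, hk⟩ := ((tendsto_order.1 hlim).1 C hC.lt_top).exists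
  refine ⟨k, fun x ρ hρ => ?_⟩
  by_contra! hlt
  rw [Measure.addHaar_ball_center] at hρ
  exact absurd (hk.trans_le (measure_mono (Metric.ball_subset_ball hlt.le))) hρ.not_gt

lemma measure_lt_maximalFunction_le [Nontrivial E] (f : E → ℝ≥0∞) {a : ℝ≥0∞} (ha : a ≠ 0)
    (ha' : a ≠ ∞) :
    μ {x | a < maximalFunction μ f x} ≤ 4 ^ Module.finrank ℝ E / a * ∫⁻ y, f y ∂μ := by
  rcases eq_or_ne (∫⁻ y, f y ∂μ) ∞ with hI | hI
  · simp [hI, ENNReal.mul_top, ha']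
  have hball : ∀ x : {x | a < maximalFunction μ f x}, ∃ ρ > 0,
      μ (Metric.ball x.1 ρ) ≤ (∫⁻ y in Metric.ball x.1 ρ, f y ∂μ) / a := by
    rintro ⟨x, hx⟩
    simp only [mem_ofPred_eq, maximalFunction, lt_iSup_iff] at hx
    obtain ⟨ρ, hρ, hlt⟩ := hx
    refine ⟨ρ, hρ, ?_⟩
    rw [ENNReal.le_div_iff_mul_le (.inl ha) (.inl ha'),
      ← measure_mul_setLAverage f measure_ball_lt_top.ne]
    gcongr
  choose ρ hρ hle using hball
  obtain ⟨R, hR⟩ := exists_forall_le_of_measure_ball_le (μ := μ) (ENNReal.div_ne_top hI ha)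
  obtain ⟨u, -, hdisj, hcov⟩ := Vitali.exists_disjoint_subfamily_covering_enlargement_ball
    univ Subtype.val ρ R (fun x _ => hR x (ρ x) ((hle x).trans
      (ENNReal.div_le_div_right (setLIntegral_le_lintegral _ _) a))) 4 (by norm_num)
  have hcount : u.Countable := hdisj.countable_of_isOpen (fun _ _ => Metric.isOpen_ball)
    fun x _ => ⟨x.1, Metric.mem_ball_self (hρ x)⟩
  have hsub : {x | a < maximalFunction μ f x} ⊆ ⋃ x ∈ u, Metric.ball x.1 (4 * ρ x) := fun x hx =>
    let ⟨b, hb, hb'⟩ := hcov ⟨x, hx⟩ (mem_univ _)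
    mem_biUnion hb (hb' (Metric.mem_ball_self (hρ ⟨x, hx⟩)))
  calc μ {x | a < maximalFunction μ f x}
      ≤ ∑' x : u, μ (Metric.ball x.1.1 (4 * ρ x)) :=
        (measure_mono hsub).trans (measure_biUnion_le _ hcount _)
    _ ≤ ∑' x : u, 4 ^ Module.finrank ℝ E / a * ∫⁻ y in Metric.ball x.1.1 (ρ x), f y ∂μ := by
        refine ENNReal.tsum_le_tsum fun x => ?_
        rw [Measure.addHaar_ball_mul_of_pos μ _ (by norm_num : (0 : ℝ) < 4),
          ← Measure.addHaar_ball_center μ x.1.1, ENNReal.ofReal_pow (by norm_num),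
          ENNReal.ofReal_ofNat, div_eq_mul_inv, mul_assoc, mul_comm a⁻¹, ← div_eq_mul_inv]
        gcongr
        exact hle x
    _ = 4 ^ Module.finrank ℝ E / a * ∫⁻ y in ⋃ x ∈ u, Metric.ball x.1 (ρ x), f y ∂μ := by
        rw [ENNReal.tsum_mul_left,
          lintegral_biUnion hcount (fun _ _ => Metric.isOpen_ball.measurableSet) hdisj]
    _ ≤ 4 ^ Module.finrank ℝ E / a * ∫⁻ y, f y ∂μ := by
        gcongr
        exact Measure.restrict_le_self

/-- Only the part of `f` above half the level contributes to the level set of the maximal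
function. -/
lemma measure_ofReal_lt_maximalFunction_le [Nontrivial E] {f : E → ℝ≥0∞} (hf : Measurable f)
    {a : ℝ} (ha : 0 < a) :
    μ {x | ENNReal.ofReal a < maximalFunction μ f x} ≤
      2 * 4 ^ Module.finrank ℝ E / ENNReal.ofReal a *
        ∫⁻ y in {y | ENNReal.ofReal a < 2 * f y}, f y ∂μ := by
  set A : ℝ≥0∞ := ENNReal.ofReal a
  have hA : A / 2 ≠ 0 := by simp [A, ha]
  have hA' : A / 2 ≠ ∞ := by simp [A, ENNReal.div_eq_top]
  set s := {y | A < 2 * f y}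
  have hs : MeasurableSet s := measurableSet_lt measurable_const (hf.const_mul _)
  have hsplit (x : E) : maximalFunction μ f x ≤ maximalFunction μ (s.indicator f) x + A / 2 := by
    calc maximalFunction μ f x
        ≤ maximalFunction μ (fun y => s.indicator f y + sᶜ.indicator f y) x :=
          maximalFunction_mono (fun y => (indicator_self_add_compl_apply _ f y).ge) x
      _ ≤ maximalFunction μ (s.indicator f) x + maximalFunction μ (sᶜ.indicator f) x :=
          maximalFunction_add_le (hf.indicator hs) _ x
      _ ≤ maximalFunction μ (s.indicator f) x + A / 2 := by
          gcongr
          refine maximalFunction_le_of_le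
            (fun y => indicator_le (g := fun _ => A / 2) (fun z hz => ?_) y) x
          rw [ENNReal.le_div_iff_mul_le (by simp) (by simp), mul_comm]
          exact not_lt.1 hz
  calc μ {x | A < maximalFunction μ f x}
      ≤ μ {x | A / 2 < maximalFunction μ (s.indicator f) x} := by
        refine measure_mono fun x (hx : A < _) => ?_
        by_contra hle
        refine (hx.trans_le ((hsplit x).trans ?_)).false
        exact (add_le_add_left (not_lt.1 hle) _).trans (ENNReal.add_halves A).le
    _ ≤ 4 ^ Module.finrank ℝ E / (A / 2) * ∫⁻ y, s.indicator f y ∂μ :=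
        measure_lt_maximalFunction_le _ hA hA'
    _ = 2 * 4 ^ Module.finrank ℝ E / A * ∫⁻ y in s, f y ∂μ := by
        rw [lintegral_indicator hs, div_eq_mul_inv _ (A / 2), ENNReal.inv_div (by simp) (by simp),
          div_eq_mul_inv 2 A, div_eq_mul_inv]
        ring

lemma lintegral_ofReal_rpow_Ioi_zero (s : ℝ) :
    ∫⁻ t in Ioi (0 : ℝ), ENNReal.ofReal (t ^ s) = ∞ := by
  by_contra h
  refine not_integrableOn_Ioi_rpow s ⟨by fun_prop, ?_⟩
  refine (hasFiniteIntegral_iff_ofReal ?_).2 (lt_top_iff_ne_top.2 h)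
  exact (ae_restrict_mem measurableSet_Ioi).mono fun t ht => Real.rpow_nonneg (le_of_lt ht) s

/-- Mathlib's layer cake formula `lintegral_rpow_eq_lintegral_meas_lt_mul` only covers real-valued
functions. -/
lemma lintegral_rpow_eq_lintegral_measure_ofReal_lt {X : Type*} [MeasurableSpace X] (ν : Measure X)
    {f : X → ℝ≥0∞} (hf : Measurable f) {q : ℝ} (hq : 0 < q) :
    ∫⁻ x, f x ^ q ∂ν = ENNReal.ofReal q *
      ∫⁻ t in Ioi (0 : ℝ), ν {x | ENNReal.ofReal t < f x} * ENNReal.ofReal (t ^ (q - 1)) := by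
  by_cases htop : ∀ᵐ x ∂ν, f x ≠ ∞
  · calc ∫⁻ x, f x ^ q ∂ν = ∫⁻ x, ENNReal.ofReal ((f x).toReal ^ q) ∂ν := by
          refine lintegral_congr_ae (htop.mono fun x hx => ?_)
          simp only
          rw [← ENNReal.ofReal_rpow_of_nonneg ENNReal.toReal_nonneg hq.le, ENNReal.ofReal_toReal hx]
      _ = ENNReal.ofReal q *
          ∫⁻ t in Ioi (0 : ℝ), ν {x | t < (f x).toReal} * ENNReal.ofReal (t ^ (q - 1)) :=
        lintegral_rpow_eq_lintegral_meas_lt_mul ν (.of_forall fun _ => ENNReal.toReal_nonneg)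
          hf.ennreal_toReal.aemeasurable hq
      _ = _ := by
        congr 1
        refine setLIntegral_congr_fun measurableSet_Ioi fun t ht => ?_
        refine congrArg (· * _) (measure_congr (htop.mono fun x hx => propext ?_))
        exact (ENNReal.ofReal_lt_iff_lt_toReal (le_of_lt ht) hx).symm
  · have hν : ν {x | f x = ∞} ≠ 0 := fun h => htop (by simpa [ae_iff] using h)
    have hle (t : ℝ) : ν {x | f x = ∞} ≤ ν {x | ENNReal.ofReal t < f x} :=
      measure_mono fun x (hx : f x = ∞) => by simp [hx]
    rw [eq_top_iff.2 (?_ : _ ≤ ∫⁻ x, f x ^ q ∂ν), eq_comm, eq_top_iff]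
    · calc ∞ = ENNReal.ofReal q *
            ∫⁻ t in Ioi (0 : ℝ), ν {x | f x = ∞} * ENNReal.ofReal (t ^ (q - 1)) := by
            rw [lintegral_const_mul _ (by fun_prop), lintegral_ofReal_rpow_Ioi_zero,
              ENNReal.mul_top hν, ENNReal.mul_top (by simpa using hq)]
        _ ≤ _ := by gcongr ENNReal.ofReal q * ∫⁻ t in Ioi _, ?_ * _ with t; exact hle t
    · calc ∞ = ∞ ^ q * ν {x | ∞ ≤ f x ^ q} := by
            simp [ENNReal.top_rpow_of_pos hq, ENNReal.rpow_eq_top_iff_of_pos hq, ENNReal.top_mul hν]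
        _ ≤ ∫⁻ x, f x ^ q ∂ν := by
          rw [ENNReal.top_rpow_of_pos hq]; exact mul_meas_ge_le_lintegral (hf.pow_const q) ∞

/-- Marcinkiewicz interpolation between a weak type `(1, 1)` and a strong type `(∞, ∞)` bound, the
two bounds being combined in the hypothesis on the level sets. -/
lemma lintegral_rpow_le_of_measure_ofReal_lt_le {X : Type*} [MeasurableSpace X] {ν : Measure X}
    {f g : X → ℝ≥0∞} (hf : Measurable f) (hg : Measurable g) {K : ℝ≥0∞} {q : ℝ}
    (hq : 1 < q) (hK : ∀ a : ℝ, 0 < a → ν {x | ENNReal.ofReal a < g x} ≤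
      K / ENNReal.ofReal a * ∫⁻ x in {x | ENNReal.ofReal a < 2 * f x}, f x ∂ν) :
    ∫⁻ x, g x ^ q ∂ν ≤ K * ENNReal.ofReal (q / (q - 1)) * 2 ^ (q - 1) * ∫⁻ x, f x ^ q ∂ν := by
  have hq1 : 0 < q - 1 := sub_pos.2 hq
  have h2f : Measurable fun x => 2 * f x := hf.const_mul 2
  have hpow (x : X) : f x * (2 * f x) ^ (q - 1) = 2 ^ (q - 1) * f x ^ q := by
    rw [ENNReal.mul_rpow_of_nonneg _ _ hq1.le, mul_left_comm]
    congr 1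
    nth_rw 1 [← ENNReal.rpow_one (f x)]
    rw [← ENNReal.rpow_add_of_nonneg _ _ zero_le_one hq1.le, add_sub_cancel]
  have hanti : Antitone fun a : ℝ => ν.withDensity f {x | ENNReal.ofReal a < 2 * f x} :=
    fun a b hab => measure_mono fun x hx => (ENNReal.ofReal_le_ofReal hab).trans_lt hx
  have hmeas : Measurable fun a : ℝ => ν.withDensity f {x | ENNReal.ofReal a < 2 * f x} *
      ENNReal.ofReal (a ^ (q - 1 - 1)) := hanti.measurable.mul (by fun_prop)
  calc ∫⁻ x, g x ^ q ∂ν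
      = ENNReal.ofReal q *
          ∫⁻ a in Ioi (0 : ℝ), ν {x | ENNReal.ofReal a < g x} * ENNReal.ofReal (a ^ (q - 1)) :=
        lintegral_rpow_eq_lintegral_measure_ofReal_lt ν hg (by linarith)
    _ ≤ ENNReal.ofReal q * ∫⁻ a in Ioi (0 : ℝ), K *
          (ν.withDensity f {x | ENNReal.ofReal a < 2 * f x} *
            ENNReal.ofReal (a ^ (q - 1 - 1))) := by
        gcongr ENNReal.ofReal q * ?_
        refine setLIntegral_mono' measurableSet_Ioi fun a (ha : 0 < a) => ?_
        refine (mul_le_mul_left (hK a ha) _).trans_eq ?_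
        rw [withDensity_apply f (measurableSet_lt measurable_const h2f),
          Real.rpow_sub_one ha.ne' (q - 1), ENNReal.ofReal_div_of_pos ha, div_eq_mul_inv,
          div_eq_mul_inv]
        ring
    _ = K * ENNReal.ofReal (q / (q - 1)) * ∫⁻ x, (2 * f x) ^ (q - 1) ∂ν.withDensity f := by
        rw [lintegral_const_mul _ hmeas,
          lintegral_rpow_eq_lintegral_measure_ofReal_lt (ν.withDensity f) h2f hq1,
          ← mul_assoc, ← mul_assoc, mul_assoc K, ← ENNReal.ofReal_mul (by positivity),
          div_mul_cancel₀ _ hq1.ne', mul_comm K]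
    _ = K * ENNReal.ofReal (q / (q - 1)) * 2 ^ (q - 1) * ∫⁻ x, f x ^ q ∂ν := by
        rw [lintegral_withDensity_eq_lintegral_mul ν hf (h2f.pow_const _)]
        simp only [Pi.mul_apply, hpow]
        rw [lintegral_const_mul _ (hf.pow_const q), mul_assoc _ (2 ^ (q - 1))]

lemma exists_lintegral_maximalFunction_rpow_le [Nontrivial E] (μ : Measure E) [μ.IsAddHaarMeasure]
    {q : ℝ} (hq : 1 < q) : ∃ C : ℝ≥0∞, C ≠ ∞ ∧ ∀ f : E → ℝ≥0∞, Measurable f →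
      ∫⁻ x, maximalFunction μ f x ^ q ∂μ ≤ C * ∫⁻ x, f x ^ q ∂μ := by
  refine ⟨_, ?_, fun f hf => lintegral_rpow_le_of_measure_ofReal_lt_le hf
    (measurable_maximalFunction f) hq fun a ha => measure_ofReal_lt_maximalFunction_le hf ha⟩
  finiteness

end MaximalFunction

section VariableExponent

/-- A globally log-Hölder continuous exponent with values in `[lo, hi]`, where `lo > 1`, and with
limit `κ` at infinity. Unlike in `IsPLog` the bounds hold everywhere, and both log-Hölder
constants are `A`. -/
structure IsLogHolderExponent {E : Type*} [NormedAddCommGroup E] [MeasurableSpace E]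
    (s : E → ℝ) (lo hi A κ : ℝ) : Prop where
  measurable : Measurable s
  one_lt : 1 < lo
  lo_le : ∀ x, lo ≤ s x
  le_hi : ∀ x, s x ≤ hi
  const_pos : 0 < A
  loc : ∀ x y, x ≠ y → |1 / s x - 1 / s y| ≤ A / Real.log (Real.exp 1 + 1 / ‖x - y‖)
  decay : ∀ x, |1 / s x - 1 / κ| ≤ A / Real.log (Real.exp 1 + ‖x‖)
  lo_le_lim : lo ≤ κ
  lim_le_hi : κ ≤ hi

lemma one_le_log_exp_add {a : ℝ} (ha : 0 ≤ a) : 1 ≤ Real.log (Real.exp 1 + a) := by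
  rw [Real.le_log_iff_exp_le (by positivity)]
  linarith

lemma rpow_lintegral_le_lintegral_rpow {X : Type*} [MeasurableSpace X] (m : Measure X)
    [IsProbabilityMeasure m] {f : X → ℝ≥0∞} (hf : Measurable f) {k : ℝ} (hk : 1 ≤ k) :
    (∫⁻ x, f x ∂m) ^ k ≤ ∫⁻ x, f x ^ k ∂m := by
  have h := eLpNorm'_le_eLpNorm'_of_exponent_le (f := f) (μ := m) one_pos hk
    hf.aestronglyMeasurable
  simp only [eLpNorm', enorm_eq_self, ENNReal.rpow_one, div_one, one_div] at h
  rwa [ENNReal.le_rpow_inv_iff (by linarith)] at h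

lemma rpow_lintegral_le_lintegral_rpow_of_eq_zero_or_one_le {X : Type*} [MeasurableSpace X]
    (m : Measure X) [IsProbabilityMeasure m] {f : X → ℝ≥0∞} (hf : Measurable f)
    (hf1 : ∀ y, f y = 0 ∨ 1 ≤ f y) {q : X → ℝ} {k : ℝ} (hk : 1 ≤ k) (hkq : ∀ᵐ y ∂m, k ≤ q y) :
    (∫⁻ y, f y ∂m) ^ k ≤ ∫⁻ y, f y ^ q y ∂m := by
  refine (rpow_lintegral_le_lintegral_rpow m hf hk).trans (lintegral_mono_ae ?_)
  filter_upwards [hkq] with y hy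
  rcases hf1 y with h0 | h1
  · simp [h0, ENNReal.zero_rpow_of_pos (zero_lt_one.trans_le hk)]
  · exact ENNReal.rpow_le_rpow_of_exponent_le h1 hy

lemma log_oscillation_rpow_le {A hi V ρ t : ℝ} (d : ℕ) (hA : 0 < A) (hhi : 0 < hi) (hV : 1 ≤ V)
    (hρ : 0 < ρ) (ht : t ≤ hi * (A / Real.log (Real.exp 1 + 1 / ρ))) :
    (V * (Real.exp 1 + 1 / ρ) ^ d) ^ t ≤ V ^ (hi * A) * Real.exp (d * (hi * A)) := by
  set T := Real.exp 1 + 1 / ρ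
  have hT : 0 < T := by positivity
  have hlog : 1 ≤ Real.log T := one_le_log_exp_add (by positivity)
  have htA : t ≤ hi * A := ht.trans (by gcongr; exact div_le_self hA.le hlog)
  have hlogt : Real.log T * t ≤ hi * A :=
    calc Real.log T * t ≤ Real.log T * (hi * (A / Real.log T)) := by gcongr
      _ = hi * A := by field_simp
  calc (V * T ^ d) ^ t = V ^ t * Real.exp (d * (Real.log T * t)) := by
        rw [Real.mul_rpow (by positivity) (by positivity), ← Real.rpow_natCast,
          ← Real.rpow_mul hT.le, Real.rpow_def_of_pos hT, mul_left_comm]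
    _ ≤ V ^ (hi * A) * Real.exp (d * (hi * A)) := by gcongr

variable {E : Type*} [NormedAddCommGroup E] [MeasurableSpace E]
  {s : E → ℝ} {lo hi A κ : ℝ}

namespace IsLogHolderExponent

lemma lo_pos (h : IsLogHolderExponent s lo hi A κ) : 0 < lo := zero_lt_one.trans h.one_lt

lemma lo_le_hi (h : IsLogHolderExponent s lo hi A κ) : lo ≤ hi := h.lo_le_lim.trans h.lim_le_hi

lemma pos (h : IsLogHolderExponent s lo hi A κ) (x : E) : 0 < s x := h.lo_pos.trans_le (h.lo_le x)

lemma one_le (h : IsLogHolderExponent s lo hi A κ) (x : E) : 1 ≤ s x :=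
  h.one_lt.le.trans (h.lo_le x)

lemma const {c : ℝ} (hc : 1 < c) : IsLogHolderExponent (fun _ : E => c) c c 1 c where
  measurable := measurable_const
  one_lt := hc
  lo_le _ := le_rfl
  le_hi _ := le_rfl
  const_pos := one_pos
  loc x y _ := by
    have := one_le_log_exp_add (a := 1 / ‖x - y‖) (by positivity)
    simp only [sub_self, abs_zero]
    positivity
  decay x := by
    have := one_le_log_exp_add (norm_nonneg x)
    simp only [sub_self, abs_zero]
    positivity
  lo_le_lim := le_rfl
  lim_le_hi := le_rfl

lemma inv_le_inv_add_of_mem_ball (h : IsLogHolderExponent s lo hi A κ) {x y : E} {ρ : ℝ}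
    (hy : y ∈ Metric.ball x ρ) :
    1 / s y ≤ 1 / s x + A / Real.log (Real.exp 1 + 1 / ρ) := by
  have hlog := one_le_log_exp_add (one_div_nonneg.2 (Metric.pos_of_mem_ball hy).le)
  have hA := h.const_pos
  rcases eq_or_ne x y with rfl | hxy
  · exact le_add_of_nonneg_right (by positivity)
  · have hxy0 : 0 < ‖x - y‖ := norm_pos_iff.2 (sub_ne_zero.2 hxy)
    have hle : A / Real.log (Real.exp 1 + 1 / ‖x - y‖) ≤ A / Real.log (Real.exp 1 + 1 / ρ) := by
      have hρ := Metric.pos_of_mem_ball hy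
      rw [Metric.mem_ball, dist_comm, dist_eq_norm] at hy
      gcongr
    linarith [(abs_le.1 (h.loc x y hxy)).1]

lemma exists_le_on_ball (h : IsLogHolderExponent s lo hi A κ) (x : E) {ρ : ℝ} (hρ : 0 < ρ) :
    ∃ k, 1 ≤ k ∧ (∀ y ∈ Metric.ball x ρ, k ≤ s y / lo) ∧
      s x / lo / k - 1 ≤ hi * (A / Real.log (Real.exp 1 + 1 / ρ)) := by
  set ω := A / Real.log (Real.exp 1 + 1 / ρ)
  have hlo := h.lo_pos
  have hsx := h.pos x
  have hω : 0 < ω :=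
    div_pos h.const_pos (zero_lt_one.trans_le (one_le_log_exp_add (by positivity)))
  refine ⟨max 1 (1 / (lo * (1 / s x + ω))), le_max_left _ _, fun y hy => max_le ?_ ?_, ?_⟩
  · exact (one_le_div hlo).2 (h.lo_le y)
  · have hsy := h.pos y
    calc 1 / (lo * (1 / s x + ω)) ≤ 1 / (lo * (1 / s y)) := by
          gcongr
          exact h.inv_le_inv_add_of_mem_ball hy
      _ = s y / lo := by field_simp
  · have hle : s x / lo / max 1 (1 / (lo * (1 / s x + ω))) ≤ 1 + s x * ω :=
      calc _ ≤ s x / lo / (1 / (lo * (1 / s x + ω))) := by gcongr; exact le_max_right _ _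
        _ = 1 + s x * ω := by field_simp
    have : s x * ω ≤ hi * ω := by gcongr; exact h.le_hi x
    linarith

end IsLogHolderExponent

variable [NormedSpace ℝ E] [FiniteDimensional ℝ E] [BorelSpace E]

lemma exists_inv_measure_ball_le (μ : Measure E) [μ.IsAddHaarMeasure] :
    ∃ V : ℝ, 1 ≤ V ∧ ∀ (x : E) {ρ : ℝ}, 0 < ρ → (μ (Metric.ball x ρ))⁻¹ ≤
      ENNReal.ofReal (V * (Real.exp 1 + 1 / ρ) ^ Module.finrank ℝ E) := by
  have h0 : μ (Metric.ball 0 1) ≠ 0 := (Metric.measure_ball_pos μ _ one_pos).ne'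
  have htop : μ (Metric.ball 0 1) ≠ ∞ := measure_ball_lt_top.ne
  refine ⟨max 1 (μ (Metric.ball 0 1))⁻¹.toReal, le_max_left _ _, fun x ρ hρ => ?_⟩
  calc (μ (Metric.ball x ρ))⁻¹
      = (μ (Metric.ball 0 1))⁻¹ * ENNReal.ofReal ((1 / ρ) ^ Module.finrank ℝ E) := by
        rw [Measure.addHaar_ball_of_pos μ x hρ, ENNReal.mul_inv (.inr htop) (.inr h0), mul_comm,
          ← ENNReal.ofReal_inv_of_pos (by positivity), one_div, inv_pow]
    _ ≤ ENNReal.ofReal (max 1 (μ (Metric.ball 0 1))⁻¹.toReal) *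
        ENNReal.ofReal ((Real.exp 1 + 1 / ρ) ^ Module.finrank ℝ E) := by
        gcongr
        · rw [ENNReal.le_ofReal_iff_toReal_le (ENNReal.inv_ne_top.2 h0) (by positivity)]
          exact le_max_right _ _
        · linarith [Real.exp_pos 1]
    _ = _ := (ENNReal.ofReal_mul (by positivity)).symm

/-- Diening's estimate. The ratio of the exponent at `x` to its infimum over the ball is close
enough to `1` that the corresponding power of the average, which is at most `(μ B)⁻¹`, is
bounded. -/
lemma IsLogHolderExponent.exists_setLAverage_ball_rpow_le (h : IsLogHolderExponent s lo hi A κ)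
    (μ : Measure E) [μ.IsAddHaarMeasure] :
    ∃ K : ℝ≥0∞, K ≠ ∞ ∧ ∀ f : E → ℝ≥0∞, Measurable f → (∀ y, f y = 0 ∨ 1 ≤ f y) →
      ∫⁻ y, f y ^ s y ∂μ ≤ 1 → ∀ (x : E) {ρ : ℝ}, 0 < ρ →
        (⨍⁻ y in Metric.ball x ρ, f y ∂μ) ^ (s x / lo) ≤
          K * ⨍⁻ y in Metric.ball x ρ, f y ^ (s y / lo) ∂μ := by
  obtain ⟨V, hV, hball⟩ := exists_inv_measure_ball_le μ
  have hhi : 0 < hi := h.lo_pos.trans_le h.lo_le_hi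
  refine ⟨ENNReal.ofReal (V ^ (hi * A) * Real.exp (Module.finrank ℝ E * (hi * A))),
    ENNReal.ofReal_ne_top, fun f hf hf1 hint x ρ hρ => ?_⟩
  obtain ⟨k, hk1, hkle, hkx⟩ := h.exists_le_on_ball x hρ
  have hk0 : 0 < k := zero_lt_one.trans_le hk1
  have hr1 : 1 ≤ s x / lo / k := (one_le_div hk0).2 (hkle x (Metric.mem_ball_self hρ))
  set B := Metric.ball x ρ
  set X := ⨍⁻ y in B, f y ^ (s y / lo) ∂μ
  have : IsFiniteMeasure (μ.restrict B) := ⟨by simpa using measure_ball_lt_top⟩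
  have : NeZero (μ.restrict B) :=
    ⟨by simpa [Measure.restrict_eq_zero] using (Metric.measure_ball_pos μ x hρ).ne'⟩
  have havg : (⨍⁻ y in B, f y ∂μ) ^ k ≤ X := by
    refine rpow_lintegral_le_lintegral_rpow_of_eq_zero_or_one_le _ hf hf1 hk1 ?_
    exact Measure.ae_smul_measure (ae_restrict_of_forall_mem measurableSet_ball hkle) _
  have hX : X ≤ ENNReal.ofReal (V * (Real.exp 1 + 1 / ρ) ^ Module.finrank ℝ E) := by
    refine le_trans ?_ (hball x hρ)
    rw [show X = _ from setLAverage_eq _ _ _, ENNReal.div_eq_inv_mul]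
    refine mul_le_of_le_one_right' ((setLIntegral_le_lintegral _ _).trans (le_trans ?_ hint))
    refine lintegral_mono fun y => ?_
    rcases hf1 y with h0 | h1
    · simp [h0, ENNReal.zero_rpow_of_pos (div_pos (h.pos y) h.lo_pos)]
    · exact ENNReal.rpow_le_rpow_of_exponent_le h1 (div_le_self (h.pos y).le h.one_lt.le)
  calc (⨍⁻ y in B, f y ∂μ) ^ (s x / lo) = ((⨍⁻ y in B, f y ∂μ) ^ k) ^ (s x / lo / k) := by
        rw [← ENNReal.rpow_mul, mul_div_cancel₀ _ hk0.ne']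
    _ ≤ X ^ (s x / lo / k - 1 + 1) := by rw [sub_add_cancel]; gcongr
    _ = X ^ (s x / lo / k - 1) * X := by
        rw [ENNReal.rpow_add_of_nonneg _ _ (by linarith) zero_le_one, ENNReal.rpow_one]
    _ ≤ _ := by
        gcongr
        refine (ENNReal.rpow_le_rpow hX (by linarith)).trans ?_
        rw [ENNReal.ofReal_rpow_of_nonneg (by positivity) (by linarith)]
        exact ENNReal.ofReal_le_ofReal
          (log_oscillation_rpow_le _ h.const_pos hhi hV hρ hkx)

lemma rpow_le_exp_mul_rpow {x r σ hi A T m : ℝ} (hx1 : x ≤ 1) (hT : Real.exp 1 ≤ T)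
    (hx : T ^ (-m) ≤ x) (hr : 1 ≤ r) (hσ : 1 ≤ σ) (hr' : r ≤ hi) (hσ' : σ ≤ hi) (hA : 0 < A)
    (hm : 0 ≤ m) (h : 1 / r - 1 / σ ≤ A / Real.log T) :
    x ^ r ≤ Real.exp (m * (hi * hi * A)) * x ^ σ := by
  have hT0 : 0 < T := (Real.exp_pos 1).trans_le hT
  have hlog : 0 < Real.log T := zero_lt_one.trans_le ((Real.le_log_iff_exp_le hT0).2 hT)
  have hx0 : 0 < x := (Real.rpow_pos_of_pos hT0 _).trans_le hx
  have hhi : 0 < hi := zero_lt_one.trans_le (hr.trans hr')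
  have hexp : 1 ≤ Real.exp (m * (hi * hi * A)) := Real.one_le_exp (by positivity)
  rcases le_total σ r with hle | hle
  · exact (Real.rpow_le_rpow_of_exponent_ge hx0 hx1 hle).trans
      (le_mul_of_one_le_left (by positivity) hexp)
  have hdiff : (σ - r) * Real.log T ≤ hi * hi * A := by
    rw [le_div_iff₀ hlog] at h
    calc (σ - r) * Real.log T = r * σ * ((1 / r - 1 / σ) * Real.log T) := by field_simp
      _ ≤ r * σ * A := by gcongr
      _ ≤ hi * hi * A := by gcongr
  calc x ^ r = x ^ (r - σ) * x ^ σ := by rw [← Real.rpow_add hx0, sub_add_cancel]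
    _ ≤ (T ^ (-m)) ^ (r - σ) * x ^ σ := by
        gcongr ?_ * _
        exact Real.rpow_le_rpow_of_nonpos (by positivity) hx (by linarith)
    _ = Real.exp (m * ((σ - r) * Real.log T)) * x ^ σ := by
        rw [← Real.rpow_mul hT0.le, Real.rpow_def_of_pos hT0]
        ring_nf
    _ ≤ Real.exp (m * (hi * hi * A)) * x ^ σ := by gcongr

lemma rpow_le_exp_mul_rpow_add_ofReal {F : ℝ≥0∞} (hF : F ≤ 1) {r σ hi A T m : ℝ}
    (hT : Real.exp 1 ≤ T) (hr : 1 ≤ r) (hσ : 1 ≤ σ) (hr' : r ≤ hi) (hσ' : σ ≤ hi) (hA : 0 < A)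
    (hm : 0 ≤ m) (h : 1 / r - 1 / σ ≤ A / Real.log T) :
    F ^ r ≤ ENNReal.ofReal (Real.exp (m * (hi * hi * A))) * F ^ σ + ENNReal.ofReal (T ^ (-m)) := by
  lift F to NNReal using (hF.trans_lt ENNReal.one_lt_top).ne
  have hF0 : 0 ≤ (F : ℝ) := F.coe_nonneg
  have hF1 : (F : ℝ) ≤ 1 := by exact_mod_cast hF
  have hT0 : 0 < T := (Real.exp_pos 1).trans_le hT
  rw [← ENNReal.ofReal_coe_nnreal, ENNReal.ofReal_rpow_of_nonneg hF0 (by linarith),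
    ENNReal.ofReal_rpow_of_nonneg hF0 (by linarith), ← ENNReal.ofReal_mul (by positivity),
    ← ENNReal.ofReal_add (by positivity) (by positivity)]
  refine ENNReal.ofReal_le_ofReal ?_
  rcases lt_or_ge (F : ℝ) (T ^ (-m)) with hx | hx
  · calc (F : ℝ) ^ r ≤ F := Real.rpow_le_self_of_le_one hF0 hF1 hr
      _ ≤ _ := le_add_of_nonneg_of_le (by positivity) hx.le
  · exact le_add_of_le_of_nonneg
      (rpow_le_exp_mul_rpow hF1 hT hx hr hσ hr' hσ' hA hm h) (by positivity)

lemma lintegral_exp_one_add_norm_rpow_ne_top (μ : Measure E) [μ.IsAddHaarMeasure] {m : ℝ}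
    (hm : Module.finrank ℝ E < m) :
    ∫⁻ x, ENNReal.ofReal ((Real.exp 1 + ‖x‖) ^ (-m)) ∂μ ≠ ∞ := by
  refine (lt_of_le_of_lt (lintegral_mono fun x => ?_)
    (finite_integral_one_add_norm (μ := μ) hm)).ne
  refine ENNReal.ofReal_le_ofReal (Real.rpow_le_rpow_of_nonpos (by positivity) ?_ ?_)
  · linarith [Real.add_one_le_exp (1 : ℝ)]
  · linarith [Nat.cast_nonneg (α := ℝ) (Module.finrank ℝ E)]

namespace IsLogHolderExponent

variable (μ : Measure E) [μ.IsAddHaarMeasure]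

/-- Functions bounded by `1` only see the exponent near infinity, where it is close to `κ`. -/
lemma exists_lintegral_rpow_le_of_le_one (h : IsLogHolderExponent s lo hi A κ) :
    ∃ C : ℝ≥0∞, C ≠ ∞ ∧ ∀ g : E → ℝ≥0∞, Measurable g → (∀ x, g x ≤ 1) →
      ∫⁻ x, g x ^ s x ∂μ ≤ C * (∫⁻ x, g x ^ κ ∂μ) + C ∧
      ∫⁻ x, g x ^ κ ∂μ ≤ C * (∫⁻ x, g x ^ s x ∂μ) + C := by
  set m : ℝ := Module.finrank ℝ E + 1
  set G := ENNReal.ofReal (Real.exp (m * (hi * hi * A)))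
  set D := ∫⁻ x, ENNReal.ofReal ((Real.exp 1 + ‖x‖) ^ (-m)) ∂μ
  have hD : D ≠ ∞ := lintegral_exp_one_add_norm_rpow_ne_top μ (lt_add_one _)
  have hm : 0 ≤ m := by positivity
  have hκ : 1 ≤ κ := h.one_lt.le.trans h.lo_le_lim
  refine ⟨G + D, by finiteness, fun g hg hg1 => ?_⟩
  have hint {σ τ : E → ℝ} (hτ : Measurable τ)
      (hle : ∀ x, g x ^ σ x ≤ G * g x ^ τ x + ENNReal.ofReal ((Real.exp 1 + ‖x‖) ^ (-m))) :
      ∫⁻ x, g x ^ σ x ∂μ ≤ (G + D) * (∫⁻ x, g x ^ τ x ∂μ) + (G + D) :=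
    calc _ ≤ ∫⁻ x, (G * g x ^ τ x + ENNReal.ofReal ((Real.exp 1 + ‖x‖) ^ (-m))) ∂μ :=
          lintegral_mono hle
      _ = G * (∫⁻ x, g x ^ τ x ∂μ) + D := by
          rw [lintegral_add_right _ (by fun_prop), lintegral_const_mul _ (hg.pow hτ)]
      _ ≤ _ := by gcongr <;> simp
  have hT (x : E) : Real.exp 1 ≤ Real.exp 1 + ‖x‖ := le_add_of_nonneg_right (norm_nonneg x)
  exact ⟨hint measurable_const fun x => rpow_le_exp_mul_rpow_add_ofReal (hg1 x) (hT x)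
      (h.one_le x) hκ (h.le_hi x) h.lim_le_hi h.const_pos hm (abs_le.1 (h.decay x)).2,
    hint h.measurable fun x => rpow_le_exp_mul_rpow_add_ofReal (hg1 x) (hT x)
      hκ (h.one_le x) h.lim_le_hi (h.le_hi x) h.const_pos hm
      (by linarith [(abs_le.1 (h.decay x)).1])⟩

variable [Nontrivial E]

lemma exists_lintegral_maximalFunction_rpow_le_of_le_one (h : IsLogHolderExponent s lo hi A κ) :
    ∃ C : ℝ≥0∞, C ≠ ∞ ∧ ∀ f : E → ℝ≥0∞, Measurable f → (∀ x, f x ≤ 1) →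
      ∫⁻ y, f y ^ s y ∂μ ≤ 1 → ∫⁻ x, maximalFunction μ f x ^ s x ∂μ ≤ C := by
  obtain ⟨C, hC, hCf⟩ := exists_lintegral_maximalFunction_rpow_le μ (h.one_lt.trans_le h.lo_le_lim)
  obtain ⟨D, hD, hDg⟩ := h.exists_lintegral_rpow_le_of_le_one μ
  refine ⟨D * (C * (D * 1 + D)) + D, by finiteness, fun f hf hf1 hint => ?_⟩
  calc ∫⁻ x, maximalFunction μ f x ^ s x ∂μ ≤ D * (∫⁻ x, maximalFunction μ f x ^ κ ∂μ) + D :=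
        (hDg _ (measurable_maximalFunction f) (maximalFunction_le_of_le hf1)).1
    _ ≤ D * (C * ∫⁻ x, f x ^ κ ∂μ) + D := by gcongr; exact hCf f hf
    _ ≤ D * (C * (D * (∫⁻ x, f x ^ s x ∂μ) + D)) + D := by gcongr; exact (hDg f hf hf1).2
    _ ≤ D * (C * (D * 1 + D)) + D := by gcongr

lemma exists_lintegral_maximalFunction_rpow_le_of_one_le (h : IsLogHolderExponent s lo hi A κ) :
    ∃ C : ℝ≥0∞, C ≠ ∞ ∧ ∀ f : E → ℝ≥0∞, Measurable f → (∀ x, f x = 0 ∨ 1 ≤ f x) →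
      ∫⁻ y, f y ^ s y ∂μ ≤ 1 → ∫⁻ x, maximalFunction μ f x ^ s x ∂μ ≤ C := by
  have hlo := h.lo_pos
  obtain ⟨K, hK, hKf⟩ := h.exists_setLAverage_ball_rpow_le μ
  obtain ⟨C, hC, hCf⟩ := exists_lintegral_maximalFunction_rpow_le μ h.one_lt
  have hKlo : K ^ lo ≠ ∞ := ENNReal.rpow_ne_top_of_nonneg hlo.le hK
  refine ⟨K ^ lo * C, by finiteness, fun f hf hf1 hint => ?_⟩
  set g := fun y => f y ^ (s y / lo)
  have hg : Measurable g := hf.pow (h.measurable.div_const _)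
  have hpow (F : E → ℝ≥0∞) (x : E) : (F x ^ (s x / lo)) ^ lo = F x ^ s x := by
    rw [← ENNReal.rpow_mul, div_mul_cancel₀ _ hlo.ne']
  have hle (x : E) : maximalFunction μ f x ^ (s x / lo) ≤ K * maximalFunction μ g x := by
    have hq : 0 < s x / lo := div_pos (h.pos x) hlo
    rw [← ENNReal.le_rpow_inv_iff hq]
    refine iSup₂_le fun ρ hρ => ?_
    rw [ENNReal.le_rpow_inv_iff hq]
    refine (hKf f hf hf1 hint x hρ).trans ?_
    gcongr
    exact setLAverage_ball_le_maximalFunction g x hρ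
  calc ∫⁻ x, maximalFunction μ f x ^ s x ∂μ
      ≤ ∫⁻ x, K ^ lo * maximalFunction μ g x ^ lo ∂μ := by
        refine lintegral_mono fun x => ?_
        rw [← hpow, ← ENNReal.mul_rpow_of_nonneg _ _ hlo.le]
        exact ENNReal.rpow_le_rpow (hle x) hlo.le
    _ ≤ K ^ lo * (C * ∫⁻ x, g x ^ lo ∂μ) := by
        rw [lintegral_const_mul _ ((measurable_maximalFunction g).pow_const _)]
        gcongr
        exact hCf g hg
    _ ≤ K ^ lo * C := by
        simp only [g, hpow]
        exact mul_le_mul_right (mul_le_of_le_one_right' hint) _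

/-- Values `≥ 1` are controlled by the local, values `≤ 1` by the decay part of log-Hölder
continuity. -/
theorem exists_lintegral_maximalFunction_rpow_le (h : IsLogHolderExponent s lo hi A κ) :
    ∃ C : ℝ≥0∞, C ≠ ∞ ∧ ∀ f : E → ℝ≥0∞, Measurable f → ∫⁻ y, f y ^ s y ∂μ ≤ 1 →
      ∫⁻ x, maximalFunction μ f x ^ s x ∂μ ≤ C := by
  obtain ⟨C₁, hC₁, hC₁f⟩ := h.exists_lintegral_maximalFunction_rpow_le_of_one_le μ
  obtain ⟨C₂, hC₂, hC₂f⟩ := h.exists_lintegral_maximalFunction_rpow_le_of_le_one μ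
  have h2 : (2 : ℝ≥0∞) ^ (hi - 1) ≠ ∞ :=
    ENNReal.rpow_ne_top_of_nonneg (by linarith [h.lo_le_hi, h.one_lt]) ENNReal.ofNat_ne_top
  refine ⟨2 ^ (hi - 1) * (C₁ + C₂), by finiteness, fun f hf hint => ?_⟩
  set S := {y | 1 ≤ f y}
  have hS : MeasurableSet S := measurableSet_le measurable_const hf
  have hpart (U : Set E) : ∫⁻ y, U.indicator f y ^ s y ∂μ ≤ 1 :=
    (lintegral_mono fun y => ENNReal.rpow_le_rpow (indicator_le_self _ _ _) (h.pos y).le).trans hint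
  have hlarge := hC₁f (S.indicator f) (hf.indicator hS)
    (fun y => by by_cases hy : y ∈ S <;> simp_all [S]) (hpart S)
  have hsmall := hC₂f (Sᶜ.indicator f) (hf.indicator hS.compl)
    (fun y => indicator_le (g := fun _ => 1) (fun z hz => (not_le.1 hz).le) y) (hpart Sᶜ)
  have hle (x : E) : maximalFunction μ f x ≤
      maximalFunction μ (S.indicator f) x + maximalFunction μ (Sᶜ.indicator f) x :=
    (maximalFunction_mono (fun y => (indicator_self_add_compl_apply S f y).ge) x).trans
      (maximalFunction_add_le (hf.indicator hS) _ x)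
  have hmeas (g : E → ℝ≥0∞) : Measurable fun x => maximalFunction μ g x ^ s x :=
    (measurable_maximalFunction g).pow h.measurable
  calc ∫⁻ x, maximalFunction μ f x ^ s x ∂μ
      ≤ ∫⁻ x, 2 ^ (hi - 1) * (maximalFunction μ (S.indicator f) x ^ s x +
          maximalFunction μ (Sᶜ.indicator f) x ^ s x) ∂μ := by
        refine lintegral_mono fun x => (ENNReal.rpow_le_rpow (hle x) (h.pos x).le).trans ?_
        refine (ENNReal.rpow_add_le_mul_rpow_add_rpow _ _ (h.one_le x)).trans ?_
        gcongr
        · exact one_le_two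
        · exact h.le_hi x
    _ ≤ 2 ^ (hi - 1) * (C₁ + C₂) := by
        rw [lintegral_const_mul' _ _ h2, lintegral_add_left (hmeas _)]
        gcongr

end IsLogHolderExponent

end VariableExponent

section LogHolderExponent

open Filter Topology

variable {E : Type*} [NormedAddCommGroup E] [MeasurableSpace E]

lemma tendsto_div_log_exp_one_add {X : Type*} {l : Filter X} {f : X → ℝ} (hf : Tendsto f l atTop)
    (C : ℝ) : Tendsto (fun y => C / Real.log (Real.exp 1 + f y)) l (𝓝 0) :=
  (Real.tendsto_log_atTop.comp (tendsto_atTop_add_const_left _ _ hf)).const_div_atTop C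

namespace IsPLog

lemma continuous {p : E → ℝ} (hp : IsPLog univ p) : Continuous p := by
  obtain ⟨-, h1, C, -, -, -, -, hloc, -⟩ := hp
  have hinv : Continuous fun x => 1 / p x := by
    refine continuous_iff_continuousAt.2 fun x => ?_
    rw [continuousAt_iff_punctured_nhds, tendsto_iff_dist_tendsto_zero]
    have hnorm : Tendsto (fun y => 1 / ‖x - y‖) (𝓝[≠] x) atTop := by
      simp only [one_div, norm_sub_rev x]
      exact tendsto_inv_nhdsGT_zero.comp (tendsto_norm_sub_self_nhdsNE x)
    refine squeeze_zero' (.of_forall fun _ => dist_nonneg) ?_ (tendsto_div_log_exp_one_add hnorm C)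
    filter_upwards [self_mem_nhdsWithin] with y hy
    rw [dist_comm, Real.dist_eq]
    exact hloc x trivial y trivial (Ne.symm hy)
  refine (hinv.inv₀ fun x => ?_).congr fun x => by simp
  have := h1 x trivial
  positivity

lemma div_const {p : E → ℝ} (hp : IsPLog univ p) {c : ℝ} (hc : 0 < c) (h : ∀ x, c ≤ p x) :
    IsPLog univ fun x => p x / c := by
  obtain ⟨hmeas, -, C₁, hC₁, C₂, hC₂, pinf, hloc, hdec⟩ := hp
  have hdiv {a b D L : ℝ} (hab : |1 / a - 1 / b| ≤ D / L) :
      |1 / (a / c) - 1 / (b / c)| ≤ c * D / L := by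
    rw [one_div_div, one_div_div, div_eq_mul_one_div, div_eq_mul_one_div c b, ← mul_sub, abs_mul,
      abs_of_pos hc, mul_div_assoc]
    gcongr
  exact ⟨hmeas.div_const c, fun x _ => (one_le_div hc).2 (h x), c * C₁, by positivity, c * C₂,
    by positivity, pinf / c, fun x _ y _ hxy => hdiv (hloc x trivial y trivial hxy),
    fun x _ => hdiv (hdec x trivial)⟩

lemma exists_isLogHolderExponent [NormedSpace ℝ E] [Nontrivial E] {s : E → ℝ} (hs : IsPLog univ s)
    {lo hi : ℝ} (hlo : 1 < lo) (hlos : ∀ x, lo ≤ s x) (hhis : ∀ x, s x ≤ hi) :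
    ∃ A κ, IsLogHolderExponent s lo hi A κ := by
  obtain ⟨hmeas, -, C₁, hC₁, C₂, -, κ, hloc, hdec⟩ := hs
  have hlo0 : 0 < lo := zero_lt_one.trans hlo
  have hhi0 : 0 < hi := hlo0.trans_le ((hlos 0).trans (hhis 0))
  have hlim : Tendsto (fun x => 1 / s x) (Bornology.cobounded E) (𝓝 (1 / κ)) := by
    rw [tendsto_iff_dist_tendsto_zero]
    exact squeeze_zero (fun _ => dist_nonneg) (fun x => hdec x trivial)
      (tendsto_div_log_exp_one_add tendsto_norm_cobounded_atTop C₂)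
  have hκlo : 1 / κ ≤ 1 / lo :=
    le_of_tendsto' hlim fun x => one_div_le_one_div_of_le hlo0 (hlos x)
  have hκhi : 1 / hi ≤ 1 / κ :=
    ge_of_tendsto' hlim fun x => one_div_le_one_div_of_le (hlo0.trans_le (hlos x)) (hhis x)
  have hκ : 0 < κ := one_div_pos.1 ((one_div_pos.2 hhi0).trans_le hκhi)
  have hmax {D a L : ℝ} (hD : D ≤ max C₁ C₂) (hL : 0 ≤ L) (h : a ≤ D / Real.log (Real.exp 1 + L)) :
      a ≤ max C₁ C₂ / Real.log (Real.exp 1 + L) := by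
    have := one_le_log_exp_add hL
    exact h.trans (by gcongr)
  exact ⟨max C₁ C₂, κ,
    { measurable := hmeas
      one_lt := hlo
      lo_le := hlos
      le_hi := hhis
      const_pos := by positivity
      loc := fun x y hxy =>
        hmax (le_max_left _ _) (by positivity) (hloc x trivial y trivial hxy)
      decay := fun x => hmax (le_max_right _ _) (norm_nonneg x) (hdec x trivial)
      lo_le_lim := (one_div_le_one_div hκ hlo0).1 hκlo
      lim_le_hi := (one_div_le_one_div hhi0 hκ).1 hκhi }⟩

lemma mem_of_ae_mem {p : E → ℝ} (hp : IsPLog univ p) {μ : Measure E} [μ.IsOpenPosMeasure]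
    {S : Set ℝ} (hS : IsClosed S) (h : ∀ᵐ x ∂μ, p x ∈ S) (x : E) : p x ∈ S :=
  (hS.preimage hp.continuous).closure_subset (Measure.dense_of_ae h x)

end IsPLog

end LogHolderExponent

section FunctionNorm

open Filter Topology

variable {X Y : Type*} [MeasurableSpace X] [MeasurableSpace Y]

lemma measurable_essSup_left {ν : Measure Y} [SFinite ν] {F : Y × X → ℝ≥0∞}
    (hF : Measurable F) : Measurable fun x => essSup (fun t => F (t, x)) ν := by
  refine measurable_of_Iic fun a => ?_
  have h : Measurable fun x => ν ((fun t => (t, x)) ⁻¹' {z | a < F z}) :=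
    measurable_measure_prodMk_right (measurableSet_lt measurable_const hF)
  convert h (measurableSet_singleton 0) using 1
  ext x
  have hle : essSup (fun t => F (t, x)) ν ≤ a ↔ ∀ᵐ t ∂ν, F (t, x) ≤ a :=
    ⟨fun hx => (ENNReal.ae_le_essSup _).mono fun _ ht => ht.trans hx, essSup_le_of_ae_le a⟩
  simp [hle, ae_iff, preimage]

/-- A function norm on the functions `X → ℝ≥0∞`, as for Banach function spaces. The triangle
inequality is required for countable sums, which is what makes these spaces complete. -/
structure IsFunctionNorm (μ : Measure X)
    (N : (X → ℝ≥0∞) → ℝ≥0∞) : Prop where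
  mono_ae : ∀ {f g : X → ℝ≥0∞}, (∀ᵐ x ∂μ, f x ≤ g x) → N f ≤ N g
  const_mul_le : ∀ {c : ℝ≥0∞}, c ≠ ∞ → ∀ f, N (fun x => c * f x) ≤ c * N f
  tsum_le : ∀ {f : ℕ → X → ℝ≥0∞}, (∀ k, Measurable (f k)) →
    N (fun x => ∑' k, f k x) ≤ ∑' k, N (f k)
  ae_lt_top : ∀ {f : X → ℝ≥0∞}, Measurable f → N f ≠ ∞ → ∀ᵐ x ∂μ, f x < ∞

namespace IsFunctionNorm

variable {μ : Measure X} {N N' : (X → ℝ≥0∞) → ℝ≥0∞}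

lemma zero (hN : IsFunctionNorm μ N) : N (fun _ => 0) = 0 := by
  simpa using hN.const_mul_le ENNReal.zero_ne_top fun _ => 0

lemma add_le (hN : IsFunctionNorm μ N) {f g : X → ℝ≥0∞} (hf : Measurable f) (hg : Measurable g) :
    N (fun x => f x + g x) ≤ N f + N g := by
  let F : ℕ → X → ℝ≥0∞ := fun k => if k = 0 then f else if k = 1 then g else fun _ => 0
  have hF (k : ℕ) : Measurable (F k) := by
    dsimp only [F]
    split_ifs <;> fun_prop
  have hsum (G : (X → ℝ≥0∞) → ℝ≥0∞) (hG : G (fun _ => 0) = 0) : ∑' k, G (F k) = G f + G g := by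
    rw [tsum_eq_sum (s := Finset.range 2) fun k hk => ?_]
    · simp [Finset.sum_range_succ, F]
    · have : k ≠ 0 ∧ k ≠ 1 := by rw [Finset.mem_range] at hk; lia
      simpa [F, this] using hG
  rw [← hsum N hN.zero]
  convert hN.tsum_le hF with x
  exact (hsum (fun f => f x) rfl).symm

/-- If `N f = 0`, then the infinite sum `f + f + ⋯` has norm `0`, so that it is finite. -/
lemma ae_eq_zero (hN : IsFunctionNorm μ N) {f : X → ℝ≥0∞} (hf : Measurable f) (h : N f = 0) :
    ∀ᵐ x ∂μ, f x = 0 := by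
  have hle : N (fun x => ∑' _ : ℕ, f x) ≤ 0 := by
    simpa [h] using hN.tsum_le (f := fun _ : ℕ => f) fun _ => hf
  filter_upwards [hN.ae_lt_top (by fun_prop) (hle.trans_lt ENNReal.zero_lt_top).ne] with x hx
  by_contra h0
  exact hx.ne (ENNReal.tsum_const_eq_top_of_ne_zero h0)

lemma max (hN : IsFunctionNorm μ N) (hN' : IsFunctionNorm μ N') :
    IsFunctionNorm μ fun f => max (N f) (N' f) where
  mono_ae h := max_le_max (hN.mono_ae h) (hN'.mono_ae h)
  const_mul_le {c} hc f := by
    rw [mul_max]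
    exact max_le_max (hN.const_mul_le hc f) (hN'.const_mul_le hc f)
  tsum_le hf := max_le
    ((hN.tsum_le hf).trans (ENNReal.tsum_le_tsum fun _ => le_max_left _ _))
    ((hN'.tsum_le hf).trans (ENNReal.tsum_le_tsum fun _ => le_max_right _ _))
  ae_lt_top hf h := hN.ae_lt_top hf fun htop => h (by simp [htop])

lemma essSup_left [SFinite μ] (hN : IsFunctionNorm μ N) (ν : Measure Y) [SFinite ν] :
    IsFunctionNorm (ν.prod μ) fun F => N fun x => essSup (fun t => F (t, x)) ν where
  mono_ae h := hN.mono_ae <| (Measure.ae_ae_of_ae_prod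
    ((Measure.measurePreserving_swap (μ := μ) (ν := ν)).quasiMeasurePreserving.ae h)).mono
      fun _ hx => essSup_mono_ae hx
  const_mul_le {c} hc F := by
    simpa only [ENNReal.essSup_const_mul] using hN.const_mul_le hc _
  tsum_le {F} hF := by
    refine le_trans (hN.mono_ae (.of_forall fun x => essSup_le_of_ae_le _ ?_))
      (hN.tsum_le fun k => measurable_essSup_left (hF k))
    filter_upwards [ae_all_iff.2 fun k => ENNReal.ae_le_essSup fun t => F k (t, x)] with t ht
    exact ENNReal.tsum_le_tsum ht
  ae_lt_top {F} hF h := by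
    have hlt : ∀ᵐ x ∂μ, ∀ᵐ t ∂ν, F (t, x) < ∞ :=
      (hN.ae_lt_top (measurable_essSup_left hF) h).mono fun x hx =>
        (ENNReal.ae_le_essSup _).mono fun t ht => ht.trans_lt hx
    exact (Measure.measurePreserving_swap (μ := ν) (ν := μ)).quasiMeasurePreserving.ae
      ((Measure.ae_prod_iff_ae_ae (measurableSet_lt (hF.comp measurable_swap)
        measurable_const)).2 hlt)

section FixedPoint

variable {u v : X → ℝ}

lemma enorm_sub_le (hN : IsFunctionNorm μ N) (hu : Measurable u) (hv : Measurable v) :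
    N (fun x => ‖u x - v x‖ₑ) ≤ N (fun x => ‖u x‖ₑ) + N fun x => ‖v x‖ₑ :=
  (hN.mono_ae (.of_forall fun _ => _root_.enorm_sub_le)).trans (hN.add_le hu.enorm hv.enorm)

lemma enorm_sub_triangle (hN : IsFunctionNorm μ N) {w : X → ℝ} (hu : Measurable u)
    (hv : Measurable v) (hw : Measurable w) :
    N (fun x => ‖u x - w x‖ₑ) ≤ N (fun x => ‖u x - v x‖ₑ) + N fun x => ‖v x - w x‖ₑ := by
  refine (hN.mono_ae (.of_forall fun x => ?_)).trans
    (hN.add_le (hu.sub hv).enorm (hv.sub hw).enorm)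
  rw [← sub_add_sub_cancel (u x) (v x) (w x)]
  exact enorm_add_le _ _

lemma exists_tendsto_of_tsum_ne_top (hN : IsFunctionNorm μ N) {u : ℕ → X → ℝ}
    (hu : ∀ k, Measurable (u k)) (h : ∑' k, N (fun x => ‖u k x - u (k + 1) x‖ₑ) ≠ ∞) :
    ∃ v : X → ℝ, Measurable v ∧ Tendsto (fun k => N fun x => ‖u k x - v x‖ₑ) atTop (𝓝 0) := by
  have hd (k : ℕ) : Measurable fun x => ‖u k x - u (k + 1) x‖ₑ := ((hu k).sub (hu (k + 1))).enorm
  have hfin : ∀ᵐ x ∂μ, ∑' k, ‖u k x - u (k + 1) x‖ₑ < ∞ :=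
    hN.ae_lt_top (.tsum hd) ((hN.tsum_le hd).trans_lt h.lt_top).ne
  have hcauchy : ∀ᵐ x ∂μ, CauchySeq fun k => u k x := by
    filter_upwards [hfin] with x hx
    refine cauchySeq_of_edist_le_of_tsum_ne_top _ (fun k => ?_) hx.ne
    rw [edist_eq_enorm_sub]
  obtain ⟨v, hv, hlim⟩ := measurable_limit_of_tendsto_metrizable_ae
    (fun k => (hu k).aemeasurable) (hcauchy.mono fun x hx => cauchySeq_tendsto_of_complete hx)
  refine ⟨v, hv, tendsto_of_tendsto_of_tendsto_of_le_of_le tendsto_const_nhds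
    (ENNReal.tendsto_sum_nat_add _ h) (fun _ => zero_le) fun k => ?_⟩
  refine (hN.mono_ae ?_).trans (hN.tsum_le fun j => hd (j + k))
  filter_upwards [hlim] with x hx
  have := edist_le_tsum_of_edist_le_of_tendsto _ (fun j => (edist_eq_enorm_sub _ _).le) hx k
  simpa only [edist_eq_enorm_sub, Nat.add_comm k, Nat.add_right_comm] using this

variable {R θ : ℝ≥0∞} {Φ : (X → ℝ) → X → ℝ}

/-- The measurable functions of norm at most `R`. -/
def closedBall (N : (X → ℝ≥0∞) → ℝ≥0∞) (R : ℝ≥0∞) : Set (X → ℝ) :=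
  {u | Measurable u ∧ N (fun x => ‖u x‖ₑ) ≤ R}

/-- `Φ` maps the ball of radius `R` to itself, and contracts distances in it by the factor `θ`. -/
structure IsContractionOn (N : (X → ℝ≥0∞) → ℝ≥0∞) (R θ : ℝ≥0∞) (Φ : (X → ℝ) → X → ℝ) :
    Prop where
  mapsTo : MapsTo Φ (closedBall N R) (closedBall N R)
  le_mul : ∀ u ∈ closedBall N R, ∀ v ∈ closedBall N R,
    N (fun x => ‖Φ u x - Φ v x‖ₑ) ≤ θ * N fun x => ‖u x - v x‖ₑ

lemma norm_sub_ne_top (hN : IsFunctionNorm μ N) (hR : R ≠ ∞) (hu : u ∈ closedBall N R)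
    (hv : v ∈ closedBall N R) : N (fun x => ‖u x - v x‖ₑ) ≠ ∞ :=
  ne_top_of_le_ne_top (ENNReal.add_ne_top.2 ⟨hR, hR⟩)
    ((hN.enorm_sub_le hu.1 hv.1).trans (add_le_add hu.2 hv.2))

lemma mem_closedBall_of_tendsto (hN : IsFunctionNorm μ N) {u : ℕ → X → ℝ}
    (hu : ∀ k, u k ∈ closedBall N R) (hv : Measurable v)
    (h : Tendsto (fun k => N fun x => ‖u k x - v x‖ₑ) atTop (𝓝 0)) : v ∈ closedBall N R := by
  refine ⟨hv, ge_of_tendsto' (by simpa using h.add_const R) fun k => ?_⟩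
  have := hN.enorm_sub_triangle hv (hu k).1 (measurable_const (a := (0 : ℝ)))
  simp only [sub_zero] at this
  simp only [enorm_sub_rev (v _)] at this
  exact this.trans (add_le_add_right (hu k).2 _)

namespace IsContractionOn

lemma exists_tendsto_iterate (hN : IsFunctionNorm μ N) (hR : R ≠ ∞) (hθ : θ < 1)
    (hΦ : IsContractionOn N R θ Φ) (hu : u ∈ closedBall N R) :
    ∃ w : X → ℝ, Measurable w ∧
      Tendsto (fun k => N fun x => ‖Φ^[k] u x - w x‖ₑ) atTop (𝓝 0) := by
  have hmem (k : ℕ) : Φ^[k] u ∈ closedBall N R := hΦ.mapsTo.iterate k hu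
  have hgeom (k : ℕ) : N (fun x => ‖Φ^[k] u x - Φ^[k + 1] u x‖ₑ)
      ≤ θ ^ k * N fun x => ‖u x - Φ u x‖ₑ := by
    induction k with
    | zero => simp
    | succ k ih =>
      have := (hΦ.le_mul _ (hmem k) _ (hmem (k + 1))).trans (mul_le_mul_right ih θ)
      simpa only [pow_succ', mul_assoc, Function.iterate_succ_apply'] using this
  refine hN.exists_tendsto_of_tsum_ne_top (fun k => (hmem k).1)
    (ne_top_of_le_ne_top ?_ (ENNReal.tsum_le_tsum hgeom))
  rw [ENNReal.tsum_mul_right, ENNReal.tsum_geometric]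
  exact ENNReal.mul_ne_top (ENNReal.inv_ne_top.2 (tsub_pos_of_lt hθ).ne')
    (hN.norm_sub_ne_top hR hu (hΦ.mapsTo hu))

lemma ae_eq_of_tendsto_iterate (hN : IsFunctionNorm μ N) (hΦ : IsContractionOn N R θ Φ)
    (hθ : θ < 1) (hu : u ∈ closedBall N R) (hv : v ∈ closedBall N R)
    (h : Tendsto (fun k => N fun x => ‖Φ^[k] u x - v x‖ₑ) atTop (𝓝 0)) :
    ∀ᵐ x ∂μ, v x = Φ v x := by
  have hmem (k : ℕ) : Φ^[k] u ∈ closedBall N R := hΦ.mapsTo.iterate k hu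
  have hlim := (h.comp (tendsto_add_atTop_nat 1)).add
    (ENNReal.Tendsto.const_mul (a := θ) h (.inr (hθ.trans ENNReal.one_lt_top).ne))
  have hzero : N (fun x => ‖v x - Φ v x‖ₑ) = 0 := by
    refine le_zero_iff.1 (ge_of_tendsto' (by simpa using hlim) fun k => ?_)
    refine (hN.enorm_sub_triangle hv.1 (hmem (k + 1)).1 (hΦ.mapsTo hv).1).trans
      (add_le_add ?_ ?_)
    · simp only [enorm_sub_rev (v _)]
      exact le_rfl
    · rw [Function.iterate_succ_apply']
      exact hΦ.le_mul _ (hmem k) _ hv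
  filter_upwards [hN.ae_eq_zero (hv.1.sub (hΦ.mapsTo hv).1).enorm hzero] with x hx
  exact sub_eq_zero.1 (enorm_eq_zero.1 hx)

lemma ae_eq_of_fixed (hN : IsFunctionNorm μ N) (hΦ : IsContractionOn N R θ Φ) (hR : R ≠ ∞)
    (hθ : θ < 1) (hu : u ∈ closedBall N R) (hv : v ∈ closedBall N R)
    (hu' : ∀ᵐ x ∂μ, u x = Φ u x) (hv' : ∀ᵐ x ∂μ, v x = Φ v x) : ∀ᵐ x ∂μ, v x = u x := by
  have hle : N (fun x => ‖v x - u x‖ₑ) ≤ θ * N fun x => ‖v x - u x‖ₑ := by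
    refine (hN.mono_ae ?_).trans (hΦ.le_mul v hv u hu)
    filter_upwards [hu', hv'] with x hux hvx
    rw [← hux, ← hvx]
  have hzero : N (fun x => ‖v x - u x‖ₑ) = 0 := by
    by_contra h0
    refine hle.not_gt ((ENNReal.mul_lt_mul_left h0 (hN.norm_sub_ne_top hR hv hu) hθ).trans_eq
      (one_mul _))
  filter_upwards [hN.ae_eq_zero (hv.1.sub hu.1).enorm hzero] with x hx
  exact sub_eq_zero.1 (enorm_eq_zero.1 hx)

theorem exists_unique_fixedPoint (hN : IsFunctionNorm μ N) (hΦ : IsContractionOn N R θ Φ)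
    (hR : R ≠ ∞) (hθ : θ < 1) :
    ∃ u ∈ closedBall N R, (∀ᵐ x ∂μ, u x = Φ u x) ∧
      ∀ v ∈ closedBall N R, (∀ᵐ x ∂μ, v x = Φ v x) → ∀ᵐ x ∂μ, v x = u x := by
  have h0 : (fun _ => 0) ∈ closedBall N R := ⟨measurable_const, by simp [hN.zero]⟩
  obtain ⟨u, hum, hlim⟩ := exists_tendsto_iterate hN hR hθ hΦ h0
  have hu := hN.mem_closedBall_of_tendsto (fun k => hΦ.mapsTo.iterate k h0) hum hlim
  have hfix := ae_eq_of_tendsto_iterate hN hΦ hθ h0 hu hlim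
  exact ⟨u, hu, hfix, fun v hv hv' => ae_eq_of_fixed hN hΦ hR hθ hu hv hfix hv'⟩

end IsContractionOn

end FixedPoint

end IsFunctionNorm

end FunctionNorm

section LuxemburgNorm

variable {X : Type*} [MeasurableSpace X] {μ : Measure X} {s : X → ℝ} {f g : X → ℝ≥0∞}

lemma luxNorm_le {R : ℝ≥0∞} (hR : R ≠ 0) (h : ∫⁻ x, (f x / R) ^ s x ∂μ ≤ 1) :
    luxNorm μ s f ≤ R := sInf_le ⟨hR.bot_lt, h⟩

lemma lintegral_div_rpow_le_one_of_luxNorm_lt (hs : ∀ x, 0 ≤ s x) {R : ℝ≥0∞}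
    (h : luxNorm μ s f < R) : ∫⁻ x, (f x / R) ^ s x ∂μ ≤ 1 := by
  obtain ⟨R', ⟨-, hR'⟩, hlt⟩ := sInf_lt_iff.1 h
  refine le_trans (lintegral_mono fun x => ?_) hR'
  exact ENNReal.rpow_le_rpow (ENNReal.div_le_div_left hlt.le _) (hs x)

lemma luxNorm_le_mul {c : ℝ≥0∞} (hc0 : c ≠ 0) (hc : c ≠ ∞) {t : X → ℝ}
    (h : ∀ R ≠ 0, ∫⁻ x, (f x / R) ^ s x ∂μ ≤ 1 → ∫⁻ x, (g x / (c * R)) ^ t x ∂μ ≤ 1) :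
    luxNorm μ t g ≤ c * luxNorm μ s f := by
  simp only [luxNorm.eq_1 μ s, sInf_eq_iInf, ENNReal.mul_iInf_of_ne hc0 hc]
  refine le_iInf₂ fun R hR => luxNorm_le (mul_ne_zero hc0 hR.1.ne') (h R hR.1.ne' hR.2)

lemma luxNorm_mono_ae (hs : ∀ x, 0 ≤ s x) (h : ∀ᵐ x ∂μ, f x ≤ g x) :
    luxNorm μ s f ≤ luxNorm μ s g :=
  sInf_le_sInf fun _ hR => ⟨hR.1, (lintegral_mono_ae (h.mono fun x hx =>
    ENNReal.rpow_le_rpow (ENNReal.div_le_div_right hx _) (hs x))).trans hR.2⟩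

lemma luxNorm_const_mul_le (hs : ∀ x, 0 < s x) {c : ℝ≥0∞} (hc : c ≠ ∞) (f : X → ℝ≥0∞) :
    luxNorm μ s (fun x => c * f x) ≤ c * luxNorm μ s f := by
  rcases eq_or_ne c 0 with rfl | hc0
  · simp only [zero_mul]
    refine le_of_forall_gt fun R hR => ?_
    obtain ⟨R', hR'0, hR'⟩ := exists_between hR
    refine (luxNorm_le hR'0.ne' ?_).trans_lt hR'
    simp [ENNReal.zero_rpow_of_pos (hs _)]
  · refine luxNorm_le_mul hc0 hc fun R _ hR => ?_
    simpa only [ENNReal.mul_div_mul_left _ _ hc0 hc] using hR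

lemma rpow_tsum_mul_le_tsum_mul_rpow {w : ℕ → ℝ≥0∞} (hw : ∑' k, w k = 1) (z : ℕ → ℝ≥0∞) {k : ℝ}
    (hk : 1 ≤ k) : (∑' i, w i * z i) ^ k ≤ ∑' i, w i * z i ^ k := by
  have : IsProbabilityMeasure (Measure.count.withDensity w) := ⟨by simp [lintegral_count, hw]⟩
  have h := rpow_lintegral_le_lintegral_rpow (Measure.count.withDensity w)
    (measurable_from_nat (f := z)) hk
  simpa only [lintegral_withDensity_eq_lintegral_mul _ measurable_from_nat measurable_from_nat,
    lintegral_count, Pi.mul_apply] using h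

lemma lintegral_tsum_div_rpow_le_one (hsm : Measurable s) (hs : ∀ x, 1 ≤ s x)
    {f : ℕ → X → ℝ≥0∞} (hf : ∀ k, Measurable (f k)) {R : ℕ → ℝ≥0∞} (hR0 : ∀ k, R k ≠ 0)
    (hR : ∑' k, R k ≠ ∞) (h : ∀ k, ∫⁻ x, (f k x / R k) ^ s x ∂μ ≤ 1) :
    ∫⁻ x, ((∑' k, f k x) / ∑' k, R k) ^ s x ∂μ ≤ 1 := by
  set S := ∑' k, R k
  have hS0 : S ≠ 0 := fun h0 => hR0 0 (ENNReal.tsum_eq_zero.1 h0 0)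
  have hw : ∑' k, R k / S = 1 := by
    simp only [div_eq_mul_inv, ENNReal.tsum_mul_right]
    exact ENNReal.mul_inv_cancel hS0 hR
  have hterm (k : ℕ) (x : X) : f k x / S = R k / S * (f k x / R k) := by
    rw [← ENNReal.mul_div_right_comm,
      ENNReal.mul_div_cancel (hR0 k) (ENNReal.ne_top_of_tsum_ne_top hR k)]
  calc ∫⁻ x, ((∑' k, f k x) / S) ^ s x ∂μ
      = ∫⁻ x, (∑' k, R k / S * (f k x / R k)) ^ s x ∂μ := by
        simp only [← hterm]
        simp only [div_eq_mul_inv, ENNReal.tsum_mul_right]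
    _ ≤ ∫⁻ x, ∑' k, R k / S * (f k x / R k) ^ s x ∂μ :=
        lintegral_mono fun x => rpow_tsum_mul_le_tsum_mul_rpow hw _ (hs x)
    _ = ∑' k, R k / S * ∫⁻ x, (f k x / R k) ^ s x ∂μ := by
        have hm (k : ℕ) : Measurable fun x => (f k x / R k) ^ s x := ((hf k).div_const _).pow hsm
        rw [lintegral_tsum fun k => ((hm k).const_mul _).aemeasurable]
        exact tsum_congr fun k => lintegral_const_mul _ (hm k)
    _ ≤ ∑' k, R k / S := ENNReal.tsum_le_tsum fun k => mul_le_of_le_one_right' (h k)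
    _ = 1 := hw

lemma luxNorm_tsum_le (hsm : Measurable s) (hs : ∀ x, 1 ≤ s x) {f : ℕ → X → ℝ≥0∞}
    (hf : ∀ k, Measurable (f k)) :
    luxNorm μ s (fun x => ∑' k, f k x) ≤ ∑' k, luxNorm μ s (f k) := by
  refine ENNReal.le_of_forall_pos_le_add fun ε hε htop => ?_
  obtain ⟨δ, hδ0, hδ⟩ := ENNReal.exists_pos_sum_of_countable' (ENNReal.coe_pos.2 hε).ne' ℕ
  have hsum : ∑' k, (luxNorm μ s (f k) + δ k) = ∑' k, luxNorm μ s (f k) + ∑' k, δ k :=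
    ENNReal.tsum_add
  have hne (k : ℕ) : luxNorm μ s (f k) ≠ ∞ := ENNReal.ne_top_of_tsum_ne_top htop.ne k
  have hR (k : ℕ) : luxNorm μ s (f k) + δ k ≠ 0 := ((hδ0 k).trans_le le_add_self).ne'
  calc luxNorm μ s (fun x => ∑' k, f k x) ≤ ∑' k, (luxNorm μ s (f k) + δ k) := by
        refine luxNorm_le (fun h0 => hR 0 (ENNReal.tsum_eq_zero.1 h0 0))
          (lintegral_tsum_div_rpow_le_one hsm hs hf hR ?_ fun k =>
            lintegral_div_rpow_le_one_of_luxNorm_lt (fun x => zero_le_one.trans (hs x))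
              (ENNReal.lt_add_right (hne k) (hδ0 k).ne'))
        rw [hsum]
        exact ENNReal.add_ne_top.2 ⟨htop.ne, hδ.ne_top⟩
    _ ≤ _ := hsum.le.trans (add_le_add_right hδ.le _)

lemma ae_lt_top_of_luxNorm_ne_top (hsm : Measurable s) (hs : ∀ x, 0 < s x) (hf : Measurable f)
    (h : luxNorm μ s f ≠ ∞) : ∀ᵐ x ∂μ, f x < ∞ := by
  obtain ⟨R, hR, hRtop⟩ := exists_between h.lt_top
  have hint := lintegral_div_rpow_le_one_of_luxNorm_lt (fun x => (hs x).le) hR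
  have hlt := ae_lt_top ((hf.div_const R).pow hsm) (hint.trans_lt ENNReal.one_lt_top).ne
  filter_upwards [hlt] with x hx
  by_contra htop
  rw [not_lt_top_iff.1 htop, ENNReal.top_div_of_ne_top hRtop.ne,
    ENNReal.top_rpow_of_pos (hs x)] at hx
  exact hx.false

lemma isFunctionNorm_luxNorm (hsm : Measurable s) (hs : ∀ x, 1 ≤ s x) :
    IsFunctionNorm μ (luxNorm μ s) :=
  have hpos (x : X) : 0 < s x := zero_lt_one.trans_le (hs x)
  { mono_ae := luxNorm_mono_ae fun x => (hpos x).le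
    const_mul_le := luxNorm_const_mul_le hpos
    tsum_le := luxNorm_tsum_le hsm hs
    ae_lt_top := ae_lt_top_of_luxNorm_ne_top hsm hpos }

lemma luxNorm_rpow (s : X → ℝ) (f : X → ℝ≥0∞) {θ : ℝ} (hθ : 0 < θ) :
    luxNorm μ s (fun x => f x ^ θ) = luxNorm μ (fun x => θ * s x) f ^ θ := by
  rw [luxNorm, luxNorm, ← ENNReal.orderIsoRpow_apply θ hθ, OrderIso.map_sInf_eq_sInf_symm_preimage]
  congr 1
  ext R
  simp only [ENNReal.orderIsoRpow_symm_apply, mem_preimage, mem_ofPred_eq,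
    ENNReal.orderIsoRpow_apply, ENNReal.rpow_mul]
  refine and_congr (by simp [pos_iff_ne_zero, hθ, hθ.le]) ?_
  simp only [ENNReal.div_rpow_of_nonneg _ _ hθ.le, ← ENNReal.rpow_mul, one_div,
    inv_mul_cancel₀ hθ.ne', ENNReal.rpow_one]

lemma rpow_mul_rpow_le_ofReal_mul_add (u v : ℝ≥0∞) {θ η : ℝ} (hθ : 0 < θ) (hη : 0 < η)
    (h : θ + η = 1) : u ^ θ * v ^ η ≤ ENNReal.ofReal θ * u + ENNReal.ofReal η * v := by
  have hpq : θ⁻¹.HolderConjugate η⁻¹ := .inv_inv hθ hη h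
  refine (ENNReal.young_inequality (u ^ θ) (v ^ η) hpq).trans_eq ?_
  rw [ENNReal.rpow_rpow_inv hθ.ne', ENNReal.rpow_rpow_inv hη.ne', ENNReal.ofReal_inv_of_pos hθ,
    ENNReal.ofReal_inv_of_pos hη, div_eq_mul_inv, div_eq_mul_inv, inv_inv, inv_inv, mul_comm u,
    mul_comm v]

namespace IsFunctionNorm

open Filter Topology

variable {N : (X → ℝ≥0∞) → ℝ≥0∞} {θ η : ℝ}

lemma rpow_mul_rpow_le_of_le (hN : IsFunctionNorm μ N) (hf : Measurable f) (hg : Measurable g)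
    {a c : ℝ≥0∞} (ha0 : a ≠ 0) (ha : a ≠ ∞) (hc0 : c ≠ 0) (hc : c ≠ ∞) (hfa : N f ≤ a)
    (hgc : N g ≤ c) (hθ : 0 < θ) (hη : 0 < η) (h : θ + η = 1) :
    N (fun x => f x ^ θ * g x ^ η) ≤ a ^ θ * c ^ η := by
  have hpt (x : X) : f x ^ θ * g x ^ η ≤ a ^ θ * c ^ η *
      (ENNReal.ofReal θ * a⁻¹ * f x + ENNReal.ofReal η * c⁻¹ * g x) := by
    have hy := rpow_mul_rpow_le_ofReal_mul_add (a⁻¹ * f x) (c⁻¹ * g x) hθ hη h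
    calc f x ^ θ * g x ^ η = (a * (a⁻¹ * f x)) ^ θ * (c * (c⁻¹ * g x)) ^ η := by
          rw [ENNReal.mul_inv_cancel_left ha0 ha, ENNReal.mul_inv_cancel_left hc0 hc]
      _ = a ^ θ * c ^ η * ((a⁻¹ * f x) ^ θ * (c⁻¹ * g x) ^ η) := by
          rw [ENNReal.mul_rpow_of_nonneg a _ hθ.le, ENNReal.mul_rpow_of_nonneg c _ hη.le]
          ring
      _ ≤ _ := by
          simp only [mul_assoc] at hy ⊢
          gcongr
  have hK : a ^ θ * c ^ η ≠ ∞ := by finiteness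
  have hca : ENNReal.ofReal θ * a⁻¹ ≠ ∞ := by finiteness
  have hcc : ENNReal.ofReal η * c⁻¹ ≠ ∞ := by finiteness
  calc N (fun x => f x ^ θ * g x ^ η)
      ≤ a ^ θ * c ^ η * (ENNReal.ofReal θ * a⁻¹ * N f + ENNReal.ofReal η * c⁻¹ * N g) := by
        refine (hN.mono_ae (.of_forall hpt)).trans ((hN.const_mul_le hK _).trans ?_)
        gcongr
        exact (hN.add_le (hf.const_mul _) (hg.const_mul _)).trans
          (add_le_add (hN.const_mul_le hca f) (hN.const_mul_le hcc g))
    _ ≤ a ^ θ * c ^ η * (ENNReal.ofReal θ * a⁻¹ * a + ENNReal.ofReal η * c⁻¹ * c) := by gcongr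
    _ = a ^ θ * c ^ η := by
        rw [mul_assoc _ a⁻¹, ENNReal.inv_mul_cancel ha0 ha, mul_assoc _ c⁻¹,
          ENNReal.inv_mul_cancel hc0 hc, mul_one, mul_one, ← ENNReal.ofReal_add hθ.le hη.le, h,
          ENNReal.ofReal_one, mul_one]

lemma rpow_mul_rpow_le (hN : IsFunctionNorm μ N) (hf : Measurable f) (hg : Measurable g)
    (hfN : N f ≠ ∞) (hgN : N g ≠ ∞) (hθ : 0 < θ) (hη : 0 < η) (h : θ + η = 1) :
    N (fun x => f x ^ θ * g x ^ η) ≤ N f ^ θ * N g ^ η := by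
  have hlim : Tendsto (fun ε : ℝ≥0∞ => (N f + ε) ^ θ * (N g + ε) ^ η) (𝓝[>] 0)
      (𝓝 (N f ^ θ * N g ^ η)) := by
    have hadd (a : ℝ≥0∞) {ζ : ℝ} : Tendsto (fun ε => (a + ε) ^ ζ) (𝓝[>] 0) (𝓝 (a ^ ζ)) := by
      refine (ENNReal.continuous_rpow_const.tendsto a).comp ?_
      exact ((continuous_const_add a).tendsto' 0 a (add_zero a)).mono_left nhdsWithin_le_nhds
    exact ENNReal.Tendsto.mul (hadd _) (.inr (by finiteness)) (hadd _) (.inr (by finiteness))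
  refine ge_of_tendsto hlim ?_
  filter_upwards [Ioo_mem_nhdsGT ENNReal.zero_lt_top] with ε hε
  have hpos (a : ℝ≥0∞) : a + ε ≠ 0 := (hε.1.trans_le le_add_self).ne'
  have hfin {a : ℝ≥0∞} (ha : a ≠ ∞) : a + ε ≠ ∞ := ENNReal.add_ne_top.2 ⟨ha, hε.2.ne⟩
  exact hN.rpow_mul_rpow_le_of_le hf hg (hpos _) (hfin hfN) (hpos _) (hfin hgN) le_self_add
    le_self_add hθ hη h

end IsFunctionNorm

/-- The norm of `L^{p(·)} ∩ L^{q(·)}`. -/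
def mixedLux (μ : Measure X) (p q : X → ℝ) (f : X → ℝ≥0∞) : ℝ≥0∞ :=
  max (luxNorm μ p f) (luxNorm μ q f)

variable {p q : X → ℝ}

lemma isFunctionNorm_mixedLux (hpm : Measurable p) (hp : ∀ x, 1 ≤ p x) (hqm : Measurable q)
    (hq : ∀ x, 1 ≤ q x) : IsFunctionNorm μ (mixedLux μ p q) :=
  (isFunctionNorm_luxNorm hpm hp).max (isFunctionNorm_luxNorm hqm hq)

lemma mixedLux_rpow (p q : X → ℝ) (f : X → ℝ≥0∞) {θ : ℝ} (hθ : 0 < θ) :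
    mixedLux μ p q (fun x => f x ^ θ) =
      mixedLux μ (fun x => θ * p x) (fun x => θ * q x) f ^ θ := by
  rw [mixedLux, mixedLux, luxNorm_rpow p f hθ, luxNorm_rpow q f hθ,
    (ENNReal.monotone_rpow_of_nonneg hθ.le).map_max]

lemma mixedLux_pow_mul_le (hpm : Measurable p) (hp : ∀ x, 1 ≤ p x) (hqm : Measurable q)
    (hq : ∀ x, 1 ≤ q x) {b : ℕ} (hb : b ≠ 0) (hf : Measurable f) (hg : Measurable g)
    (hfN : mixedLux μ p q f ≠ ∞) (hgN : mixedLux μ p q g ≠ ∞) :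
    mixedLux μ (fun x => p x / (b + 1)) (fun x => q x / (b + 1)) (fun x => f x ^ b * g x) ≤
      mixedLux μ p q f ^ b * mixedLux μ p q g := by
  have hb1 : (0 : ℝ) < b + 1 := by positivity
  have hroot (x y : ℝ≥0∞) :
      (x ^ ((b : ℝ) / (b + 1)) * y ^ (1 / ((b : ℝ) + 1))) ^ ((b : ℝ) + 1) = x ^ b * y := by
    rw [ENNReal.mul_rpow_of_nonneg _ _ hb1.le, ← ENNReal.rpow_mul, ← ENNReal.rpow_mul,
      div_mul_cancel₀ _ hb1.ne', div_mul_cancel₀ _ hb1.ne', ENNReal.rpow_one, ENNReal.rpow_natCast]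
  simp only [← hroot]
  rw [mixedLux_rpow _ _ _ hb1]
  simp only [mul_div_cancel₀ _ hb1.ne']
  gcongr
  exact (isFunctionNorm_mixedLux hpm hp hqm hq).rpow_mul_rpow_le hf hg hfN hgN (by positivity)
    (by positivity) (by field_simp)

end LuxemburgNorm

section RieszPotential

open Filter Module Topology

variable {E : Type*} [NormedAddCommGroup E] [MeasurableSpace E] [NormedSpace ℝ E] [BorelSpace E]

/-- The Riesz potential of order `σ`, without its usual normalizing constant. -/
def rieszPotential (μ : Measure E) (σ : ℝ) (f : E → ℝ≥0∞) (x : E) : ℝ≥0∞ :=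
  ∫⁻ y, ENNReal.ofReal (‖x - y‖ ^ (σ - finrank ℝ E)) * f y ∂μ

lemma rieszPotential_div {μ : Measure E} (σ : ℝ) {f : E → ℝ≥0∞} (hf : Measurable f) (c : ℝ≥0∞)
    (x : E) : rieszPotential μ σ (fun y => f y / c) x = rieszPotential μ σ f x / c := by
  simp only [rieszPotential, div_eq_mul_inv, ← mul_assoc]
  exact lintegral_mul_const _ (by fun_prop)

lemma measurable_rieszPotential [SecondCountableTopology E] {μ : Measure E} [SFinite μ] (σ : ℝ)
    {f : E → ℝ≥0∞} (hf : Measurable f) : Measurable (rieszPotential μ σ f) := by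
  have : Measurable fun q : E × E =>
      ENNReal.ofReal (‖q.1 - q.2‖ ^ (σ - finrank ℝ E)) * f q.2 := by fun_prop
  exact this.lintegral_prod_right'

variable [FiniteDimensional ℝ E]

namespace IsLogHolderExponent

variable [Nontrivial E] {s : E → ℝ} {lo hi A κ : ℝ}

theorem exists_luxNorm_maximalFunction_le (h : IsLogHolderExponent s lo hi A κ) (μ : Measure E)
    [μ.IsAddHaarMeasure] :
    ∃ C : ℝ≥0∞, C ≠ ∞ ∧ ∀ f : E → ℝ≥0∞, Measurable f →
      luxNorm μ s (maximalFunction μ f) ≤ C * luxNorm μ s f := by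
  obtain ⟨C, hC, hCf⟩ := h.exists_lintegral_maximalFunction_rpow_le μ
  set c := max 1 C
  have hc0 : c ≠ 0 := (zero_lt_one.trans_le (le_max_left 1 C)).ne'
  have hc : c ≠ ∞ := max_ne_top ENNReal.one_ne_top hC
  refine ⟨c, hc, fun f hf => luxNorm_le_mul hc0 hc fun R _ hR => ?_⟩
  have hpt (x : E) : (maximalFunction μ f x / (c * R)) ^ s x
      ≤ c⁻¹ * maximalFunction μ (fun y => f y / R) x ^ s x := by
    rw [maximalFunction_div hf, div_eq_mul_inv, ENNReal.mul_inv (.inl hc0) (.inl hc),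
      mul_left_comm, ← div_eq_mul_inv, ENNReal.mul_rpow_of_nonneg _ _ (h.pos x).le]
    gcongr
    exact ENNReal.rpow_le_self_of_le_one (ENNReal.inv_le_one.2 (le_max_left 1 C)) (h.one_le x)
  calc ∫⁻ x, (maximalFunction μ f x / (c * R)) ^ s x ∂μ
      ≤ ∫⁻ x, c⁻¹ * maximalFunction μ (fun y => f y / R) x ^ s x ∂μ := lintegral_mono hpt
    _ = c⁻¹ * ∫⁻ x, maximalFunction μ (fun y => f y / R) x ^ s x ∂μ :=
        lintegral_const_mul' _ _ (ENNReal.inv_ne_top.2 hc0)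
    _ ≤ c⁻¹ * c := by
        gcongr
        exact (hCf _ (hf.div_const R) hR).trans (le_max_right 1 C)
    _ = 1 := ENNReal.inv_mul_cancel hc0 hc

lemma exists_mixedLux_maximalFunction_le (h : IsLogHolderExponent s lo hi A κ) (μ : Measure E)
    [μ.IsAddHaarMeasure] {q : ℝ} (hq : 1 < q) :
    ∃ C : ℝ≥0∞, C ≠ ∞ ∧ ∀ f : E → ℝ≥0∞, Measurable f →
      mixedLux μ s (fun _ => q) (maximalFunction μ f) ≤ C * mixedLux μ s (fun _ => q) f := by
  obtain ⟨C₁, hC₁, hC₁f⟩ := h.exists_luxNorm_maximalFunction_le μ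
  obtain ⟨C₂, hC₂, hC₂f⟩ := (IsLogHolderExponent.const hq).exists_luxNorm_maximalFunction_le μ
  refine ⟨max C₁ C₂, max_ne_top hC₁ hC₂, fun f hf => max_le ?_ ?_⟩
  · exact (hC₁f f hf).trans (mul_le_mul' (le_max_left _ _) (le_max_left _ _))
  · exact (hC₂f f hf).trans (mul_le_mul' (le_max_right _ _) (le_max_right _ _))

end IsLogHolderExponent

variable {μ : Measure E} [μ.IsAddHaarMeasure] {σ q : ℝ} {f : E → ℝ≥0∞}

lemma lintegral_rpow_Ioi {a c : ℝ} (ha : a < -1) (hc : 0 < c) :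
    ∫⁻ t in Ioi c, ENNReal.ofReal (t ^ a) = ENNReal.ofReal (-c ^ (a + 1) / (a + 1)) := by
  rw [← integral_Ioi_rpow_of_lt ha hc, ofReal_integral_eq_lintegral_ofReal
    (integrableOn_Ioi_rpow_of_lt ha hc)]
  exact ae_restrict_of_forall_mem measurableSet_Ioi fun t ht => Real.rpow_nonneg (hc.trans ht).le _

lemma lintegral_rpow_Ioc {a δ : ℝ} (ha : -1 < a) (hδ : 0 < δ) :
    ∫⁻ t in Ioc 0 δ, ENNReal.ofReal (t ^ a) = ENNReal.ofReal (δ ^ (a + 1) / (a + 1)) := by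
  have hint : ∫ t in (0 : ℝ)..δ, t ^ a = δ ^ (a + 1) / (a + 1) := by
    rw [integral_rpow (.inl ha), Real.zero_rpow (by linarith), sub_zero]
  rw [← hint, intervalIntegral.integral_of_le hδ.le, ofReal_integral_eq_lintegral_ofReal
    ((intervalIntegrable_iff_integrableOn_Ioc_of_le hδ.le).1
      (intervalIntegral.intervalIntegrable_rpow' ha))]
  exact ae_restrict_of_forall_mem measurableSet_Ioc fun t ht => Real.rpow_nonneg ht.1.le _

-- Write `r ^ (σ - d) = (d - σ) ∫ ρ in (r, ∞), ρ ^ (σ - d - 1)`.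
lemma rieszPotential_eq_lintegral_ball [Nontrivial E] (hσ : σ < finrank ℝ E) (hf : Measurable f)
    (x : E) : rieszPotential μ σ f x = ENNReal.ofReal (finrank ℝ E - σ) *
      ∫⁻ ρ in Ioi (0 : ℝ), ENNReal.ofReal (ρ ^ (σ - finrank ℝ E - 1)) *
        ∫⁻ y in Metric.ball x ρ, f y ∂μ := by
  set d : ℝ := (finrank ℝ E : ℝ)
  have hkernel : ∀ᵐ y ∂μ, ENNReal.ofReal (‖x - y‖ ^ (σ - d)) * f y = ENNReal.ofReal (d - σ) *
      ((∫⁻ ρ in Ioi ‖x - y‖, ENNReal.ofReal (ρ ^ (σ - d - 1))) * f y) := by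
    filter_upwards [compl_mem_ae_iff.2 (measure_singleton x)] with y hy
    have hr : 0 < ‖x - y‖ := norm_sub_pos_iff.2 (ne_comm.1 hy)
    rw [lintegral_rpow_Ioi (by linarith) hr, ← mul_assoc, ← ENNReal.ofReal_mul (by linarith),
      sub_add_cancel]
    congr 2
    field_simp [(sub_neg.2 hσ).ne]
    ring
  rw [rieszPotential, lintegral_congr_ae hkernel, lintegral_const_mul' _ _ ENNReal.ofReal_ne_top,
    lintegral_radial_mul_eq_lintegral_ball (by fun_prop) hf]

lemma setLIntegral_le_measure_rpow {X : Type*} [MeasurableSpace X] {ν : Measure X} {f : X → ℝ≥0∞}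
    (hf : Measurable f) (hq : 1 < q) (h : ∫⁻ y, f y ^ q ∂ν ≤ 1) (B : Set X) :
    ∫⁻ y in B, f y ∂ν ≤ ν B ^ (1 - 1 / q) := by
  have hpq := Real.HolderConjugate.conjExponent hq
  have hHolder := ENNReal.lintegral_mul_le_Lp_mul_Lq (ν.restrict B) hpq hf.aemeasurable
    (aemeasurable_const (b := 1))
  have hexp : 1 / q.conjExponent = 1 - 1 / q := by
    simpa only [one_div] using eq_sub_of_add_eq' hpq.inv_add_inv_eq_one
  simp only [Pi.mul_apply, mul_one, ENNReal.one_rpow, lintegral_const,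
    Measure.restrict_apply_univ, one_mul, hexp] at hHolder
  exact hHolder.trans (mul_le_of_le_one_left'
    (ENNReal.rpow_le_one ((setLIntegral_le_lintegral _ _).trans h) (by positivity)))

lemma measure_ball_eq_ofReal_rpow_mul (μ : Measure E) [μ.IsAddHaarMeasure] (x : E) {ρ : ℝ}
    (hρ : 0 < ρ) : μ (Metric.ball x ρ) =
      ENNReal.ofReal (ρ ^ (finrank ℝ E : ℝ)) * μ (Metric.ball 0 1) := by
  rw [Real.rpow_natCast, Measure.addHaar_ball_of_pos μ x hρ]

lemma lintegral_Ioc_mul_lintegral_ball_le (hσ : 0 < σ) (f : E → ℝ≥0∞) (x : E) {δ : ℝ}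
    (hδ : 0 < δ) :
    ∫⁻ ρ in Ioc 0 δ, ENNReal.ofReal (ρ ^ (σ - finrank ℝ E - 1)) * ∫⁻ y in Metric.ball x ρ, f y ∂μ
      ≤ μ (Metric.ball 0 1) * maximalFunction μ f x * ENNReal.ofReal (δ ^ σ / σ) := by
  calc _ ≤ ∫⁻ ρ in Ioc 0 δ, μ (Metric.ball 0 1) * maximalFunction μ f x *
          ENNReal.ofReal (ρ ^ (σ - 1)) := by
        refine setLIntegral_mono' measurableSet_Ioc fun ρ hρ => ?_
        rw [← measure_mul_setLAverage f measure_ball_lt_top.ne,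
          measure_ball_eq_ofReal_rpow_mul μ x hρ.1,
          show σ - 1 = σ - finrank ℝ E - 1 + finrank ℝ E by ring, Real.rpow_add hρ.1,
          ENNReal.ofReal_mul (Real.rpow_nonneg hρ.1.le _)]
        calc _ ≤ ENNReal.ofReal (ρ ^ (σ - finrank ℝ E - 1)) *
              (ENNReal.ofReal (ρ ^ (finrank ℝ E : ℝ)) * μ (Metric.ball 0 1) *
                maximalFunction μ f x) := by
              gcongr
              exact setLAverage_ball_le_maximalFunction f x hρ.1
          _ = _ := by ring
    _ = _ := by
        rw [lintegral_const_mul _ (by fun_prop), lintegral_rpow_Ioc (by linarith) hδ,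
          sub_add_cancel]

lemma lintegral_Ioi_mul_lintegral_ball_le (hq : 1 < q) (hσq : σ * q < finrank ℝ E)
    (hf : Measurable f) (h : ∫⁻ y, f y ^ q ∂μ ≤ 1) (x : E) {δ : ℝ} (hδ : 0 < δ) :
    ∫⁻ ρ in Ioi δ, ENNReal.ofReal (ρ ^ (σ - finrank ℝ E - 1)) * ∫⁻ y in Metric.ball x ρ, f y ∂μ
      ≤ μ (Metric.ball 0 1) ^ (1 - 1 / q) *
        ENNReal.ofReal (δ ^ (σ - finrank ℝ E / q) / (finrank ℝ E / q - σ)) := by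
  have hq0 : 0 < q := zero_lt_one.trans hq
  have hq1 : 0 ≤ 1 - 1 / q := sub_nonneg.2 ((div_le_one hq0).2 hq.le)
  have hlt : σ < finrank ℝ E / q := (lt_div_iff₀ hq0).2 hσq
  calc _ ≤ ∫⁻ ρ in Ioi δ, μ (Metric.ball 0 1) ^ (1 - 1 / q) *
          ENNReal.ofReal (ρ ^ (σ - finrank ℝ E / q - 1)) := by
        refine setLIntegral_mono' measurableSet_Ioi fun ρ hρ => ?_
        have hρ0 : 0 < ρ := hδ.trans hρ
        calc _ ≤ ENNReal.ofReal (ρ ^ (σ - finrank ℝ E - 1)) *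
              μ (Metric.ball x ρ) ^ (1 - 1 / q) := by
              gcongr
              exact setLIntegral_le_measure_rpow hf hq h _
          _ = _ := by
              rw [measure_ball_eq_ofReal_rpow_mul μ x hρ0, ENNReal.mul_rpow_of_nonneg _ _ hq1,
                ENNReal.ofReal_rpow_of_nonneg (by positivity) hq1, ← mul_assoc,
                ← ENNReal.ofReal_mul (by positivity), ← Real.rpow_mul hρ0.le,
                ← Real.rpow_add hρ0, mul_comm]
              congr 3
              ring
    _ = _ := by
        rw [lintegral_const_mul _ (by fun_prop), lintegral_rpow_Ioi (by linarith) hδ,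
          sub_add_cancel, neg_div, ← div_neg, neg_sub]

lemma rieszPotential_le_of_maximalFunction_eq_ofReal [Nontrivial E] (hσ : 0 < σ) (hq : 1 < q)
    (hσq : σ * q < finrank ℝ E) (hf : Measurable f) (h : ∫⁻ y, f y ^ q ∂μ ≤ 1) {x : E} {M : ℝ}
    (hM : 0 < M) (hMf : maximalFunction μ f x = ENNReal.ofReal M) :
    rieszPotential μ σ f x ≤ ENNReal.ofReal (finrank ℝ E - σ) *
      (μ (Metric.ball 0 1) * ENNReal.ofReal (1 / σ) +
        μ (Metric.ball 0 1) ^ (1 - 1 / q) * ENNReal.ofReal (1 / (finrank ℝ E / q - σ))) *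
      ENNReal.ofReal (M ^ (1 - σ * q / finrank ℝ E)) := by
  have hd : (0 : ℝ) < finrank ℝ E := Nat.cast_pos.2 finrank_pos
  set d : ℝ := (finrank ℝ E : ℝ)
  have hθ : 0 < 1 - σ * q / d := sub_pos.2 ((div_lt_one hd).2 hσq)
  have hdq : 0 < d / q - σ := sub_pos.2 ((lt_div_iff₀ (by linarith)).2 hσq)
  set δ := M ^ (-(q / d))
  have hδ : 0 < δ := Real.rpow_pos_of_pos hM _
  have hnear : M * δ ^ σ = M ^ (1 - σ * q / d) := by
    have hexp : 1 + -(q / d) * σ = 1 - σ * q / d := by ring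
    rw [← Real.rpow_mul hM.le, ← Real.rpow_one_add' hM.le (hexp ▸ hθ.ne'), hexp]
  have hfar : δ ^ (σ - d / q) = M ^ (1 - σ * q / d) := by
    rw [← Real.rpow_mul hM.le]
    congr 1
    field_simp
    ring
  rw [rieszPotential_eq_lintegral_ball (by nlinarith) hf, mul_assoc, add_mul,
    ← Ioc_union_Ioi_eq_Ioi hδ.le, lintegral_union measurableSet_Ioi (Ioc_disjoint_Ioi le_rfl)]
  gcongr
  · refine (lintegral_Ioc_mul_lintegral_ball_le hσ f x hδ).trans_eq ?_
    rw [hMf, mul_assoc, mul_assoc, ← ENNReal.ofReal_mul hM.le, ← ENNReal.ofReal_mul (by positivity),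
      ← mul_div_assoc, hnear, one_div_mul_eq_div]
  · refine (lintegral_Ioi_mul_lintegral_ball_le hq hσq hf h x hδ).trans_eq ?_
    rw [hfar, mul_assoc, ← ENNReal.ofReal_mul (by positivity), one_div_mul_eq_div]

/-- Hedberg's inequality, by splitting the Riesz potential at distance `M f x ^ (-q / d)`. -/
theorem exists_rieszPotential_le_maximalFunction_rpow [Nontrivial E] (μ : Measure E)
    [μ.IsAddHaarMeasure] (hσ : 0 < σ) (hq : 1 < q) (hσq : σ * q < finrank ℝ E) :
    ∃ C : ℝ≥0∞, C ≠ ∞ ∧ ∀ f : E → ℝ≥0∞, Measurable f → ∫⁻ y, f y ^ q ∂μ ≤ 1 → ∀ x,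
      rieszPotential μ σ f x ≤ C * maximalFunction μ f x ^ (1 - σ * q / finrank ℝ E) := by
  have hd : (0 : ℝ) < finrank ℝ E := Nat.cast_pos.2 finrank_pos
  have hθ : 0 < 1 - σ * q / finrank ℝ E := sub_pos.2 ((div_lt_one hd).2 hσq)
  have hV : μ (Metric.ball 0 1) ^ (1 - 1 / q) ≠ ∞ := ENNReal.rpow_ne_top_of_nonneg
    (sub_nonneg.2 ((div_le_one (by linarith)).2 hq.le)) measure_ball_lt_top.ne
  refine ⟨ENNReal.ofReal (finrank ℝ E - σ) * (μ (Metric.ball 0 1) * ENNReal.ofReal (1 / σ) +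
    μ (Metric.ball 0 1) ^ (1 - 1 / q) * ENNReal.ofReal (1 / (finrank ℝ E / q - σ))) + 1, ?_,
    fun f hf h x => ?_⟩
  · have := (measure_ball_lt_top (μ := μ) (x := (0 : E)) (r := 1)).ne
    finiteness
  · rcases eq_or_ne (maximalFunction μ f x) ∞ with htop | htop
    · rw [htop, ENNReal.top_rpow_of_pos hθ, ENNReal.mul_top (by simp)]
      exact le_top
    rcases eq_or_ne (maximalFunction μ f x) 0 with hzero | hzero
    · have hball : ∀ ρ ∈ Ioi (0 : ℝ), ENNReal.ofReal (ρ ^ (σ - finrank ℝ E - 1)) *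
          ∫⁻ y in Metric.ball x ρ, f y ∂μ = 0 := fun ρ hρ => by
        rw [← measure_mul_setLAverage f measure_ball_lt_top.ne, nonpos_iff_eq_zero.1
          ((setLAverage_ball_le_maximalFunction f x hρ).trans_eq hzero), mul_zero, mul_zero]
      rw [rieszPotential_eq_lintegral_ball (by nlinarith) hf,
        setLIntegral_congr_fun measurableSet_Ioi hball, lintegral_zero, mul_zero]
      exact zero_le
    have hM := (ENNReal.ofReal_toReal htop).symm
    refine (rieszPotential_le_of_maximalFunction_eq_ofReal hσ hq hσq hf h
      (ENNReal.toReal_pos hzero htop) hM).trans ?_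
    rw [← ENNReal.ofReal_rpow_of_nonneg ENNReal.toReal_nonneg hθ.le, ← hM]
    gcongr
    exact le_self_add

lemma le_const_mul_of_lt_imp_le {a c m : ℝ≥0∞} (hc0 : c ≠ 0) (hc : c ≠ ∞)
    (h : ∀ R, m < R → R ≠ ∞ → a ≤ c * R) : a ≤ c * m := by
  rcases eq_or_ne m ∞ with rfl | hm
  · simp [ENNReal.mul_top hc0]
  have := nhdsGT_neBot_of_exists_gt ⟨_, hm.lt_top⟩
  have hlim : Tendsto (fun R => c * R) (𝓝[>] m) (𝓝 (c * m)) :=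
    (ENNReal.Tendsto.const_mul tendsto_id (.inr hc)).mono_left nhdsWithin_le_nhds
  refine ge_of_tendsto hlim ?_
  filter_upwards [Ioo_mem_nhdsGT hm.lt_top] with R hR
  exact h R hR.1 hR.2.ne

lemma IsLogHolderExponent.exists_mixedLux_rieszPotential_le_of_lt [Nontrivial E] {s : E → ℝ}
    {lo hi A κ : ℝ} (h : IsLogHolderExponent s lo hi A κ) (μ : Measure E) [μ.IsAddHaarMeasure]
    (hσ : 0 < σ) (hq : 1 < q) (hσq : σ * q < finrank ℝ E) :
    ∃ C : ℝ≥0∞, C ≠ ∞ ∧ ∀ f : E → ℝ≥0∞, Measurable f → ∀ R,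
      mixedLux μ s (fun _ => q) f < R → R ≠ ∞ →
        mixedLux μ (fun x => s x / (1 - σ * q / finrank ℝ E))
          (fun _ => q / (1 - σ * q / finrank ℝ E)) (rieszPotential μ σ f) ≤ C * R := by
  obtain ⟨K, hK, hKf⟩ := exists_rieszPotential_le_maximalFunction_rpow μ hσ hq hσq
  obtain ⟨C, hC, hCf⟩ := h.exists_mixedLux_maximalFunction_le μ hq
  have hd : (0 : ℝ) < finrank ℝ E := Nat.cast_pos.2 finrank_pos
  set θ := 1 - σ * q / finrank ℝ E
  have hθ : 0 < θ := sub_pos.2 ((div_lt_one hd).2 hσq)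
  have hθ1 : θ ≤ 1 := sub_le_self _ (by positivity)
  have hNs : IsFunctionNorm μ (mixedLux μ s fun _ => q) :=
    isFunctionNorm_mixedLux h.measurable h.one_le measurable_const fun _ => hq.le
  have hN : IsFunctionNorm μ (mixedLux μ (fun x => s x / θ) fun _ => q / θ) :=
    isFunctionNorm_mixedLux (h.measurable.div_const θ)
      (fun x => (one_le_div hθ).2 (hθ1.trans (h.one_le x))) measurable_const
      fun _ => (one_le_div hθ).2 (hθ1.trans hq.le)
  refine ⟨K * C ^ θ, by finiteness, fun f hf R hR hRt => ?_⟩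
  have hR0 : R ≠ 0 := (zero_le.trans_lt hR).ne'
  have hfR : Measurable fun y => f y / R := hf.div_const R
  have hmod : ∫⁻ y, (f y / R) ^ q ∂μ ≤ 1 := lintegral_div_rpow_le_one_of_luxNorm_lt
    (fun _ => by linarith) ((le_max_right _ _).trans_lt hR)
  have hunit : mixedLux μ s (fun _ => q) (fun y => f y / R) ≤ 1 := by
    simp only [ENNReal.div_eq_inv_mul]
    exact (hNs.const_mul_le (ENNReal.inv_ne_top.2 hR0) f).trans
      ((mul_le_mul_right hR.le _).trans_eq (ENNReal.inv_mul_cancel hR0 hRt))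
  have hmax : mixedLux μ (fun x => s x / θ) (fun _ => q / θ)
      (fun x => maximalFunction μ (fun y => f y / R) x ^ θ) ≤ C ^ θ := by
    rw [mixedLux_rpow _ _ _ hθ]
    simp only [mul_div_cancel₀ _ hθ.ne']
    gcongr
    exact (hCf _ hfR).trans (mul_le_of_le_one_right' hunit)
  have hpt (x : E) : rieszPotential μ σ f x ≤
      R * K * maximalFunction μ (fun y => f y / R) x ^ θ := by
    rw [mul_assoc, ← ENNReal.div_le_iff' hR0 hRt, ← rieszPotential_div σ hf]
    exact hKf _ hfR hmod x
  calc _ ≤ R * K * C ^ θ := (hN.mono_ae (.of_forall hpt)).trans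
        ((hN.const_mul_le (ENNReal.mul_ne_top hRt hK) _).trans (mul_le_mul_right hmax _))
    _ = K * C ^ θ * R := by ring

theorem IsLogHolderExponent.exists_mixedLux_rieszPotential_le [Nontrivial E] {s : E → ℝ}
    {lo hi A κ : ℝ} (h : IsLogHolderExponent s lo hi A κ) (μ : Measure E) [μ.IsAddHaarMeasure]
    (hσ : 0 < σ) (hq : 1 < q) (hσq : σ * q < finrank ℝ E) :
    ∃ C : ℝ≥0∞, C ≠ ∞ ∧ ∀ f : E → ℝ≥0∞, Measurable f →
      mixedLux μ (fun x => s x / (1 - σ * q / finrank ℝ E))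
        (fun _ => q / (1 - σ * q / finrank ℝ E)) (rieszPotential μ σ f)
        ≤ C * mixedLux μ s (fun _ => q) f := by
  obtain ⟨C, hC, hCf⟩ := h.exists_mixedLux_rieszPotential_le_of_lt μ hσ hq hσq
  refine ⟨C + 1, by finiteness, fun f hf => le_const_mul_of_lt_imp_le (by simp) (by finiteness)
    fun R hR hRt => ?_⟩
  exact (hCf f hf R hR hRt).trans (mul_le_mul_left le_self_add _)

end RieszPotential

section StableLaw

open Filter ProbabilityTheory Topology

variable {α lam : ℝ}

/-- The integrand in the representation of `lam ^ α` as a multiple of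
`∫ s in (0, ∞), (1 - e ^ (-s * lam)) * (α * s ^ (-(α + 1)))`. -/
def levyIntegrand (α lam s : ℝ) : ℝ := (1 - Real.exp (-(s * lam))) * (α * s ^ (-(α + 1)))

@[fun_prop]
lemma measurable_levyIntegrand (α lam : ℝ) : Measurable (levyIntegrand α lam) := by
  unfold levyIntegrand
  fun_prop

lemma levyIntegrand_pos (hα : 0 < α) (hlam : 0 < lam) {s : ℝ} (hs : 0 < s) :
    0 < levyIntegrand α lam s :=
  mul_pos (sub_pos.2 (Real.exp_lt_one_iff.2 (neg_neg_of_pos (mul_pos hs hlam)))) (by positivity)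

lemma integrableOn_levyIntegrand (hα : 0 < α) (hα1 : α < 1) (hlam : 0 < lam) :
    IntegrableOn (levyIntegrand α lam) (Ioi 0) := by
  rw [← Ioc_union_Ioi_eq_Ioi zero_le_one]
  refine IntegrableOn.union ?_ ?_
  · have hint : IntegrableOn (fun s : ℝ => lam * α * s ^ (-α)) (Ioc 0 1) :=
      ((intervalIntegrable_iff_integrableOn_Ioc_of_le zero_le_one).1
        (intervalIntegral.intervalIntegrable_rpow' (by linarith))).const_mul _
    refine hint.mono' (by fun_prop) (ae_restrict_of_forall_mem measurableSet_Ioc fun s hs => ?_)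
    have hexp : 1 - Real.exp (-(s * lam)) ≤ s * lam := by
      linarith [Real.add_one_le_exp (-(s * lam))]
    rw [Real.norm_of_nonneg (levyIntegrand_pos hα hlam hs.1).le]
    calc levyIntegrand α lam s ≤ s * lam * (α * s ^ (-(α + 1))) :=
          mul_le_mul_of_nonneg_right hexp (mul_nonneg hα.le (Real.rpow_nonneg hs.1.le _))
      _ = lam * α * (s ^ (-(α + 1)) * s) := by ring
      _ = lam * α * s ^ (-α) := by rw [← Real.rpow_add_one hs.1.ne', neg_add, neg_add_cancel_right]
  · have hint : IntegrableOn (fun s : ℝ => α * s ^ (-(α + 1))) (Ioi 1) :=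
      (integrableOn_Ioi_rpow_of_lt (by linarith) one_pos).const_mul _
    refine hint.mono' (by fun_prop) (ae_restrict_of_forall_mem measurableSet_Ioi fun s hs => ?_)
    have hs0 : 0 < s := one_pos.trans hs
    rw [Real.norm_of_nonneg (levyIntegrand_pos hα hlam hs0).le]
    exact mul_le_of_le_one_left (by positivity) (sub_le_self _ (Real.exp_pos _).le)

lemma integral_levyIntegrand (α : ℝ) (hlam : 0 < lam) :
    ∫ s in Ioi 0, levyIntegrand α lam s = (∫ s in Ioi 0, levyIntegrand α 1 s) * lam ^ α := by
  have hsubst := integral_comp_mul_right_Ioi' (levyIntegrand α 1) 0 hlam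
  rw [zero_mul, smul_eq_mul, ← integral_const_mul] at hsubst
  rw [← hsubst, ← integral_mul_const]
  refine setIntegral_congr_fun measurableSet_Ioi fun s (hs : 0 < s) => ?_
  have hone : lam * lam ^ (-(α + 1)) * lam ^ α = 1 := by
    rw [mul_comm lam, mul_right_comm, ← Real.rpow_add hlam, ← Real.rpow_add_one hlam.ne']
    simp
  simp only [levyIntegrand, Real.mul_rpow hs.le hlam.le, mul_one]
  linear_combination -((1 - Real.exp (-(s * lam))) * (α * s ^ (-(α + 1)))) * hone

lemma integral_levyIntegrand_pos (hα : 0 < α) (hα1 : α < 1) :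
    0 < ∫ s in Ioi 0, levyIntegrand α 1 s := by
  have hpos : ∀ s ∈ Ioi (0 : ℝ), 0 < levyIntegrand α 1 s := fun s => levyIntegrand_pos hα one_pos
  rw [setIntegral_pos_iff_support_of_nonneg_ae
    (ae_restrict_of_forall_mem measurableSet_Ioi fun s hs => (hpos s hs).le)
    (integrableOn_levyIntegrand hα hα1 one_pos),
    inter_eq_right.2 (show Ioi 0 ⊆ Function.support (levyIntegrand α 1) from
      fun s hs => (hpos s hs).ne'), Real.volume_Ioi]
  exact ENNReal.zero_lt_top

lemma tendsto_integral_levyIntegrand (hα : 0 < α) (hα1 : α < 1) {ε : ℕ → ℝ}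
    (hε : Tendsto ε atTop (𝓝 0)) (hε0 : ∀ N, 0 ≤ ε N) (hlam : 0 < lam) :
    Tendsto (fun N => ∫ s in Ioi (ε N), levyIntegrand α lam s) atTop
      (𝓝 ((∫ s in Ioi 0, levyIntegrand α 1 s) * lam ^ α)) := by
  rw [← integral_levyIntegrand α hlam]
  refine ((aecover_Ioi_of_Ioi hε).integral_tendsto_of_countably_generated
    (integrableOn_levyIntegrand hα hα1 hlam)).congr fun N => ?_
  rw [Measure.restrict_restrict measurableSet_Ioi,
    inter_eq_left.2 (Ioi_subset_Ioi (hε0 N))]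

/-- The map `s ↦ e ^ (-|s|)` into the unit interval, by which Laplace transforms become moments on
a compact space. -/
def expNegAbs (s : ℝ) : unitInterval :=
  ⟨Real.exp (-|s|), (Real.exp_pos _).le, Real.exp_le_one_iff.2 (neg_nonpos.2 (abs_nonneg s))⟩

@[fun_prop]
lemma measurable_expNegAbs : Measurable expNegAbs :=
  Measurable.subtype_mk (by fun_prop)

lemma integral_expNegAbs_paretoMeasure (hα : 0 < α) {ε : ℝ} (hε : 0 < ε) (hlam : 0 < lam) :
    ∫ s, (expNegAbs s : ℝ) ^ lam ∂(paretoMeasure ε α) =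
      1 - ε ^ α * ∫ s in Ioi ε, levyIntegrand α lam s := by
  have := isProbabilityMeasure_paretoMeasure hε hα
  have hint : Integrable (fun s => (expNegAbs s : ℝ) ^ lam) (paretoMeasure ε α) := by
    refine Integrable.of_bound (C := 1) ((measurable_subtype_coe.comp
      measurable_expNegAbs).pow_const lam).aestronglyMeasurable (.of_forall fun s => ?_)
    rw [Real.norm_of_nonneg (Real.rpow_nonneg (expNegAbs s).2.1 _)]
    exact Real.rpow_le_one (expNegAbs s).2.1 (expNegAbs s).2.2 hlam.le
  have hdensity (s : ℝ) : (paretoPDF ε α s).toReal • (1 - (expNegAbs s : ℝ) ^ lam) =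
      (Ici ε).indicator (fun s => ε ^ α * levyIntegrand α lam s) s := by
    rcases le_or_gt ε s with hs | hs
    · have hs0 : 0 < s := hε.trans_le hs
      have hexp : (expNegAbs s : ℝ) = Real.exp (-s) :=
        congrArg (fun t => Real.exp (-t)) (abs_of_pos hs0)
      rw [indicator_of_mem (mem_Ici.2 hs), paretoPDF_of_le hs,
        ENNReal.toReal_ofReal (by positivity), hexp, smul_eq_mul, levyIntegrand, ← Real.exp_mul]
      ring_nf
    · rw [indicator_of_notMem (notMem_Ici.2 hs), paretoPDF_of_lt hs, ENNReal.toReal_zero, zero_smul]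
  have hdefect : ∫ s, (1 - (expNegAbs s : ℝ) ^ lam) ∂(paretoMeasure ε α) =
      ε ^ α * ∫ s in Ioi ε, levyIntegrand α lam s := by
    have hpdf : Measurable (paretoPDF ε α) := (measurable_paretoPDFReal ε α).ennreal_ofReal
    rw [paretoMeasure, integral_withDensity_eq_integral_toReal_smul hpdf
      (.of_forall fun s => ENNReal.ofReal_lt_top)]
    simp only [hdensity]
    rw [integral_indicator measurableSet_Ici, integral_Ici_eq_integral_Ioi, integral_const_mul]
  rw [integral_sub (integrable_const _) hint, integral_const, probReal_univ, one_smul] at hdefect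
  linarith

lemma measurable_coe_rpow (lam : ℝ) : Measurable fun z : unitInterval => (z : ℝ) ^ lam :=
  measurable_subtype_coe.pow_const lam

lemma exists_integral_rpow_eq_pow (P : Measure unitInterval) [IsProbabilityMeasure P] (N : ℕ) :
    ∃ m : ProbabilityMeasure unitInterval, ∀ lam : ℝ,
      ∫ z, (z : ℝ) ^ lam ∂(m : Measure unitInterval) = (∫ z, (z : ℝ) ^ lam ∂P) ^ N := by
  have hprod : Measurable fun z : Fin N → unitInterval => ∏ i, z i :=
    Finset.univ.measurable_fun_prod fun i _ => measurable_pi_apply i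
  refine ⟨⟨(Measure.pi fun _ => P).map fun z => ∏ i, z i,
    Measure.isProbabilityMeasure_map hprod.aemeasurable⟩, fun lam => ?_⟩
  have hcoe (z : Fin N → unitInterval) : ((∏ i, z i : unitInterval) : ℝ) ^ lam =
      ∏ i, (z i : ℝ) ^ lam := by
    rw [Real.finsetProd_rpow _ _ fun i _ => (z i).2.1]
    exact congrArg (· ^ lam) (map_prod (Submonoid.subtype unitInterval.submonoid) z _)
  rw [ProbabilityMeasure.coe_mk, integral_map hprod.aemeasurable
    (measurable_coe_rpow lam).aestronglyMeasurable]
  simp only [hcoe]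
  rw [integral_fintype_prod_eq_pow (fun z : unitInterval => (z : ℝ) ^ lam), Fintype.card_fin]

lemma tendsto_integral_expNegAbs_pow (hα : 0 < α) (hα1 : α < 1) (hlam : 0 < lam) :
    Tendsto (fun N : ℕ =>
        (∫ s, (expNegAbs s : ℝ) ^ lam ∂(paretoMeasure ((N : ℝ) ^ (-(1 / α))) α)) ^ N) atTop
      (𝓝 (Real.exp (-((∫ s in Ioi 0, levyIntegrand α 1 s) * lam ^ α)))) := by
  have hε : Tendsto (fun N : ℕ => (N : ℝ) ^ (-(1 / α))) atTop (𝓝 0) :=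
    (tendsto_rpow_neg_atTop (by positivity)).comp tendsto_natCast_atTop_atTop
  have hlevy := tendsto_integral_levyIntegrand hα hα1 hε (fun N => by positivity) hlam
  refine (Real.tendsto_one_add_pow_exp_of_tendsto (g := fun N : ℕ =>
    -((N : ℝ)⁻¹ * ∫ s in Ioi ((N : ℝ) ^ (-(1 / α))), levyIntegrand α lam s))
    (hlevy.neg.congr' ?_)).congr' ?_
  · filter_upwards [eventually_ne_atTop 0] with N hN
    rw [mul_neg, mul_inv_cancel_left₀ (Nat.cast_ne_zero.2 hN)]
  · filter_upwards [eventually_gt_atTop 0] with N hN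
    have hN0 : 0 < (N : ℝ) := Nat.cast_pos.2 hN
    rw [integral_expNegAbs_paretoMeasure hα (by positivity) hlam, ← Real.rpow_mul hN0.le, neg_mul,
      one_div_mul_cancel hα.ne', Real.rpow_neg_one, sub_eq_add_neg]

lemma exists_integral_eq_of_tendsto {X ι : Type*} [TopologicalSpace X] [CompactSpace X] [T2Space X]
    [MeasurableSpace X] [BorelSpace X]
    {φ : ι → X → ℝ} (hφ : ∀ i, Continuous (φ i)) {c : ι → ℝ} (M : ℕ → ProbabilityMeasure X)
    (hM : ∀ i, Tendsto (fun N => ∫ x, φ i x ∂(M N : Measure X)) atTop (𝓝 (c i))) :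
    ∃ m : ProbabilityMeasure X, ∀ i, ∫ x, φ i x ∂(m : Measure X) = c i := by
  obtain ⟨m, -, hm⟩ := isCompact_univ.ultrafilter_le_nhds ((hyperfilter ℕ).map M) (by simp)
  refine ⟨m, fun i => tendsto_nhds_unique ?_ ((hM i).mono_left Nat.hyperfilter_le_atTop)⟩
  exact ProbabilityMeasure.tendsto_iff_forall_integral_tendsto.1
    (show Tendsto M (hyperfilter ℕ : Filter ℕ) (𝓝 m) from hm)
    (BoundedContinuousFunction.mkOfCompact ⟨φ i, hφ i⟩)

lemma exists_probabilityMeasure_integral_rpow_eq (hα : 0 < α) (hα1 : α < 1) :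
    ∃ κ > 0, ∃ m : ProbabilityMeasure unitInterval, ∀ lam : ℝ, 0 < lam →
      ∫ z, (z : ℝ) ^ lam ∂(m : Measure unitInterval) = Real.exp (-(κ * lam ^ α)) := by
  have (N : ℕ) : IsProbabilityMeasure (paretoMeasure ((↑(N + 1) : ℝ) ^ (-(1 / α))) α) :=
    isProbabilityMeasure_paretoMeasure (by positivity) hα
  have (N : ℕ) := Measure.isProbabilityMeasure_map (f := expNegAbs)
    (μ := paretoMeasure ((↑(N + 1) : ℝ) ^ (-(1 / α))) α) measurable_expNegAbs.aemeasurable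
  choose M hM using fun N : ℕ => exists_integral_rpow_eq_pow
    ((paretoMeasure ((↑(N + 1) : ℝ) ^ (-(1 / α))) α).map expNegAbs) (N + 1)
  obtain ⟨m, hm⟩ := exists_integral_eq_of_tendsto
    (φ := fun (lam : Ioi (0 : ℝ)) (z : unitInterval) => (z : ℝ) ^ (lam : ℝ))
    (fun lam => continuous_subtype_val.rpow_const fun _ => Or.inr lam.2.le) M fun lam => by
      simp only [hM, integral_map measurable_expNegAbs.aemeasurable
        (measurable_coe_rpow _).aestronglyMeasurable]
      exact (tendsto_add_atTop_iff_nat 1).2 (tendsto_integral_expNegAbs_pow hα hα1 lam.2)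
  exact ⟨_, integral_levyIntegrand_pos hα hα1, m, fun lam hlam => hm ⟨lam, hlam⟩⟩

lemma integrable_coe_rpow (m : Measure unitInterval) [IsFiniteMeasure m] (hlam : 0 ≤ lam) :
    Integrable (fun z : unitInterval => (z : ℝ) ^ lam) m := by
  refine Integrable.of_bound (C := 1) (measurable_coe_rpow lam).aestronglyMeasurable
    (.of_forall fun z => ?_)
  rw [Real.norm_of_nonneg (Real.rpow_nonneg z.2.1 _)]
  exact Real.rpow_le_one z.2.1 z.2.2 hlam

lemma ae_ne_zero_of_integral_rpow (m : Measure unitInterval) [IsProbabilityMeasure m]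
    (hm : Tendsto (fun lam : ℝ => ∫ z, (z : ℝ) ^ lam ∂m) (𝓝[>] 0) (𝓝 1)) : ∀ᵐ z ∂m, z ≠ 0 := by
  have hle : ∀ lam ∈ Ioi (0 : ℝ), ∫ z, (z : ℝ) ^ lam ∂m ≤ m.real {0}ᶜ := fun lam hlam => by
    rw [← integral_indicator_one (measurableSet_singleton _).compl]
    refine integral_mono (integrable_coe_rpow m (le_of_lt hlam))
      ((integrable_const 1).indicator (measurableSet_singleton _).compl) fun z => ?_
    rcases eq_or_ne z 0 with rfl | hz
    · simp [Real.zero_rpow (ne_of_gt hlam)]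
    · simpa [hz] using Real.rpow_le_one z.2.1 z.2.2 (le_of_lt hlam)
  have hone : m.real {0}ᶜ = 1 :=
    measureReal_le_one.antisymm (le_of_tendsto hm (eventually_mem_nhdsWithin.mono hle))
  exact (mem_ae_iff_prob_eq_one (measurableSet_singleton _).compl).2
    ((ENNReal.toReal_eq_one_iff _).1 hone)

lemma ae_ne_one_of_integral_rpow (m : Measure unitInterval) [IsFiniteMeasure m]
    (hm : Tendsto (fun lam : ℝ => ∫ z, (z : ℝ) ^ lam ∂m) atTop (𝓝 0)) : ∀ᵐ z ∂m, z ≠ 1 := by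
  have hle : ∀ lam ∈ Ici (0 : ℝ), m.real {1} ≤ ∫ z, (z : ℝ) ^ lam ∂m := fun lam hlam => by
    rw [← integral_indicator_one (measurableSet_singleton _)]
    refine integral_mono ((integrable_const 1).indicator (measurableSet_singleton _))
      (integrable_coe_rpow m hlam) fun z => ?_
    rcases eq_or_ne z 1 with rfl | hz
    · simp
    · simpa [hz] using Real.rpow_nonneg z.2.1 lam
  have hzero : m.real {1} = 0 :=
    (ge_of_tendsto hm (eventually_ge_atTop 0 |>.mono hle)).antisymm measureReal_nonneg
  exact compl_mem_ae_iff.2 ((measureReal_eq_zero_iff).1 hzero)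

/-- The one-sided `α`-stable law, which subordinates the fractional heat semigroup to the heat
semigroup. -/
structure IsStableLaw (α : ℝ) (μ : Measure ℝ) : Prop where
  isProbabilityMeasure : IsProbabilityMeasure μ
  ae_pos : ∀ᵐ s ∂μ, 0 < s
  laplace : ∀ lam : ℝ, 0 ≤ lam → ∫ s, Real.exp (-(s * lam)) ∂μ = Real.exp (-(lam ^ α))

theorem exists_isStableLaw (hα : 0 < α) (hα1 : α ≤ 1) : ∃ μ, IsStableLaw α μ := by
  rcases hα1.eq_or_lt with rfl | hα1
  · exact ⟨Measure.dirac 1, ⟨inferInstance, by simp [ae_dirac_eq], fun lam _ => by simp⟩⟩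
  obtain ⟨κ, hκ, m, hm⟩ := exists_probabilityMeasure_integral_rpow_eq hα hα1
  have hzero : ∀ᵐ z ∂(m : Measure unitInterval), z ≠ 0 := by
    refine ae_ne_zero_of_integral_rpow _ (Tendsto.congr'
      (eventually_mem_nhdsWithin.mono fun lam hlam => (hm lam hlam).symm) ?_)
    have hcont : Continuous fun lam : ℝ => Real.exp (-(κ * lam ^ α)) := by
      fun_prop (disch := exact hα.le)
    simpa [Real.zero_rpow hα.ne'] using (hcont.tendsto 0).mono_left nhdsWithin_le_nhds
  have hone : ∀ᵐ z ∂(m : Measure unitInterval), z ≠ 1 :=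
    ae_ne_one_of_integral_rpow _ (Tendsto.congr'
      ((eventually_gt_atTop 0).mono fun lam hlam => (hm lam hlam).symm)
      (Real.tendsto_exp_neg_atTop_nhds_zero.comp ((tendsto_rpow_atTop hα).const_mul_atTop hκ)))
  have hpos : ∀ᵐ z : unitInterval ∂(m : Measure unitInterval), 0 < (z : ℝ) :=
    hzero.mono fun z hz => unitInterval.pos_iff_ne_zero.2 hz
  have hφ : Measurable fun z : unitInterval => -Real.log z * κ ^ (-(1 / α)) := by fun_prop
  refine ⟨(m : Measure unitInterval).map fun z : unitInterval => -Real.log z * κ ^ (-(1 / α)),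
    ⟨Measure.isProbabilityMeasure_map hφ.aemeasurable, ?_, fun lam hlam => ?_⟩⟩
  · rw [ae_map_iff hφ.aemeasurable measurableSet_Ioi]
    filter_upwards [hpos, hone] with z hz0 hz1
    exact mul_pos (neg_pos.2 (Real.log_neg hz0 (unitInterval.lt_one_iff_ne_one.2 hz1)))
      (by positivity)
  · rw [integral_map hφ.aemeasurable (by exact Measurable.aestronglyMeasurable (by fun_prop))]
    rcases hlam.eq_or_lt with rfl | hlam
    · simp [Real.zero_rpow hα.ne']
    have hscale : κ * (κ ^ (-(1 / α)) * lam) ^ α = lam ^ α := by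
      rw [Real.mul_rpow (by positivity) hlam.le, ← Real.rpow_mul hκ.le, neg_mul,
        one_div_mul_cancel hα.ne', Real.rpow_neg_one, mul_inv_cancel_left₀ hκ.ne']
    rw [← hscale, ← hm _ (by positivity)]
    refine integral_congr_ae (hpos.mono fun z hz => ?_)
    simp only [Real.rpow_def_of_pos hz]
    ring_nf

namespace IsStableLaw

variable {μ : Measure ℝ}

-- Tonelli's theorem applied to `Γ(k) s ^ (-k) = ∫ lam in (0, ∞), lam ^ (k - 1) e ^ (-s * lam)`.
lemma gamma_mul_lintegral_rpow_neg (h : IsStableLaw α μ) {k : ℝ} (hk : 0 < k) :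
    ENNReal.ofReal (Real.Gamma k) * ∫⁻ s, ENNReal.ofReal (s ^ (-k)) ∂μ =
      ∫⁻ lam in Ioi 0, ENNReal.ofReal (lam ^ (k - 1) * Real.exp (-(lam ^ α))) := by
  have := h.isProbabilityMeasure
  have hgamma : ∀ᵐ s ∂μ, ENNReal.ofReal (Real.Gamma k) * ENNReal.ofReal (s ^ (-k)) =
      ∫⁻ lam in Ioi 0, ENNReal.ofReal (lam ^ (k - 1) * Real.exp (-(s * lam))) := by
    filter_upwards [h.ae_pos] with s hs
    have hval := Real.integral_rpow_mul_exp_neg_mul_Ioi hk hs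
    have hint : IntegrableOn (fun lam => lam ^ (k - 1) * Real.exp (-(s * lam))) (Ioi 0) :=
      .of_integral_ne_zero (hval ▸ (mul_pos (by positivity) (Real.Gamma_pos_of_pos hk)).ne')
    rw [← ofReal_integral_eq_lintegral_ofReal hint (ae_restrict_of_forall_mem measurableSet_Ioi
      fun lam (hlam : 0 < lam) => by positivity), hval,
      ← ENNReal.ofReal_mul (Real.Gamma_pos_of_pos hk).le, one_div, Real.inv_rpow hs.le,
      Real.rpow_neg hs.le, mul_comm]
  rw [← lintegral_const_mul' _ _ ENNReal.ofReal_ne_top, lintegral_congr_ae hgamma,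
    lintegral_lintegral_swap (by fun_prop)]
  refine setLIntegral_congr_fun measurableSet_Ioi fun lam (hlam : 0 < lam) => ?_
  have hint : Integrable (fun s => Real.exp (-(s * lam))) μ :=
    .of_integral_ne_zero (h.laplace lam hlam.le ▸ (Real.exp_pos _).ne')
  rw [← ofReal_integral_eq_lintegral_ofReal (hint.const_mul _)
    (.of_forall fun s => by positivity), integral_const_mul, h.laplace lam hlam.le]

lemma lintegral_rpow_neg_ne_top (h : IsStableLaw α μ) (hα : 0 < α) {k : ℝ} (hk : 0 ≤ k) :
    ∫⁻ s, ENNReal.ofReal (s ^ (-k)) ∂μ ≠ ∞ := by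
  have := h.isProbabilityMeasure
  rcases hk.eq_or_lt with rfl | hk
  · simp
  have hint := integrableOn_rpow_mul_exp_neg_rpow (p := α) (s := k - 1) (by linarith) hα
  refine fun htop => (gamma_mul_lintegral_rpow_neg h hk ▸ hint.lintegral_lt_top).ne ?_
  rw [htop, ENNReal.mul_top (ENNReal.ofReal_pos.2 (Real.Gamma_pos_of_pos hk)).ne']

lemma integrable_rpow_neg (h : IsStableLaw α μ) (hα : 0 < α) {k : ℝ} (hk : 0 ≤ k) :
    Integrable (fun s => s ^ (-k)) μ :=
  (lintegral_ofReal_ne_top_iff_integrable (by fun_prop)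
    (h.ae_pos.mono fun _ hs => Real.rpow_nonneg hs.le _)).1 (h.lintegral_rpow_neg_ne_top hα hk)

end IsStableLaw

end StableLaw

section GaussianKernel

open Filter Module Real Topology

variable {V : Type*} [NormedAddCommGroup V] [InnerProductSpace ℝ V]

/-- The Gauss kernel, i.e. the inverse Fourier transform of `ξ ↦ exp (-s‖ξ‖²)`. -/
def gaussianKernel (s : ℝ) (x : V) : ℝ :=
  (π / s) ^ ((finrank ℝ V : ℝ) / 2) * rexp (-(π ^ 2 / s) * ‖x‖ ^ 2)

/-- The differential of the Gauss kernel. -/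
def gaussianKernelDeriv (s : ℝ) (x : V) : V →L[ℝ] ℝ :=
  (-(2 * (π ^ 2 / s) * gaussianKernel s x)) • innerSL ℝ x

lemma gaussianKernel_nonneg {s : ℝ} (hs : 0 ≤ s) (x : V) : 0 ≤ gaussianKernel s x := by
  unfold gaussianKernel
  positivity

lemma gaussianKernel_le {s : ℝ} (hs : 0 ≤ s) (x : V) :
    gaussianKernel s x ≤ (π / s) ^ ((finrank ℝ V : ℝ) / 2) :=
  mul_le_of_le_one_right (by positivity) (exp_le_one_iff.2
    (by rw [neg_mul, neg_nonpos]; positivity))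

lemma hasFDerivAt_gaussianKernel (s : ℝ) (x : V) :
    HasFDerivAt (gaussianKernel s) (gaussianKernelDeriv s x) x := by
  refine (((hasStrictFDerivAt_norm_sq x).hasFDerivAt.const_mul (-(π ^ 2 / s))).exp.const_mul
    ((π / s) ^ ((finrank ℝ V : ℝ) / 2))).congr_fderiv ?_
  ext y
  simp [gaussianKernelDeriv, gaussianKernel]
  ring

section Measurability

variable [MeasurableSpace V] [BorelSpace V] {X : Type*} [MeasurableSpace X]

@[fun_prop]
lemma measurable_gaussianKernel {σ : X → ℝ} {f : X → V} (hσ : Measurable σ)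
    (hf : Measurable f) : Measurable fun a => gaussianKernel (σ a) (f a) := by
  unfold gaussianKernel
  fun_prop

lemma stronglyMeasurable_gaussianKernelDeriv [FiniteDimensional ℝ V] {σ : X → ℝ} {f : X → V}
    (hσ : Measurable σ) (hf : Measurable f) :
    StronglyMeasurable fun a => gaussianKernelDeriv (σ a) (f a) := by
  unfold gaussianKernelDeriv
  have hcoeff : Measurable fun a => -(2 * (π ^ 2 / σ a) * gaussianKernel (σ a) (f a)) := by
    fun_prop
  exact hcoeff.stronglyMeasurable.smul ((innerSL ℝ).continuous.comp_stronglyMeasurable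
    hf.stronglyMeasurable)

end Measurability

section Integral

variable [FiniteDimensional ℝ V] [MeasurableSpace V] [BorelSpace V]

lemma fourierInv_exp_neg_mul_norm_sq {s : ℝ} (hs : 0 < s) (x : V) :
    𝓕⁻ (fun ξ : V => (rexp (-s * ‖ξ‖ ^ 2) : ℂ)) x = gaussianKernel s x := by
  have hcast : (fun ξ : V => (rexp (-s * ‖ξ‖ ^ 2) : ℂ)) =
      fun ξ => Complex.exp (-(s : ℂ) * (‖ξ‖ : ℂ) ^ 2) := by
    funext ξ
    push_cast
    rfl
  rw [fourierInv_eq_fourier_neg, hcast,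
    fourier_gaussian_innerProductSpace (b := (s : ℂ)) (by simpa using hs), gaussianKernel, norm_neg,
    Complex.ofReal_mul, Complex.ofReal_cpow (by positivity)]
  push_cast
  ring_nf

lemma integrable_exp_neg_mul_norm_sq {s : ℝ} (hs : 0 < s) :
    Integrable fun x : V => rexp (-s * ‖x‖ ^ 2) :=
  .of_integral_ne_zero (by
    rw [GaussianFourier.integral_rexp_neg_mul_sq_norm hs]
    positivity)

lemma lintegral_gaussianKernel {s : ℝ} (hs : 0 < s) :
    ∫⁻ x : V, ENNReal.ofReal (gaussianKernel s x) = 1 := by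
  have hs' : 0 < π ^ 2 / s := by positivity
  have hint : Integrable (gaussianKernel s : V → ℝ) :=
    (integrable_exp_neg_mul_norm_sq hs').const_mul _
  have hcancel : π / s * (π / (π ^ 2 / s)) = 1 := by field_simp
  rw [← ofReal_integral_eq_lintegral_ofReal hint (.of_forall (gaussianKernel_nonneg hs.le))]
  simp only [gaussianKernel]
  rw [integral_const_mul,
    GaussianFourier.integral_rexp_neg_mul_sq_norm hs', ← mul_rpow (by positivity) (by positivity),
    hcancel, one_rpow, ENNReal.ofReal_one]

lemma ofReal_exp_neg_mul_sq_eq_lintegral_Ioi {a r : ℝ} (ha : 0 < a) (hr : 0 ≤ r) :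
    ENNReal.ofReal (rexp (-a * r ^ 2)) =
      ∫⁻ ρ in Ioi r, ENNReal.ofReal (2 * a * ρ * rexp (-a * ρ ^ 2)) := by
  have hderiv : ∀ ρ ∈ Ici r, HasDerivAt (fun ρ => rexp (-a * ρ ^ 2))
      (-(2 * a * ρ * rexp (-a * ρ ^ 2))) ρ := by
    intro ρ _
    refine ((hasDerivAt_pow 2 ρ).const_mul (-a)).exp.congr_deriv ?_
    simp only [Nat.cast_ofNat, Nat.add_one_sub_one, pow_one]
    ring
  have hnonneg : ∀ ρ ∈ Ioi r, 0 ≤ 2 * a * ρ * rexp (-a * ρ ^ 2) := fun ρ hρ => by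
    have : 0 ≤ ρ := hr.trans (le_of_lt hρ)
    positivity
  have hneg : ∀ ρ ∈ Ioi r, -(2 * a * ρ * rexp (-a * ρ ^ 2)) ≤ 0 := fun ρ hρ =>
    neg_nonpos.2 (hnonneg ρ hρ)
  have hlim : Tendsto (fun ρ => rexp (-a * ρ ^ 2)) atTop (𝓝 0) := by
    simp only [neg_mul]
    exact tendsto_exp_neg_atTop_nhds_zero.comp
      ((tendsto_pow_atTop two_ne_zero).const_mul_atTop ha)
  have hint := (integrableOn_Ioi_deriv_of_nonpos' hderiv hneg hlim).neg
  have hval := integral_Ioi_of_hasDerivAt_of_nonpos' hderiv hneg hlim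
  simp only [Pi.neg_def, neg_neg] at hint
  rw [integral_neg, zero_sub, neg_inj] at hval
  rw [← ofReal_integral_eq_lintegral_ofReal hint
    (ae_restrict_of_forall_mem measurableSet_Ioi hnonneg), hval]

lemma lintegral_gaussianKernel_mul_le_maximalFunction {s : ℝ} (hs : 0 < s) {f : V → ℝ≥0∞}
    (hf : Measurable f) (x : V) :
    ∫⁻ y, ENNReal.ofReal (gaussianKernel s (x - y)) * f y ≤ maximalFunction volume f x := by
  have hradial (z : V) : ENNReal.ofReal (gaussianKernel s z) =
      ∫⁻ ρ in Ioi ‖z‖, ENNReal.ofReal ((π / s) ^ ((finrank ℝ V : ℝ) / 2)) *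
        ENNReal.ofReal (2 * (π ^ 2 / s) * ρ * rexp (-(π ^ 2 / s) * ρ ^ 2)) := by
    rw [lintegral_const_mul _ (by fun_prop),
      ← ofReal_exp_neg_mul_sq_eq_lintegral_Ioi (by positivity) (norm_nonneg z),
      ← ENNReal.ofReal_mul (by positivity), gaussianKernel]
  simp only [hradial]
  refine (lintegral_radial_mul_le_maximalFunction (by fun_prop) hf x).trans_eq ?_
  simp only [← hradial, lintegral_gaussianKernel hs, one_mul]

end Integral

lemma rpow_mul_exp_neg_le {k x : ℝ} (hk : 0 < k) (hx : 0 ≤ x) : x ^ k * rexp (-x) ≤ k ^ k := by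
  have hle : (x / k) ^ k ≤ rexp x := by
    refine (rpow_le_rpow (by positivity) ((le_add_of_nonneg_right zero_le_one).trans
      (add_one_le_exp (x / k))) hk.le).trans_eq ?_
    rw [← exp_mul, div_mul_cancel₀ _ hk.ne']
  rwa [div_rpow hx hk.le, div_le_iff₀ (by positivity), mul_comm, ← div_le_iff₀ (exp_pos x),
    div_eq_mul_inv, ← exp_neg] at hle

lemma rpow_neg_mul_exp_neg_div_le {k s a : ℝ} (hk : 0 < k) (hs : 0 < s) (ha : 0 ≤ a) :
    s ^ (-k) * rexp (-(a / s)) ≤ max 1 (k ^ k) * max s a ^ (-k) := by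
  rcases le_total a s with has | hsa
  · rw [max_eq_left has, mul_comm]
    gcongr
    exact (exp_le_one_iff.2 (neg_nonpos.2 (by positivity))).trans (le_max_left _ _)
  · have ha0 : 0 < a := hs.trans_le hsa
    have hsplit : s ^ (-k) = a ^ (-k) * (a / s) ^ k := by
      rw [div_rpow ha hs.le, rpow_neg hs.le, rpow_neg ha]
      field_simp
    calc s ^ (-k) * rexp (-(a / s)) = ((a / s) ^ k * rexp (-(a / s))) * a ^ (-k) := by
          rw [hsplit]; ring
      _ ≤ max 1 (k ^ k) * max s a ^ (-k) := by
          rw [max_eq_right hsa]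
          gcongr
          exact (rpow_mul_exp_neg_le hk (by positivity)).trans (le_max_right _ _)

lemma norm_gaussianKernelDeriv {s : ℝ} (hs : 0 < s) (x : V) :
    ‖gaussianKernelDeriv s x‖ = 2 * π * π ^ ((finrank ℝ V : ℝ) / 2 + 1) * ‖x‖ *
      (s ^ (-((finrank ℝ V : ℝ) / 2 + 1)) * rexp (-(π ^ 2 / s) * ‖x‖ ^ 2)) := by
  have := gaussianKernel_nonneg hs.le x
  rw [gaussianKernelDeriv, norm_smul, innerSL_apply_norm, norm_neg, norm_of_nonneg (by positivity),
    gaussianKernel, div_rpow pi_pos.le hs.le, rpow_neg hs.le, rpow_add_one pi_pos.ne',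
    rpow_add_one hs.ne']
  field_simp

variable (V) in
lemma exists_norm_gaussianKernelDeriv_le : ∃ C > 0, ∀ s > 0, ∀ x : V,
    ‖gaussianKernelDeriv s x‖ ≤ C * ‖x‖ * max s (‖x‖ ^ 2) ^ (-((finrank ℝ V : ℝ) / 2 + 1)) := by
  set k := (finrank ℝ V : ℝ) / 2 + 1
  have hk : 0 < k := by positivity
  refine ⟨2 * π * π ^ k * max 1 (k ^ k), by positivity, fun s hs x => ?_⟩
  have hexp : rexp (-(π ^ 2 / s) * ‖x‖ ^ 2) ≤ rexp (-(‖x‖ ^ 2 / s)) := by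
    rw [exp_le_exp, neg_mul, neg_le_neg_iff, div_mul_eq_mul_div]
    gcongr
    exact le_mul_of_one_le_left (by positivity) (one_le_pow₀ (by linarith [pi_gt_three]))
  calc ‖gaussianKernelDeriv s x‖
      = 2 * π * π ^ k * ‖x‖ * (s ^ (-k) * rexp (-(π ^ 2 / s) * ‖x‖ ^ 2)) :=
        norm_gaussianKernelDeriv hs x
    _ ≤ 2 * π * π ^ k * ‖x‖ * (s ^ (-k) * rexp (-(‖x‖ ^ 2 / s))) := by gcongr
    _ ≤ 2 * π * π ^ k * ‖x‖ * (max 1 (k ^ k) * max s (‖x‖ ^ 2) ^ (-k)) := by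
        refine mul_le_mul_of_nonneg_left ?_ (by positivity)
        exact rpow_neg_mul_exp_neg_div_le hk hs (by positivity)
    _ = 2 * π * π ^ k * max 1 (k ^ k) * ‖x‖ * max s (‖x‖ ^ 2) ^ (-k) := by ring

end GaussianKernel

section Subordination

open Module Real

variable {V : Type*} [NormedAddCommGroup V] [InnerProductSpace ℝ V]

/-- The mixture of the Gauss kernels of parameters `τ * s`, with `s` distributed according to `μ`.
For the stable law `μ` of index `α` and `τ = t ^ (1 / α)` this is the fractional heat kernel at
time `t`. -/
def subordinatedKernel (μ : Measure ℝ) (τ : ℝ) (x : V) : ℝ := ∫ s, gaussianKernel (τ * s) x ∂μ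

/-- The mixture of the differentials of the Gauss kernels, i.e. the differential of
`subordinatedKernel` for the measures `μ` considered here. -/
def subordinatedKernelDeriv (μ : Measure ℝ) (τ : ℝ) (x : V) : V →L[ℝ] ℝ :=
  ∫ s, gaussianKernelDeriv (τ * s) x ∂μ

section Measurability

variable [MeasurableSpace V] [BorelSpace V] {X : Type*} [MeasurableSpace X] {μ : Measure ℝ}
  [SFinite μ] {τ : X → ℝ} {f : X → V}

lemma measurable_subordinatedKernel (hτ : Measurable τ) (hf : Measurable f) :
    Measurable fun a => subordinatedKernel μ (τ a) (f a) :=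
  (Measurable.stronglyMeasurable (f := fun q : X × ℝ => gaussianKernel (τ q.1 * q.2) (f q.1))
    (by fun_prop)).integral_prod_right'.measurable

lemma stronglyMeasurable_subordinatedKernelDeriv [FiniteDimensional ℝ V] (hτ : Measurable τ)
    (hf : Measurable f) : StronglyMeasurable fun a => subordinatedKernelDeriv μ (τ a) (f a) :=
  (stronglyMeasurable_gaussianKernelDeriv (σ := fun q : X × ℝ => τ q.1 * q.2)
    (f := fun q : X × ℝ => f q.1) (by fun_prop) (by fun_prop)).integral_prod_right'

end Measurability

namespace IsStableLaw

variable {α : ℝ} {μ : Measure ℝ} {τ : ℝ}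

lemma integrable_pi_div_rpow (h : IsStableLaw α μ) (hα : 0 < α) (hτ : 0 < τ) {k : ℝ}
    (hk : 0 ≤ k) : Integrable (fun s => (π / (τ * s)) ^ k) μ := by
  refine ((h.integrable_rpow_neg hα hk).const_mul ((π / τ) ^ k)).congr ?_
  filter_upwards [h.ae_pos] with s hs
  rw [rpow_neg hs.le, ← div_eq_mul_inv, ← div_rpow (by positivity) hs.le, div_div]

lemma exp_neg_mul_rpow_eq_integral (h : IsStableLaw α μ) (hα : 0 < α) {t : ℝ} (ht : 0 < t) {r : ℝ}
    (hr : 0 ≤ r) :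
    rexp (-t * r ^ (2 * α)) = ∫ s, rexp (-(t ^ (1 / α) * s) * r ^ 2) ∂μ := by
  have hlaplace := h.laplace (t ^ (1 / α) * r ^ 2) (by positivity)
  rw [mul_rpow (by positivity) (by positivity), ← rpow_mul ht.le, one_div_mul_cancel hα.ne',
    rpow_one, ← rpow_natCast, ← rpow_mul hr, Nat.cast_ofNat] at hlaplace
  rw [neg_mul, ← hlaplace]
  congr 1 with s
  rw [rpow_two]
  ring_nf

variable (V) in
lemma exists_integrable_bound_gaussianKernelDeriv (h : IsStableLaw α μ) (hα : 0 < α)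
    (hτ : 0 < τ) (R : ℝ) : ∃ bound : ℝ → ℝ, Integrable bound μ ∧
      ∀ᵐ s ∂μ, ∀ z : V, ‖z‖ ≤ R → ‖gaussianKernelDeriv (τ * s) z‖ ≤ bound s := by
  obtain ⟨C, hC, hbound⟩ := exists_norm_gaussianKernelDeriv_le V
  set k := (finrank ℝ V : ℝ) / 2 + 1
  refine ⟨fun s => C * R * τ ^ (-k) * s ^ (-k),
    (h.integrable_rpow_neg hα (by positivity)).const_mul _, ?_⟩
  filter_upwards [h.ae_pos] with s hs z hz
  calc ‖gaussianKernelDeriv (τ * s) z‖ ≤ C * ‖z‖ * max (τ * s) (‖z‖ ^ 2) ^ (-k) :=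
        hbound _ (by positivity) z
    _ ≤ C * R * (τ * s) ^ (-k) := by
        have hR : 0 ≤ R := (norm_nonneg z).trans hz
        have hanti : max (τ * s) (‖z‖ ^ 2) ^ (-k) ≤ (τ * s) ^ (-k) :=
          rpow_le_rpow_of_nonpos (by positivity) (le_max_left _ _) (neg_nonpos.2 (by positivity))
        gcongr
    _ = C * R * τ ^ (-k) * s ^ (-k) := by rw [mul_rpow hτ.le hs.le]; ring

variable [MeasurableSpace V] [BorelSpace V]

lemma integrable_gaussianKernel (h : IsStableLaw α μ) (hα : 0 < α) (hτ : 0 < τ) (x : V) :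
    Integrable (fun s => gaussianKernel (τ * s) x) μ := by
  refine (h.integrable_pi_div_rpow hα hτ (k := (finrank ℝ V : ℝ) / 2) (by positivity)).mono'
    (Measurable.aestronglyMeasurable (by fun_prop)) ?_
  filter_upwards [h.ae_pos] with s hs
  rw [norm_of_nonneg (gaussianKernel_nonneg (by positivity) x)]
  exact gaussianKernel_le (by positivity) x

variable [FiniteDimensional ℝ V]

lemma integrable_fourierChar_smul_exp (h : IsStableLaw α μ) (hα : 0 < α) (hτ : 0 < τ) (x : V) :
    Integrable (fun q : V × ℝ => fourierChar (inner ℝ q.1 x) •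
      (rexp (-(τ * q.2) * ‖q.1‖ ^ 2) : ℂ)) (volume.prod μ) := by
  have := h.isProbabilityMeasure
  have hmeas : AEStronglyMeasurable (fun q : V × ℝ => rexp (-(τ * q.2) * ‖q.1‖ ^ 2))
      (volume.prod μ) := by fun_prop
  have hexp : Integrable (fun q : V × ℝ => rexp (-(τ * q.2) * ‖q.1‖ ^ 2)) (volume.prod μ) := by
    refine (integrable_prod_iff' hmeas).2 ⟨?_, ?_⟩
    · filter_upwards [h.ae_pos] with s hs
      exact integrable_exp_neg_mul_norm_sq (by positivity)
    · refine (h.integrable_pi_div_rpow hα hτ (k := (finrank ℝ V : ℝ) / 2) (by positivity)).congr ?_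
      filter_upwards [h.ae_pos] with s hs
      simp only [norm_of_nonneg (exp_nonneg _)]
      rw [GaussianFourier.integral_rexp_neg_mul_sq_norm (by positivity)]
  simp only [Circle.smul_def]
  refine hexp.ofReal.bdd_smul (𝕜 := ℂ) 1 ?_ (.of_forall fun q => (Circle.norm_coe _).le)
  exact (continuous_subtype_val.comp (continuous_fourierChar.comp
    (by fun_prop : Continuous fun q : V × ℝ => inner ℝ q.1 x))).aestronglyMeasurable

theorem fourierInv_exp_neg_mul_norm_rpow (h : IsStableLaw α μ) (hα : 0 < α) {t : ℝ} (ht : 0 < t)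
    (x : V) : 𝓕⁻ (fun ξ : V => (rexp (-t * ‖ξ‖ ^ (2 * α)) : ℂ)) x =
      subordinatedKernel μ (t ^ (1 / α)) x := by
  have := h.isProbabilityMeasure
  have hτ : 0 < t ^ (1 / α) := by positivity
  have hmix (ξ : V) : fourierChar (inner ℝ ξ x) • (rexp (-t * ‖ξ‖ ^ (2 * α)) : ℂ) =
      ∫ s, fourierChar (inner ℝ ξ x) • (rexp (-(t ^ (1 / α) * s) * ‖ξ‖ ^ 2) : ℂ) ∂μ := by
    simp only [Circle.smul_def]
    rw [integral_smul, h.exp_neg_mul_rpow_eq_integral hα ht (norm_nonneg ξ),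
      integral_complex_ofReal]
  have hgauss : ∀ᵐ s ∂μ, ∫ ξ : V, fourierChar (inner ℝ ξ x) •
      (rexp (-(t ^ (1 / α) * s) * ‖ξ‖ ^ 2) : ℂ) =
        (gaussianKernel (t ^ (1 / α) * s) x : ℂ) := by
    filter_upwards [h.ae_pos] with s hs
    rw [← fourierInv_exp_neg_mul_norm_sq (by positivity), fourierInv_eq]
  rw [fourierInv_eq, integral_congr_ae (.of_forall hmix),
    integral_integral_swap (h.integrable_fourierChar_smul_exp hα hτ x), integral_congr_ae hgauss,
    integral_complex_ofReal, subordinatedKernel]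

lemma lintegral_subordinatedKernel_mul_le_maximalFunction (h : IsStableLaw α μ) (hτ : 0 < τ)
    {f : V → ℝ≥0∞} (hf : Measurable f) (x : V) :
    ∫⁻ y, ‖subordinatedKernel μ τ (x - y)‖ₑ * f y ≤ maximalFunction volume f x := by
  have := h.isProbabilityMeasure
  calc ∫⁻ y, ‖subordinatedKernel μ τ (x - y)‖ₑ * f y
      ≤ ∫⁻ y, (∫⁻ s, ‖gaussianKernel (τ * s) (x - y)‖ₑ ∂μ) * f y := by
        gcongr
        exact enorm_integral_le_lintegral_enorm _
    _ = ∫⁻ y, ∫⁻ s, ‖gaussianKernel (τ * s) (x - y)‖ₑ * f y ∂μ :=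
        lintegral_congr fun y => (lintegral_mul_const _ (by fun_prop)).symm
    _ = ∫⁻ s, (∫⁻ y, ‖gaussianKernel (τ * s) (x - y)‖ₑ * f y) ∂μ :=
        lintegral_lintegral_swap (by fun_prop)
    _ ≤ ∫⁻ _, maximalFunction volume f x ∂μ := by
        refine lintegral_mono_ae (h.ae_pos.mono fun s hs => ?_)
        have hτs : 0 < τ * s := mul_pos hτ hs
        simp only [Real.enorm_of_nonneg (gaussianKernel_nonneg hτs.le _)]
        exact lintegral_gaussianKernel_mul_le_maximalFunction hτs hf x
    _ = maximalFunction volume f x := by simp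

lemma hasFDerivAt_subordinatedKernel (h : IsStableLaw α μ) (hα : 0 < α) (hτ : 0 < τ) (x : V) :
    HasFDerivAt (subordinatedKernel μ τ) (subordinatedKernelDeriv μ τ x) x := by
  obtain ⟨bound, hint, hbound⟩ := h.exists_integrable_bound_gaussianKernelDeriv V hα hτ (‖x‖ + 1)
  refine hasFDerivAt_integral_of_dominated_of_fderiv_le (Metric.ball_mem_nhds x one_pos)
    (.of_forall fun z => Measurable.aestronglyMeasurable (by fun_prop))
    (h.integrable_gaussianKernel hα hτ x)
    (stronglyMeasurable_gaussianKernelDeriv (by fun_prop) measurable_const).aestronglyMeasurable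
    (hbound.mono fun s hs z hz => hs z ?_) hint
    (.of_forall fun s z _ => hasFDerivAt_gaussianKernel (τ * s) z)
  have hzx : ‖z - x‖ < 1 := mem_ball_iff_norm.1 hz
  linarith [norm_le_norm_add_norm_sub' z x]

end IsStableLaw

lemma lintegral_max_rpow_Ioi {α s A k : ℝ} (hα : 0 < α) (hs : 0 < s) (hA : 0 < A) (hk : α < k) :
    ∫⁻ t in Ioi 0, ENNReal.ofReal (max (t ^ (1 / α) * s) A ^ (-k)) =
      ENNReal.ofReal (k / (k - α) * A ^ (α - k) * s ^ (-α)) := by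
  set t₀ := (A / s) ^ α with ht₀def
  have ht₀ : 0 < t₀ := by positivity
  have hroot : t₀ ^ (1 / α) * s = A := by
    rw [ht₀def, ← rpow_mul (by positivity), mul_one_div_cancel hα.ne', rpow_one,
      div_mul_cancel₀ _ hs.ne']
  have hkα : 0 < k - α := sub_pos.2 hk
  have hexponent : -(k / α) + 1 = -((k - α) / α) := by field_simp; ring
  have hsmall : ∫⁻ t in Ioc 0 t₀, ENNReal.ofReal (max (t ^ (1 / α) * s) A ^ (-k)) =
      ENNReal.ofReal (A ^ (α - k) * s ^ (-α)) := by
    have hmax : ∀ t ∈ Ioc 0 t₀, max (t ^ (1 / α) * s) A = A := fun t ht =>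
      max_eq_right (hroot ▸ by have := ht.1.le; gcongr; exact ht.2)
    rw [setLIntegral_congr_fun measurableSet_Ioc fun t ht => by rw [hmax t ht], setLIntegral_const,
      volume_Ioc, sub_zero, ← ENNReal.ofReal_mul (by positivity), ht₀def, div_rpow hA.le hs.le,
      rpow_neg hs.le, sub_eq_neg_add, rpow_add hA, div_eq_mul_inv, mul_assoc]
  have hlarge : ∫⁻ t in Ioi t₀, ENNReal.ofReal (max (t ^ (1 / α) * s) A ^ (-k)) =
      ENNReal.ofReal (α / (k - α) * (A ^ (α - k) * s ^ (-α))) := by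
    have hmax : ∀ t ∈ Ioi t₀, ENNReal.ofReal (max (t ^ (1 / α) * s) A ^ (-k)) =
        ENNReal.ofReal (s ^ (-k)) * ENNReal.ofReal (t ^ (-(k / α))) := fun t (ht : t₀ < t) => by
      have ht0 : 0 < t := ht₀.trans ht
      rw [max_eq_left (hroot ▸ by gcongr), mul_rpow (by positivity) hs.le, ← rpow_mul ht0.le,
        ← ENNReal.ofReal_mul (by positivity), mul_comm]
      ring_nf
    rw [setLIntegral_congr_fun measurableSet_Ioi hmax, lintegral_const_mul _ (by fun_prop),
      lintegral_rpow_Ioi (neg_lt_neg ((one_lt_div hα).2 hk)) ht₀,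
      ← ENNReal.ofReal_mul (by positivity), ht₀def, ← rpow_mul (by positivity), hexponent,
      show α * -((k - α) / α) = α - k by field_simp; ring,
      div_rpow hA.le hs.le, rpow_sub hs, rpow_neg hs.le, rpow_neg hs.le]
    congr 1
    field_simp
  rw [← Ioc_union_Ioi_eq_Ioi ht₀.le, lintegral_union measurableSet_Ioi
    (Ioc_disjoint_Ioi le_rfl), hsmall, hlarge, ← ENNReal.ofReal_add (by positivity) (by positivity)]
  congr 1
  field_simp
  ring

variable (V) in
lemma exists_lintegral_enorm_gaussianKernelDeriv_le {α : ℝ} (hα : 0 < α)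
    (hαV : α < (finrank ℝ V : ℝ) / 2 + 1) :
    ∃ C : ℝ≥0∞, C ≠ ∞ ∧ ∀ s > 0, ∀ z : V, z ≠ 0 →
      ∫⁻ t in Ioi (0 : ℝ), ‖gaussianKernelDeriv (t ^ (1 / α) * s) z‖ₑ ≤
        C * ENNReal.ofReal (s ^ (-α)) * ENNReal.ofReal (‖z‖ ^ (2 * α - 1 - finrank ℝ V)) := by
  obtain ⟨C, hC, hbound⟩ := exists_norm_gaussianKernelDeriv_le V
  set k := (finrank ℝ V : ℝ) / 2 + 1 with hk
  have : 0 < k - α := sub_pos.2 hαV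
  refine ⟨ENNReal.ofReal (C * (k / (k - α))), ENNReal.ofReal_ne_top, fun s hs z hz => ?_⟩
  have hz0 : 0 < ‖z‖ := norm_pos_iff.2 hz
  have hscale : ‖z‖ * (‖z‖ ^ 2) ^ (α - k) = ‖z‖ ^ (2 * α - 1 - finrank ℝ V) := by
    rw [← rpow_natCast, ← rpow_mul hz0.le, mul_comm, ← rpow_add_one hz0.ne', hk]
    push_cast
    ring_nf
  calc ∫⁻ t in Ioi (0 : ℝ), ‖gaussianKernelDeriv (t ^ (1 / α) * s) z‖ₑ
      ≤ ∫⁻ t in Ioi (0 : ℝ), ENNReal.ofReal (C * ‖z‖) *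
          ENNReal.ofReal (max (t ^ (1 / α) * s) (‖z‖ ^ 2) ^ (-k)) := by
        refine setLIntegral_mono' measurableSet_Ioi fun t (ht : 0 < t) => ?_
        rw [← ofReal_norm, ← ENNReal.ofReal_mul (by positivity)]
        exact ENNReal.ofReal_le_ofReal (hbound _ (by positivity) z)
    _ = ENNReal.ofReal (C * (k / (k - α))) * ENNReal.ofReal (s ^ (-α)) *
          ENNReal.ofReal (‖z‖ ^ (2 * α - 1 - finrank ℝ V)) := by
        rw [lintegral_const_mul _ (by fun_prop),
          lintegral_max_rpow_Ioi hα hs (by positivity) hαV, ← hscale,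
          ← ENNReal.ofReal_mul (by positivity), ← ENNReal.ofReal_mul (by positivity),
          ← ENNReal.ofReal_mul (by positivity)]
        ring_nf

lemma IsStableLaw.exists_lintegral_enorm_subordinatedKernelDeriv_le [FiniteDimensional ℝ V]
    [MeasurableSpace V] [BorelSpace V] {α : ℝ} {μ : Measure ℝ} (h : IsStableLaw α μ) (hα : 0 < α)
    (hαV : α < (finrank ℝ V : ℝ) / 2 + 1) :
    ∃ C : ℝ≥0∞, C ≠ ∞ ∧ ∀ z : V, z ≠ 0 →
      ∫⁻ t in Ioi (0 : ℝ), ‖subordinatedKernelDeriv μ (t ^ (1 / α)) z‖ₑ ≤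
        C * ENNReal.ofReal (‖z‖ ^ (2 * α - 1 - finrank ℝ V)) := by
  have := h.isProbabilityMeasure
  obtain ⟨C, hC, hbound⟩ := exists_lintegral_enorm_gaussianKernelDeriv_le V hα hαV
  refine ⟨C * ∫⁻ s, ENNReal.ofReal (s ^ (-α)) ∂μ,
    ENNReal.mul_ne_top hC (h.lintegral_rpow_neg_ne_top hα hα.le), fun z hz => ?_⟩
  calc ∫⁻ t in Ioi (0 : ℝ), ‖subordinatedKernelDeriv μ (t ^ (1 / α)) z‖ₑ
      ≤ ∫⁻ t in Ioi (0 : ℝ), ∫⁻ s, ‖gaussianKernelDeriv (t ^ (1 / α) * s) z‖ₑ ∂μ :=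
        lintegral_mono fun t => enorm_integral_le_lintegral_enorm _
    _ = ∫⁻ s, (∫⁻ t in Ioi (0 : ℝ), ‖gaussianKernelDeriv (t ^ (1 / α) * s) z‖ₑ) ∂μ :=
        lintegral_lintegral_swap (stronglyMeasurable_gaussianKernelDeriv
          (σ := fun q : ℝ × ℝ => q.1 ^ (1 / α) * q.2) (by fun_prop)
          measurable_const).enorm.aemeasurable
    _ ≤ ∫⁻ s, C * ENNReal.ofReal (s ^ (-α)) *
          ENNReal.ofReal (‖z‖ ^ (2 * α - 1 - finrank ℝ V)) ∂μ :=
        lintegral_mono_ae (h.ae_pos.mono fun s hs => hbound s hs z hz)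
    _ = C * (∫⁻ s, ENNReal.ofReal (s ^ (-α)) ∂μ) *
          ENNReal.ofReal (‖z‖ ^ (2 * α - 1 - finrank ℝ V)) := by
        rw [lintegral_mul_const _ (by fun_prop), lintegral_const_mul _ (by fun_prop)]

end Subordination

section Duhamel

open Module

variable {V : Type*}

/-- The essential supremum over the positive times, as a function of the space variable. -/
def timeEssSup (w : ℝ × V → ℝ≥0∞) (x : V) : ℝ≥0∞ :=
  essSup (fun t => w (t, x)) (volume.restrict (Ioi 0))

lemma measurable_timeEssSup [MeasurableSpace V] {w : ℝ × V → ℝ≥0∞} (hw : Measurable w) :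
    Measurable (timeEssSup w) :=
  measurable_essSup_left hw

lemma ae_le_timeEssSup (w : ℝ × V → ℝ≥0∞) (x : V) :
    ∀ᵐ t ∂volume.restrict (Ioi (0 : ℝ)), w (t, x) ≤ timeEssSup w x :=
  ENNReal.ae_le_essSup _

lemma timeEssSup_le {w : ℝ × V → ℝ≥0∞} {x : V} {a : ℝ≥0∞} (h : ∀ t > 0, w (t, x) ≤ a) :
    timeEssSup w x ≤ a :=
  essSup_le_of_ae_le a ((ae_restrict_mem measurableSet_Ioi).mono h)

lemma setLIntegral_Ioc_comp_sub_le (g : ℝ → ℝ≥0∞) (t : ℝ) :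
    ∫⁻ s in Ioc 0 t, g (t - s) ≤ ∫⁻ s in Ioi 0, g s := by
  rw [← lintegral_indicator measurableSet_Ioi, ← lintegral_sub_left_eq_self (μ := volume) _ t,
    setLIntegral_congr Ioo_ae_eq_Ioc.symm, ← lintegral_indicator measurableSet_Ioo]
  refine lintegral_mono (indicator_le fun s hs => ?_)
  rw [indicator_of_mem (mem_Ioi.2 (sub_pos.2 hs.2))]

variable [NormedAddCommGroup V] [MeasurableSpace V]

/-- The Duhamel integral of the source `w` against the kernel `H`, on space-time. -/
def duhamel (μ : Measure V) (H w : ℝ × V → ℝ) (z : ℝ × V) : ℝ :=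
  ∫ ζ in Ioc 0 z.1 ×ˢ univ, H (z - ζ) * w ζ ∂volume.prod μ

lemma measurable_duhamel [BorelSpace V] [SecondCountableTopology V] {μ : Measure V} [SFinite μ]
    {H w : ℝ × V → ℝ} (hH : Measurable H) (hw : Measurable w) : Measurable (duhamel μ H w) := by
  have hS : MeasurableSet {q : (ℝ × V) × (ℝ × V) | q.2 ∈ Ioc 0 q.1.1 ×ˢ univ} := by
    simp only [mem_prod, mem_univ, and_true, mem_Ioc]
    measurability
  have hint : Measurable fun q : (ℝ × V) × (ℝ × V) => H (q.1 - q.2) * w q.2 := by fun_prop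
  convert ((hint.indicator hS).stronglyMeasurable.integral_prod_right'
    (ν := volume.prod μ)).measurable using 2 with z
  rw [duhamel, ← integral_indicator (measurableSet_Ioc.prod .univ)]
  rfl

variable [NormedSpace ℝ V]

/-- A space-time kernel whose integral over the positive times is at most `C` times the kernel of
the Riesz potential of order `σ`. -/
structure IsTimeIntegrableKernel (σ : ℝ) (C : ℝ≥0∞) (H : ℝ × V → ℝ) : Prop where
  measurable : Measurable H
  const_ne_top : C ≠ ∞
  lintegral_le : ∀ x ≠ 0, ∫⁻ t in Ioi 0, ‖H (t, x)‖ₑ ≤ C * ENNReal.ofReal (‖x‖ ^ (σ - finrank ℝ V))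

variable [BorelSpace V] [SecondCountableTopology V] {μ : Measure V} [SFinite μ]
  {H w w' : ℝ × V → ℝ} {C : ℝ≥0∞} {σ : ℝ} {z : ℝ × V}

namespace IsTimeIntegrableKernel

variable [NullSingletonClass μ]

lemma lintegral_enorm_mul_le (hH : IsTimeIntegrableKernel σ C H) (hw : Measurable w) (z : ℝ × V) :
    ∫⁻ ζ in Ioc 0 z.1 ×ˢ univ, ‖H (z - ζ) * w ζ‖ₑ ∂volume.prod μ ≤
      C * rieszPotential μ σ (timeEssSup fun ζ => ‖w ζ‖ₑ) z.2 := by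
  have hHm := hH.measurable
  rw [← Measure.prod_restrict, Measure.restrict_univ, lintegral_prod_symm _ (by fun_prop),
    rieszPotential, ← lintegral_const_mul' _ _ hH.const_ne_top]
  refine lintegral_mono_ae ?_
  filter_upwards [Measure.ae_ne μ z.2] with y hy
  set W := timeEssSup (fun ζ => ‖w ζ‖ₑ) y
  have hW : ∀ᵐ s ∂volume.restrict (Ioc 0 z.1), ‖w (s, y)‖ₑ ≤ W :=
    ae_restrict_of_ae_restrict_of_subset Ioc_subset_Ioi_self (ae_le_timeEssSup _ y)
  calc ∫⁻ s in Ioc 0 z.1, ‖H (z - (s, y)) * w (s, y)‖ₑ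
      ≤ ∫⁻ s in Ioc 0 z.1, ‖H (z.1 - s, z.2 - y)‖ₑ * W := by
        refine lintegral_mono_ae (hW.mono fun s hs => ?_)
        rw [enorm_mul]
        exact mul_le_mul_right hs _
    _ = (∫⁻ s in Ioc 0 z.1, ‖H (z.1 - s, z.2 - y)‖ₑ) * W := lintegral_mul_const _ (by fun_prop)
    _ ≤ (∫⁻ s in Ioi 0, ‖H (s, z.2 - y)‖ₑ) * W :=
        mul_le_mul_left (setLIntegral_Ioc_comp_sub_le (fun s => ‖H (s, z.2 - y)‖ₑ) z.1) W
    _ ≤ C * ENNReal.ofReal (‖z.2 - y‖ ^ (σ - finrank ℝ V)) * W := by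
        gcongr
        exact hH.lintegral_le _ (sub_ne_zero.2 hy.symm)
    _ = _ := mul_assoc _ _ _

lemma integrableOn (hH : IsTimeIntegrableKernel σ C H) (hw : Measurable w)
    (hz : rieszPotential μ σ (timeEssSup fun ζ => ‖w ζ‖ₑ) z.2 < ∞) :
    IntegrableOn (fun ζ => H (z - ζ) * w ζ) (Ioc 0 z.1 ×ˢ univ) (volume.prod μ) := by
  have hHm := hH.measurable
  exact ⟨Measurable.aestronglyMeasurable (by fun_prop),
    (hH.lintegral_enorm_mul_le hw z).trans_lt (ENNReal.mul_lt_top hH.const_ne_top.lt_top hz)⟩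

lemma timeEssSup_duhamel_le (hH : IsTimeIntegrableKernel σ C H) (hw : Measurable w) (x : V) :
    timeEssSup (fun z => ‖duhamel μ H w z‖ₑ) x ≤
      C * rieszPotential μ σ (timeEssSup fun ζ => ‖w ζ‖ₑ) x :=
  timeEssSup_le fun t _ =>
    (enorm_integral_le_lintegral_enorm _).trans (hH.lintegral_enorm_mul_le hw (t, x))

lemma duhamel_sub (hH : IsTimeIntegrableKernel σ C H) (hw : Measurable w) (hw' : Measurable w')
    (hz : rieszPotential μ σ (timeEssSup fun ζ => ‖w ζ‖ₑ) z.2 < ∞)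
    (hz' : rieszPotential μ σ (timeEssSup fun ζ => ‖w' ζ‖ₑ) z.2 < ∞) :
    duhamel μ H w z - duhamel μ H w' z = duhamel μ H (fun ζ => w ζ - w' ζ) z := by
  simp only [duhamel, mul_sub]
  exact (integral_sub (hH.integrableOn hw hz) (hH.integrableOn hw' hz')).symm

end IsTimeIntegrableKernel

end Duhamel

section FractionalHeat

open Module

variable {V : Type*} [NormedAddCommGroup V] [InnerProductSpace ℝ V]

/-- The fractional heat kernel of order `α` on space-time, for the stable law `μ` of index `α`. -/
def fractionalHeatKernel (μ : Measure ℝ) (α : ℝ) (z : ℝ × V) : ℝ :=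
  subordinatedKernel μ (z.1 ^ (1 / α)) z.2

/-- The derivative of `fractionalHeatKernel μ α` with respect to the space variable in the
direction `e`. -/
def fractionalHeatKernelDeriv (μ : Measure ℝ) (α : ℝ) (e : V) (z : ℝ × V) : ℝ :=
  subordinatedKernelDeriv μ (z.1 ^ (1 / α)) z.2 e

variable [MeasurableSpace V] [BorelSpace V] {μ : Measure ℝ} {α : ℝ}

lemma measurable_fractionalHeatKernel [SFinite μ] :
    Measurable (fractionalHeatKernel (V := V) μ α) :=
  measurable_subordinatedKernel (by fun_prop) measurable_snd

variable [FiniteDimensional ℝ V]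

/-- The solution of the homogeneous fractional heat equation with initial value `u₀`. -/
def fractionalHeatEvolution (μ : Measure ℝ) (α : ℝ) (u₀ : V → ℝ) (z : ℝ × V) : ℝ :=
  ∫ y, fractionalHeatKernel μ α (z.1, z.2 - y) * u₀ y

lemma measurable_fractionalHeatKernelDeriv [SFinite μ] (e : V) :
    Measurable (fractionalHeatKernelDeriv μ α e) :=
  (ContinuousLinearMap.apply ℝ ℝ e).measurable.comp
    (stronglyMeasurable_subordinatedKernelDeriv (by fun_prop) measurable_snd).measurable

lemma measurable_fractionalHeatEvolution [SFinite μ] {u₀ : V → ℝ} (hu₀ : Measurable u₀) :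
    Measurable (fractionalHeatEvolution μ α u₀) := by
  have hK := measurable_fractionalHeatKernel (V := V) (μ := μ) (α := α)
  have : Measurable fun q : (ℝ × V) × V =>
      fractionalHeatKernel μ α (q.1.1, q.1.2 - q.2) * u₀ q.2 := by fun_prop
  exact this.stronglyMeasurable.integral_prod_right'.measurable

namespace IsStableLaw

lemma lintegral_enorm_fractionalHeatKernel_mul_le (h : IsStableLaw α μ) {u₀ : V → ℝ}
    (hu₀ : Measurable u₀) {t : ℝ} (ht : 0 < t) (x : V) :
    ∫⁻ y, ‖fractionalHeatKernel μ α (t, x - y) * u₀ y‖ₑ ≤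
      maximalFunction volume (fun y => ‖u₀ y‖ₑ) x := by
  simp only [enorm_mul]
  exact h.lintegral_subordinatedKernel_mul_le_maximalFunction (Real.rpow_pos_of_pos ht _)
    hu₀.enorm x

lemma integrable_fractionalHeatKernel_mul (h : IsStableLaw α μ) {u₀ : V → ℝ}
    (hu₀ : Measurable u₀) {t : ℝ} (ht : 0 < t) {x : V}
    (hx : maximalFunction volume (fun y => ‖u₀ y‖ₑ) x < ∞) :
    Integrable fun y => fractionalHeatKernel μ α (t, x - y) * u₀ y := by
  have := h.isProbabilityMeasure
  have hK := measurable_fractionalHeatKernel (V := V) (μ := μ) (α := α)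
  exact ⟨Measurable.aestronglyMeasurable (by fun_prop),
    (h.lintegral_enorm_fractionalHeatKernel_mul_le hu₀ ht x).trans_lt hx⟩

lemma timeEssSup_fractionalHeatEvolution_le (h : IsStableLaw α μ) {u₀ : V → ℝ}
    (hu₀ : Measurable u₀) (x : V) :
    timeEssSup (fun z => ‖fractionalHeatEvolution μ α u₀ z‖ₑ) x ≤
      maximalFunction volume (fun y => ‖u₀ y‖ₑ) x :=
  timeEssSup_le fun _ ht => (enorm_integral_le_lintegral_enorm _).trans
    (h.lintegral_enorm_fractionalHeatKernel_mul_le hu₀ ht x)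

variable (V) in
lemma exists_isTimeIntegrableKernel (h : IsStableLaw α μ) (hα : 0 < α)
    (hαV : α < (finrank ℝ V : ℝ) / 2 + 1) :
    ∃ C : ℝ≥0∞, ∀ e : V,
      IsTimeIntegrableKernel (2 * α - 1) (C * ‖e‖ₑ) (fractionalHeatKernelDeriv μ α e) := by
  have := h.isProbabilityMeasure
  obtain ⟨C, hC, hbound⟩ := h.exists_lintegral_enorm_subordinatedKernelDeriv_le (V := V) hα hαV
  refine ⟨C, fun e => ⟨measurable_fractionalHeatKernelDeriv e, by finiteness, fun x hx => ?_⟩⟩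
  calc ∫⁻ t in Ioi 0, ‖fractionalHeatKernelDeriv μ α e (t, x)‖ₑ
      ≤ ∫⁻ t in Ioi 0, ‖subordinatedKernelDeriv μ (t ^ (1 / α)) x‖ₑ * ‖e‖ₑ :=
        lintegral_mono fun _ => ContinuousLinearMap.le_opENorm _ _
    _ = (∫⁻ t in Ioi 0, ‖subordinatedKernelDeriv μ (t ^ (1 / α)) x‖ₑ) * ‖e‖ₑ :=
        lintegral_mul_const' _ _ enorm_ne_top
    _ ≤ C * ENNReal.ofReal (‖x‖ ^ (2 * α - 1 - finrank ℝ V)) * ‖e‖ₑ := by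
        gcongr
        exact hbound x hx
    _ = _ := mul_right_comm _ _ _

end IsStableLaw

end FractionalHeat

section PowerNonlinearity

variable (b : ℕ)

lemma abs_abs_pow_mul_sub_le (x y : ℝ) :
    |(|x| ^ b * x - |y| ^ b * y)| ≤ (b + 1) * (|x| + |y|) ^ b * |x - y| := by
  have hpow : |(|x| ^ b - |y| ^ b)| * |y| ≤ b * (|x| + |y|) ^ b * |x - y| := by
    rcases b with _ | k
    · simp
    have hmax : max |x| |y| ≤ |x| + |y| := max_le_add_of_nonneg (abs_nonneg x) (abs_nonneg y)
    have hdiff := abs_pow_sub_pow_le |x| |y| (k + 1)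
    rw [abs_abs, abs_abs, Nat.add_sub_cancel] at hdiff
    calc |(|x| ^ (k + 1) - |y| ^ (k + 1))| * |y|
        ≤ |x - y| * (k + 1 : ℕ) * (|x| + |y|) ^ k * (|x| + |y|) := by
          refine mul_le_mul (hdiff.trans ?_) (le_add_of_nonneg_left (abs_nonneg x))
            (abs_nonneg y) (by positivity)
          exact mul_le_mul (mul_le_mul_of_nonneg_right (abs_abs_sub_abs_le x y) (by positivity))
            (pow_le_pow_left₀ (by positivity) hmax k) (by positivity) (by positivity)
      _ = _ := by ring
  calc |(|x| ^ b * x - |y| ^ b * y)| = |(|x| ^ b * (x - y) + (|x| ^ b - |y| ^ b) * y)| := by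
        ring_nf
    _ ≤ |x| ^ b * |x - y| + |(|x| ^ b - |y| ^ b)| * |y| := by
        refine (abs_add_le _ _).trans_eq ?_
        rw [abs_mul, abs_mul, abs_of_nonneg (by positivity : 0 ≤ |x| ^ b)]
    _ ≤ (|x| + |y|) ^ b * |x - y| + b * (|x| + |y|) ^ b * |x - y| := by
        gcongr
        exact le_add_of_nonneg_right (abs_nonneg y)
    _ = _ := by ring

lemma enorm_abs_pow_mul_sub_le (x y : ℝ) :
    ‖|x| ^ b * x - |y| ^ b * y‖ₑ ≤ (b + 1) * (‖x‖ₑ + ‖y‖ₑ) ^ b * ‖x - y‖ₑ := by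
  have := ENNReal.ofReal_le_ofReal (abs_abs_pow_mul_sub_le b x y)
  rwa [ENNReal.ofReal_mul (by positivity), ENNReal.ofReal_mul (by positivity),
    ENNReal.ofReal_pow (by positivity), ENNReal.ofReal_add (abs_nonneg x) (abs_nonneg y),
    ← Nat.cast_succ, ENNReal.ofReal_natCast, Nat.cast_succ, ← Real.enorm_eq_ofReal_abs,
    ← Real.enorm_eq_ofReal_abs, ← Real.enorm_eq_ofReal_abs, ← Real.enorm_eq_ofReal_abs] at this

lemma timeEssSup_abs_pow_mul_sub_le {V : Type*} (u v : ℝ × V → ℝ) (x : V) :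
    timeEssSup (fun z => ‖|u z| ^ b * u z - |v z| ^ b * v z‖ₑ) x ≤
      (b + 1) * ((timeEssSup (fun z => ‖u z‖ₑ) x + timeEssSup (fun z => ‖v z‖ₑ) x) ^ b *
        timeEssSup (fun z => ‖u z - v z‖ₑ) x) := by
  refine essSup_le_of_ae_le _ ?_
  filter_upwards [ae_le_timeEssSup (fun z => ‖u z‖ₑ) x, ae_le_timeEssSup (fun z => ‖v z‖ₑ) x,
    ae_le_timeEssSup (fun z => ‖u z - v z‖ₑ) x] with t hu hv huv
  rw [← mul_assoc]
  exact (enorm_abs_pow_mul_sub_le b _ _).trans (by gcongr)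

end PowerNonlinearity

section MildMap

open Module
open scoped NNReal

namespace IsFunctionNorm

variable {X : Type*} [MeasurableSpace X] {μ : Measure X} {N : (X → ℝ≥0∞) → ℝ≥0∞} {R : ℝ≥0∞}
  {a : X → ℝ} {Ψ : (X → ℝ) → X → ℝ}

lemma isContractionOn_sub (hN : IsFunctionNorm μ N) (ha : a ∈ closedBall N (R / 2))
    (hΨm : ∀ u, Measurable u → Measurable (Ψ u)) (hΨ0 : Ψ 0 = 0)
    (hΨ : ∀ u ∈ closedBall N R, ∀ v ∈ closedBall N R,
      N (fun x => ‖Ψ u x - Ψ v x‖ₑ) ≤ 2⁻¹ * N fun x => ‖u x - v x‖ₑ) :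
    IsContractionOn N R 2⁻¹ fun u x => a x - Ψ u x where
  mapsTo u hu := by
    refine ⟨ha.1.sub (hΨm u hu.1), (hN.enorm_sub_le ha.1 (hΨm u hu.1)).trans ?_⟩
    have h0 : (0 : X → ℝ) ∈ closedBall N R := ⟨measurable_const, by simp [hN.zero]⟩
    have hle := hΨ u hu 0 h0
    simp only [hΨ0, Pi.zero_apply, sub_zero] at hle
    calc N (fun x => ‖a x‖ₑ) + N (fun x => ‖Ψ u x‖ₑ) ≤ R / 2 + 2⁻¹ * R :=
          add_le_add ha.2 (hle.trans (mul_le_mul_right hu.2 _))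
      _ = R := by rw [mul_comm, ← div_eq_mul_inv, ENNReal.add_halves]
  le_mul u hu v hv := by
    simp only [sub_sub_sub_cancel_left, enorm_sub_rev (Ψ v _)]
    exact hΨ u hu v hv

protected lemma timeEssSup [SFinite μ] (hN : IsFunctionNorm μ N) :
    IsFunctionNorm ((volume.restrict (Ioi (0 : ℝ))).prod μ) fun w => N (timeEssSup w) :=
  hN.essSup_left _

end IsFunctionNorm

section AdmissiblePair

variable {V : Type*} [NormedAddCommGroup V] [NormedSpace ℝ V] [MeasurableSpace V]

/-- A norm `N` for the solutions and a norm `N'` for the sources, matched so that the free and the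
Duhamel term of a mild solution can be estimated in `N`, and the nonlinearity `|u| ^ b * u` in
`N'`. -/
structure IsAdmissiblePair (μ : Measure V) (σ : ℝ) (b : ℕ) (K : ℝ≥0∞)
    (N N' : (V → ℝ≥0∞) → ℝ≥0∞) : Prop where
  isFunctionNorm : IsFunctionNorm μ N
  isFunctionNorm' : IsFunctionNorm μ N'
  const_ne_top : K ≠ ∞
  maximalFunction_le : ∀ {f : V → ℝ≥0∞}, Measurable f → N (maximalFunction μ f) ≤ K * N f
  rieszPotential_le : ∀ {f : V → ℝ≥0∞}, Measurable f → N (rieszPotential μ σ f) ≤ K * N' f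
  pow_mul_le : ∀ {f g : V → ℝ≥0∞}, Measurable f → Measurable g → N f ≠ ∞ → N g ≠ ∞ →
    N' (fun x => f x ^ b * g x) ≤ N f ^ b * N g

namespace IsAdmissiblePair

variable {μ : Measure V} [SFinite μ]
  {σ : ℝ} {b : ℕ} {K C R : ℝ≥0∞} {N N' : (V → ℝ≥0∞) → ℝ≥0∞} {H u v w w' : ℝ × V → ℝ}

lemma norm_abs_pow_mul_sub_le (h : IsAdmissiblePair μ σ b K N N')
    (hu : u ∈ IsFunctionNorm.closedBall (fun w => N (timeEssSup w)) R)
    (hv : v ∈ IsFunctionNorm.closedBall (fun w => N (timeEssSup w)) R) (hR : R ≠ ∞) :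
    N' (timeEssSup fun z => ‖|u z| ^ b * u z - |v z| ^ b * v z‖ₑ) ≤
      (b + 1) * ((R + R) ^ b * N (timeEssSup fun z => ‖u z - v z‖ₑ)) := by
  have hN := h.isFunctionNorm
  have hum := measurable_timeEssSup hu.1.enorm
  have hvm := measurable_timeEssSup hv.1.enorm
  have hadd := (hN.add_le hum hvm).trans (add_le_add hu.2 hv.2)
  refine (h.isFunctionNorm'.mono_ae
    (.of_forall fun x => timeEssSup_abs_pow_mul_sub_le b u v x)).trans
    ((h.isFunctionNorm'.const_mul_le (by finiteness) _).trans ?_)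
  gcongr
  refine (h.pow_mul_le (hum.add hvm) (measurable_timeEssSup (hu.1.sub hv.1).enorm)
    (ne_top_of_le_ne_top (by finiteness) hadd) (hN.timeEssSup.norm_sub_ne_top hR hu hv)).trans ?_
  exact mul_le_mul' (pow_le_pow_left' hadd b) le_rfl

lemma norm_abs_pow_mul_ne_top (h : IsAdmissiblePair μ σ b K N N')
    (hu : u ∈ IsFunctionNorm.closedBall (fun w => N (timeEssSup w)) R) (hR : R ≠ ∞) :
    N' (timeEssSup fun z => ‖|u z| ^ b * u z‖ₑ) ≠ ∞ := by
  have hN := h.isFunctionNorm.timeEssSup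
  have h0 : (0 : ℝ × V → ℝ) ∈ IsFunctionNorm.closedBall (fun w => N (timeEssSup w)) R :=
    ⟨measurable_const, by simp [hN.zero]⟩
  have hle := h.norm_abs_pow_mul_sub_le hu h0 hR
  have hne := hN.norm_sub_ne_top hR hu h0
  simp only [Pi.zero_apply, mul_zero, sub_zero] at hle hne
  exact ne_top_of_le_ne_top (by finiteness) hle

variable [BorelSpace V] [SecondCountableTopology V]

lemma ae_rieszPotential_lt_top (h : IsAdmissiblePair μ σ b K N N') {f : V → ℝ≥0∞}
    (hf : Measurable f) (hfN : N' f ≠ ∞) : ∀ᵐ x ∂μ, rieszPotential μ σ f x < ∞ :=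
  h.isFunctionNorm.ae_lt_top (measurable_rieszPotential σ hf)
    (ne_top_of_le_ne_top (ENNReal.mul_ne_top h.const_ne_top hfN) (h.rieszPotential_le hf))

variable [NullSingletonClass μ]

lemma norm_duhamel_le (h : IsAdmissiblePair μ σ b K N N') (hH : IsTimeIntegrableKernel σ C H)
    (hw : Measurable w) :
    N (timeEssSup fun z => ‖duhamel μ H w z‖ₑ) ≤ C * (K * N' (timeEssSup fun z => ‖w z‖ₑ)) :=
  calc N (timeEssSup fun z => ‖duhamel μ H w z‖ₑ)
      ≤ C * N (rieszPotential μ σ (timeEssSup fun z => ‖w z‖ₑ)) :=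
        (h.isFunctionNorm.mono_ae (.of_forall (hH.timeEssSup_duhamel_le hw))).trans
          (h.isFunctionNorm.const_mul_le hH.const_ne_top _)
    _ ≤ C * (K * N' (timeEssSup fun z => ‖w z‖ₑ)) := by
        gcongr
        exact h.rieszPotential_le (measurable_timeEssSup hw.enorm)

lemma norm_duhamel_sub_le (h : IsAdmissiblePair μ σ b K N N') (hH : IsTimeIntegrableKernel σ C H)
    (hw : Measurable w) (hw' : Measurable w') (hwN : N' (timeEssSup fun z => ‖w z‖ₑ) ≠ ∞)
    (hwN' : N' (timeEssSup fun z => ‖w' z‖ₑ) ≠ ∞) :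
    N (timeEssSup fun z => ‖duhamel μ H w z - duhamel μ H w' z‖ₑ) ≤
      C * (K * N' (timeEssSup fun z => ‖w z - w' z‖ₑ)) := by
  refine (h.isFunctionNorm.mono_ae ?_).trans (h.norm_duhamel_le hH (hw.sub hw'))
  filter_upwards [h.ae_rieszPotential_lt_top (measurable_timeEssSup hw.enorm) hwN,
    h.ae_rieszPotential_lt_top (measurable_timeEssSup hw'.enorm) hwN'] with x hx hx'
  simp only [timeEssSup, hH.duhamel_sub (z := (_, x)) hw hw' hx hx']
  exact le_rfl

lemma isContractionOn_sub_duhamel (h : IsAdmissiblePair μ σ b K N N')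
    (hH : IsTimeIntegrableKernel σ C H) (hR : R ≠ ∞)
    (hsmall : C * K * (b + 1) * (R + R) ^ b ≤ 2⁻¹) {a : ℝ × V → ℝ}
    (ha : a ∈ IsFunctionNorm.closedBall (fun w => N (timeEssSup w)) (R / 2)) :
    IsFunctionNorm.IsContractionOn (fun w => N (timeEssSup w)) R 2⁻¹
      fun u z => a z - duhamel μ H (fun ζ => |u ζ| ^ b * u ζ) z := by
  have hpow {u : ℝ × V → ℝ} (hu : Measurable u) : Measurable fun ζ => |u ζ| ^ b * u ζ :=
    (hu.abs.pow_const b).mul hu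
  refine h.isFunctionNorm.timeEssSup.isContractionOn_sub
    (Ψ := fun u => duhamel μ H fun ζ => |u ζ| ^ b * u ζ) ha
    (fun u hu => measurable_duhamel hH.measurable (hpow hu))
    (by ext; simp [duhamel]) fun u hu v hv => ?_
  calc N (timeEssSup fun z => ‖duhamel μ H (fun ζ => |u ζ| ^ b * u ζ) z
          - duhamel μ H (fun ζ => |v ζ| ^ b * v ζ) z‖ₑ)
      ≤ C * (K * N' (timeEssSup fun z => ‖|u z| ^ b * u z - |v z| ^ b * v z‖ₑ)) :=
        h.norm_duhamel_sub_le hH (hpow hu.1) (hpow hv.1) (h.norm_abs_pow_mul_ne_top hu hR)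
          (h.norm_abs_pow_mul_ne_top hv hR)
    _ ≤ C * (K * ((b + 1) * ((R + R) ^ b * N (timeEssSup fun z => ‖u z - v z‖ₑ)))) := by
        gcongr
        exact h.norm_abs_pow_mul_sub_le hu hv hR
    _ = C * K * (b + 1) * (R + R) ^ b * N (timeEssSup fun z => ‖u z - v z‖ₑ) := by ring
    _ ≤ 2⁻¹ * N (timeEssSup fun z => ‖u z - v z‖ₑ) := by gcongr

end IsAdmissiblePair

end AdmissiblePair

lemma exists_pos_mul_add_pow_le_inv_two {L : ℝ≥0∞} (hL : L ≠ ∞) {b : ℕ} (hb : b ≠ 0) :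
    ∃ R : ℝ≥0, 0 < R ∧ L * (R + R) ^ b ≤ 2⁻¹ := by
  obtain ⟨R, hR, hRL⟩ := ENNReal.exists_nnreal_pos_mul_lt (a := (L + 1) * 2) (b := 2⁻¹)
    (by finiteness) (by simp)
  have hsum : (L + 1) * (R + R) ≤ 2⁻¹ := by
    rw [← two_mul, ← mul_assoc, mul_comm]
    exact hRL.le
  have hle : (R + R : ℝ≥0∞) ≤ 1 :=
    (le_mul_of_one_le_left' le_add_self).trans (hsum.trans (by simp))
  refine ⟨R, hR, ?_⟩
  calc L * (R + R) ^ b ≤ (L + 1) * (R + R) := by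
        gcongr
        · exact le_self_add
        · exact pow_le_of_le_one zero_le hle hb
    _ ≤ 2⁻¹ := hsum

variable {V : Type*} [NormedAddCommGroup V] [InnerProductSpace ℝ V] [MeasurableSpace V]
  [BorelSpace V] [FiniteDimensional ℝ V]

/-- The map whose fixed points are the mild solutions of the fractional heat equation with initial
value `u₀` and source `e · ∇ (F - |u| ^ b * u)`. -/
def mildMap (ν : Measure ℝ) (α : ℝ) (b : ℕ) (e : V) (u₀ : V → ℝ) (F u : ℝ × V → ℝ)
    (z : ℝ × V) : ℝ :=
  fractionalHeatEvolution ν α u₀ z + duhamel volume (fractionalHeatKernelDeriv ν α e) F z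
    - duhamel volume (fractionalHeatKernelDeriv ν α e) (fun ζ => |u ζ| ^ b * u ζ) z

namespace IsAdmissiblePair

variable [Nontrivial V] {ν : Measure ℝ} {σ α : ℝ} {b : ℕ} {C K : ℝ≥0∞} {N N' : (V → ℝ≥0∞) → ℝ≥0∞}
  {u₀ : V → ℝ} {F : ℝ × V → ℝ}

lemma norm_evolution_add_duhamel_le {e : V} (h : IsAdmissiblePair volume σ b K N N')
    (hν : IsStableLaw α ν)
    (hH : IsTimeIntegrableKernel σ C (fractionalHeatKernelDeriv ν α e))
    (hu₀ : Measurable u₀) (hF : Measurable F) :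
    N (timeEssSup fun z => ‖fractionalHeatEvolution ν α u₀ z
        + duhamel volume (fractionalHeatKernelDeriv ν α e) F z‖ₑ) ≤
      (N (fun x => ‖u₀ x‖ₑ) + N' (timeEssSup fun z => ‖F z‖ₑ)) * ((1 + C) * K) := by
  have := hν.isProbabilityMeasure
  have hN := h.isFunctionNorm
  have hS := measurable_fractionalHeatEvolution (μ := ν) (α := α) hu₀
  have hD := measurable_duhamel (μ := volume) hH.measurable hF
  set S := fractionalHeatEvolution ν α u₀
  set D := duhamel volume (fractionalHeatKernelDeriv ν α e) F
  calc N (timeEssSup fun z => ‖S z + D z‖ₑ)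
      ≤ N (timeEssSup fun z => ‖S z‖ₑ) + N (timeEssSup fun z => ‖D z‖ₑ) :=
        (hN.timeEssSup.mono_ae (.of_forall fun z => enorm_add_le (S z) (D z))).trans
          (hN.timeEssSup.add_le hS.enorm hD.enorm)
    _ ≤ K * N (fun x => ‖u₀ x‖ₑ) + C * (K * N' (timeEssSup fun z => ‖F z‖ₑ)) := by
        gcongr
        · exact (hN.mono_ae (.of_forall (hν.timeEssSup_fractionalHeatEvolution_le hu₀))).trans
            (h.maximalFunction_le hu₀.enorm)
        · exact h.norm_duhamel_le hH hF
    _ ≤ (1 + C) * K * N (fun x => ‖u₀ x‖ₑ) + (1 + C) * K * N' (timeEssSup fun z => ‖F z‖ₑ) := by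
        rw [← mul_assoc C]
        gcongr
        · exact le_mul_of_one_le_left' le_self_add
        · exact le_add_self
    _ = _ := by ring

theorem exists_unique_mildMap_fixedPoint
    (h : IsAdmissiblePair volume (2 * α - 1) b K N N') (hν : IsStableLaw α ν) (hα : 0 < α)
    (hαV : α < (finrank ℝ V : ℝ) / 2 + 1) (hb : b ≠ 0) (e : V) :
    ∃ ε R : ℝ≥0, 0 < ε ∧ 0 < R ∧ ∀ {u₀ : V → ℝ} {F : ℝ × V → ℝ}, Measurable u₀ → Measurable F →
      N (fun x => ‖u₀ x‖ₑ) + N' (timeEssSup fun z => ‖F z‖ₑ) ≤ ε →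
      ∃ u ∈ IsFunctionNorm.closedBall (fun w => N (timeEssSup w)) R,
        (∀ᵐ z ∂(volume.restrict (Ioi 0)).prod volume, u z = mildMap ν α b e u₀ F u z) ∧
        ∀ v ∈ IsFunctionNorm.closedBall (fun w => N (timeEssSup w)) R,
          (∀ᵐ z ∂(volume.restrict (Ioi 0)).prod volume, v z = mildMap ν α b e u₀ F v z) →
          ∀ᵐ z ∂(volume.restrict (Ioi 0)).prod volume, v z = u z := by
  have := hν.isProbabilityMeasure
  obtain ⟨C, hC⟩ := hν.exists_isTimeIntegrableKernel V hα hαV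
  have hH := hC e
  have hCe := hH.const_ne_top
  have hK := h.const_ne_top
  obtain ⟨R, hR, hRsmall⟩ := exists_pos_mul_add_pow_le_inv_two
    (L := C * ‖e‖ₑ * K * (b + 1)) (by finiteness) hb
  obtain ⟨ε, hε, hεsmall⟩ := ENNReal.exists_nnreal_pos_mul_lt (a := (1 + C * ‖e‖ₑ) * K)
    (b := R / 2) (by finiteness) (by simpa using hR.ne')
  refine ⟨ε, R, hε, hR, fun hu₀ hF hle => ?_⟩
  exact (h.isContractionOn_sub_duhamel hH ENNReal.coe_ne_top hRsmall
    ⟨(measurable_fractionalHeatEvolution hu₀).add (measurable_duhamel hH.measurable hF),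
      (h.norm_evolution_add_duhamel_le hν hH hu₀ hF).trans
        ((mul_le_mul_left hle _).trans hεsmall.le)⟩).exists_unique_fixedPoint
    h.isFunctionNorm.timeEssSup ENNReal.coe_ne_top (ENNReal.inv_lt_one.2 ENNReal.one_lt_two)

end IsAdmissiblePair

end MildMap

section WellPosedness

open Filter Module

theorem IsPLog.exists_isAdmissiblePair {E : Type*} [NormedAddCommGroup E] [NormedSpace ℝ E]
    [FiniteDimensional ℝ E] [Nontrivial E] [MeasurableSpace E] [BorelSpace E] (μ : Measure E)
    [μ.IsAddHaarMeasure] {p : E → ℝ} (hp : IsPLog univ p) {b : ℕ} (hb : b ≠ 0) {σ lo hi : ℝ}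
    (hσ : 0 < σ) (hσb : σ * (b + 1) < finrank ℝ E * b) (hlo : (b : ℝ) + 1 < lo)
    (hlop : ∀ᵐ x ∂μ, lo ≤ p x) (hhip : ∀ᵐ x ∂μ, p x ≤ hi) :
    ∃ K, IsAdmissiblePair μ σ b K (mixedLux μ p fun _ => finrank ℝ E * b / σ)
      (mixedLux μ (fun x => p x / (b + 1)) fun _ => finrank ℝ E * b / ((b + 1) * σ)) := by
  have hb0 : (0 : ℝ) < b := by positivity
  have hd : (0 : ℝ) < finrank ℝ E := Nat.cast_pos.2 finrank_pos
  have hlop := hp.mem_of_ae_mem isClosed_Ici hlop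
  have hhip := hp.mem_of_ae_mem isClosed_Iic hhip
  obtain ⟨A, κ, hs⟩ := hp.exists_isLogHolderExponent (by linarith) hlop hhip
  obtain ⟨A', κ', hs'⟩ := (hp.div_const (c := b + 1) (by positivity)
    fun x => hlo.le.trans (hlop x)).exists_isLogHolderExponent
    ((one_lt_div (by positivity)).2 hlo) (fun x => div_le_div_of_nonneg_right (hlop x)
    (by positivity)) fun x => div_le_div_of_nonneg_right (hhip x) (by positivity)
  set q : ℝ := finrank ℝ E * b / ((b + 1) * σ) with hq_def
  have hq : 1 < q := (one_lt_div (by positivity)).2 (by linarith)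
  have hr : finrank ℝ E * b / σ = (b + 1) * q := by rw [hq_def]; field_simp
  have hr1 : 1 < (b + 1) * q := by nlinarith
  have hθ : 1 - σ * q / finrank ℝ E = ((b : ℝ) + 1)⁻¹ := by rw [hq_def]; field_simp; ring
  have hσq : σ * q < finrank ℝ E := (div_lt_one hd).1 (sub_pos.1 (hθ ▸ by positivity))
  obtain ⟨C₁, hC₁, hmax⟩ := hs.exists_mixedLux_maximalFunction_le μ hr1
  obtain ⟨C₂, hC₂, hriesz⟩ := hs'.exists_mixedLux_rieszPotential_le μ hσ hq hσq
  simp only [hθ, div_inv_eq_mul, div_mul_cancel₀ _ (by positivity : (b : ℝ) + 1 ≠ 0)] at hriesz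
  rw [hr]
  refine ⟨max C₁ C₂, isFunctionNorm_mixedLux hs.measurable hs.one_le measurable_const
    fun _ => hr1.le, isFunctionNorm_mixedLux hs'.measurable hs'.one_le measurable_const
    fun _ => hq.le, max_ne_top hC₁ hC₂, fun hf => (hmax _ hf).trans ?_, fun hf => ?_,
    fun hf hg hfN hgN => ?_⟩
  · gcongr
    exact le_max_left _ _
  · rw [mul_comm]
    refine (hriesz _ hf).trans ?_
    gcongr
    exact le_max_right _ _
  · simpa only [mul_div_cancel_left₀ _ (by positivity : (b : ℝ) + 1 ≠ 0)] using
      mixedLux_pow_mul_le hs.measurable hs.one_le measurable_const (fun _ => hr1.le) hb hf hg hfN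
        hgN

section Kernels

variable {n : ℕ} {α : ℝ} {ν : Measure ℝ}

namespace IsStableLaw

lemma gKer_eq (h : IsStableLaw α ν) (hα : 0 < α) {t : ℝ} (ht : 0 < t) (x : Rn n) :
    gKer n α t x = fractionalHeatKernel ν α (t, x) := by
  rw [gKer, h.fourierInv_exp_neg_mul_norm_rpow hα ht, Complex.ofReal_re, fractionalHeatKernel]

lemma dKer_eq (h : IsStableLaw α ν) (hα : 0 < α) {t : ℝ} (ht : 0 < t) (j : Fin n) (x : Rn n) :
    dKer n α t j x = fractionalHeatKernelDeriv ν α (EuclideanSpace.single j 1) (t, x) := by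
  have hg : gKer n α t = subordinatedKernel ν (t ^ (1 / α)) := funext (h.gKer_eq hα ht)
  rw [dKer, hg, (h.hasFDerivAt_subordinatedKernel hα (Real.rpow_pos_of_pos ht _) x).fderiv,
    fractionalHeatKernelDeriv]

lemma conv_gKer_eq (h : IsStableLaw α ν) (hα : 0 < α) {t : ℝ} (ht : 0 < t) (u₀ : Rn n → ℝ)
    (x : Rn n) : conv n (gKer n α t) u₀ x = fractionalHeatEvolution ν α u₀ (t, x) := by
  simp only [conv, fractionalHeatEvolution, h.gKer_eq hα ht]

lemma dKer_mul_ae_eq (h : IsStableLaw α ν) (hα : 0 < α) (w : ℝ × Rn n → ℝ) (z : ℝ × Rn n)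
    (j : Fin n) :
    (fun ζ : ℝ × Rn n => dKer n α (z.1 - ζ.1) j (z.2 - ζ.2) * w ζ)
      =ᵐ[(volume.prod volume).restrict (Ioc 0 z.1 ×ˢ univ)]
      fun ζ => fractionalHeatKernelDeriv ν α (EuclideanSpace.single j 1) (z - ζ) * w ζ := by
  have hne : ∀ᵐ ζ : ℝ × Rn n ∂volume.prod volume, ζ.1 ≠ z.1 :=
    Measure.quasiMeasurePreserving_fst.ae (Measure.ae_ne volume z.1)
  filter_upwards [ae_restrict_of_ae hne,
    ae_restrict_mem (measurableSet_Ioc.prod MeasurableSet.univ)] with ζ hζ hmem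
  rw [h.dKer_eq hα (sub_pos.2 (hmem.1.2.lt_of_ne hζ))]
  rfl

lemma sum_integral_conv_dKer_eq (h : IsStableLaw α ν) (hα : 0 < α) {w : ℝ × Rn n → ℝ}
    {z : ℝ × Rn n}
    (hw : ∀ j, IntegrableOn (fun ζ : ℝ × Rn n => dKer n α (z.1 - ζ.1) j (z.2 - ζ.2) * w ζ)
      (Ioc 0 z.1 ×ˢ univ) (volume.prod volume)) :
    ∑ j, ∫ s in Ioc 0 z.1, conv n (dKer n α (z.1 - s) j) (fun y => w (s, y)) z.2 =
      duhamel volume (fractionalHeatKernelDeriv ν α (∑ j, EuclideanSpace.single j 1)) w z := by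
  calc ∑ j, ∫ s in Ioc 0 z.1, conv n (dKer n α (z.1 - s) j) (fun y => w (s, y)) z.2
      = ∑ j, ∫ ζ in Ioc 0 z.1 ×ˢ univ, dKer n α (z.1 - ζ.1) j (z.2 - ζ.2) * w ζ
          ∂volume.prod volume := by
        simp only [conv, setIntegral_prod _ (hw _), setIntegral_univ]
    _ = ∑ j, ∫ ζ in Ioc 0 z.1 ×ˢ univ,
          fractionalHeatKernelDeriv ν α (EuclideanSpace.single j 1) (z - ζ) * w ζ
          ∂volume.prod volume :=
        Finset.sum_congr rfl fun j _ => integral_congr_ae (h.dKer_mul_ae_eq hα w z j)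
    _ = _ := by
        rw [← integral_finsetSum _ fun j _ => (hw j).congr (h.dKer_mul_ae_eq hα w z j)]
        simp only [duhamel, fractionalHeatKernelDeriv, map_sum, Finset.sum_mul]

end IsStableLaw

end Kernels

lemma mixedNorm_eq_mixedLux (n : ℕ) (p : Rn n → ℝ) (r : ℝ) (f : Rn n → ℝ) :
    mixedNorm n p r f = mixedLux volume p (fun _ => r) fun x => ‖f x‖ₑ := by
  simp only [mixedNorm, luxNormR, mixedLux, Real.enorm_eq_ofReal_abs]

lemma mixedN_eq_mixedLux (n : ℕ) (p : Rn n → ℝ) (r : ℝ) (u : ℝ → Rn n → ℝ) :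
    mixedN n p r u =
      mixedLux volume p (fun _ => r) (timeEssSup fun z => ‖Function.uncurry u z‖ₑ) := by
  have h : timeSup n u = timeEssSup fun z => ‖Function.uncurry u z‖ₑ := by
    ext x
    simp only [timeSup, timeEssSup, Function.uncurry_apply_pair, Real.enorm_eq_ofReal_abs]
  rw [mixedN, mixedLux, h]

lemma IsAdmissiblePair.isMildSol1_iff {n b : ℕ} [Nontrivial (Rn n)] {α : ℝ} {ν : Measure ℝ}
    {K R : ℝ≥0∞} {N N' : (Rn n → ℝ≥0∞) → ℝ≥0∞} {u₀ : Rn n → ℝ} {F u : ℝ → Rn n → ℝ}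
    (h : IsAdmissiblePair volume (2 * α - 1) b K N N') (hν : IsStableLaw α ν) (hα : 0 < α)
    (hαn : α < (n : ℝ) / 2 + 1) (hu₀ : Measurable u₀) (hF : Measurable (Function.uncurry F))
    (hNu₀ : N (fun x => ‖u₀ x‖ₑ) ≠ ∞)
    (hNF : N' (timeEssSup fun z => ‖Function.uncurry F z‖ₑ) ≠ ∞)
    (hu : Function.uncurry u ∈ IsFunctionNorm.closedBall (fun w => N (timeEssSup w)) R)
    (hR : R ≠ ∞) :
    IsMildSol1 n α b (Ioi 0) F u₀ u ↔
      ∀ᵐ z ∂(volume.restrict (Ioi 0)).prod volume, Function.uncurry u z =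
        mildMap ν α b (∑ j, EuclideanSpace.single j 1) u₀ (Function.uncurry F)
          (Function.uncurry u) z := by
  have := hν.isProbabilityMeasure
  obtain ⟨C, hH⟩ := hν.exists_isTimeIntegrableKernel (Rn n) hα (by simpa using hαn)
  have hpow : Measurable fun z => |Function.uncurry u z| ^ b * Function.uncurry u z :=
    (hu.1.abs.pow_const b).mul hu.1
  have hmax : ∀ᵐ x, maximalFunction volume (fun y => ‖u₀ y‖ₑ) x < ∞ :=
    h.isFunctionNorm.ae_lt_top (measurable_maximalFunction _)
      (ne_top_of_le_ne_top (ENNReal.mul_ne_top h.const_ne_top hNu₀)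
        (h.maximalFunction_le hu₀.enorm))
  have hint {w : ℝ × Rn n → ℝ} (hw : Measurable w) {z : ℝ × Rn n}
      (hz : rieszPotential volume (2 * α - 1) (timeEssSup fun ζ => ‖w ζ‖ₑ) z.2 < ∞) (j : Fin n) :
      IntegrableOn (fun ζ : ℝ × Rn n => dKer n α (z.1 - ζ.1) j (z.2 - ζ.2) * w ζ)
        (Ioc 0 z.1 ×ˢ univ) (volume.prod volume) :=
    ((hH _).integrableOn hw hz).congr (hν.dKer_mul_ae_eq hα w z j).symm
  refine eventually_congr ?_
  filter_upwards [Measure.quasiMeasurePreserving_fst.ae (ae_restrict_mem measurableSet_Ioi),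
    Measure.quasiMeasurePreserving_snd.ae hmax,
    Measure.quasiMeasurePreserving_snd.ae
      (h.ae_rieszPotential_lt_top (measurable_timeEssSup hF.enorm) hNF),
    Measure.quasiMeasurePreserving_snd.ae (h.ae_rieszPotential_lt_top
      (measurable_timeEssSup hpow.enorm) (h.norm_abs_pow_mul_ne_top hu hR))] with z hz hz₀ hzF hzu
  have hkernel := hν.integrable_fractionalHeatKernel_mul hu₀ hz hz₀
  simp only [← hν.gKer_eq hα hz] at hkernel
  have hD := hν.sum_integral_conv_dKer_eq hα (hint hF hzF)
  have hD' := hν.sum_integral_conv_dKer_eq hα (hint hpow hzu)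
  rw [mildMap, ← hD, ← hD', ← hν.conv_gKer_eq hα hz]
  exact ⟨fun H => H.2.2.2, fun H => ⟨hkernel, hint hF hzF, hint hpow hzu, H⟩⟩

end WellPosedness

theorem stmt1_general (n b : ℕ) (α : ℝ) (hα : 1 / 2 < α ∧ α ≤ 1)
    (hnb : (2 * α - 1) * ((b : ℝ) + 1) < (n : ℝ) * b)
    (p : Rn n → ℝ) (hplog : IsPLog univ p)
    (hpminus : ∃ pm : ℝ, (b : ℝ) + 1 < pm ∧ ∀ᵐ x ∂(volume : Measure (Rn n)), pm ≤ p x)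
    (hpplus : ∃ P : ℝ, ∀ᵐ x ∂(volume : Measure (Rn n)), p x ≤ P) :
    ∃ ε > (0 : ℝ), ∀ (u₀ : Rn n → ℝ) (F : ℝ → Rn n → ℝ),
      Measurable u₀ → Measurable (Function.uncurry F) →
      mixedNorm n p ((n : ℝ) * b / (2 * α - 1)) u₀
        + mixedN n (fun x => p x / ((b : ℝ) + 1)) ((n : ℝ) * b / (((b : ℝ) + 1) * (2 * α - 1))) F
        < ENNReal.ofReal ε →
      ∃ R > (0 : ℝ), ∃ u : ℝ → Rn n → ℝ, Measurable (Function.uncurry u) ∧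
        mixedN n p ((n : ℝ) * b / (2 * α - 1)) u ≤ ENNReal.ofReal R ∧
        IsMildSol1 n α b (Ioi 0) F u₀ u ∧
        ∀ v : ℝ → Rn n → ℝ, Measurable (Function.uncurry v) →
          mixedN n p ((n : ℝ) * b / (2 * α - 1)) v ≤ ENNReal.ofReal R →
          IsMildSol1 n α b (Ioi 0) F u₀ v →
          ∀ᵐ tx : ℝ × Rn n ∂((volume.restrict (Ioi (0 : ℝ))).prod volume),
            v tx.1 tx.2 = u tx.1 tx.2 := by
  obtain ⟨pm, hpm, hlo⟩ := hpminus
  obtain ⟨P, hhi⟩ := hpplus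
  have hσ : 0 < 2 * α - 1 := by linarith
  have hα0 : 0 < α := by linarith
  have hpos : (0 : ℝ) < n * b := lt_trans (by positivity) hnb
  obtain ⟨hn, hb⟩ : n ≠ 0 ∧ b ≠ 0 := by constructor <;> rintro rfl <;> simp at hpos
  have : NeZero n := ⟨hn⟩
  have hn1 : (1 : ℝ) ≤ n := Nat.one_le_cast.2 (Nat.one_le_iff_ne_zero.2 hn)
  have hαn : α < (n : ℝ) / 2 + 1 := by linarith
  obtain ⟨ν, hν⟩ := exists_isStableLaw hα0 hα.2
  obtain ⟨K, hK⟩ := hplog.exists_isAdmissiblePair volume hb hσ (by simpa using hnb) hpm hlo hhi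
  rw [finrank_euclideanSpace_fin] at hK
  obtain ⟨ε, R, hε, hR, hfix⟩ := hK.exists_unique_mildMap_fixedPoint hν hα0
    (by simpa using hαn) hb (∑ j, EuclideanSpace.single j 1)
  refine ⟨ε, hε, fun u₀ F hu₀ hF hsmall => ⟨R, hR, ?_⟩⟩
  simp only [mixedNorm_eq_mixedLux, mixedN_eq_mixedLux, ENNReal.ofReal_coe_nnreal] at hsmall ⊢
  have hne := ne_top_of_lt hsmall
  have hiff {u : ℝ → Rn n → ℝ} := hK.isMildSol1_iff (u := u) (R := R) hν hα0 hαn hu₀ hF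
    (ENNReal.add_ne_top.1 hne).1 (ENNReal.add_ne_top.1 hne).2
  obtain ⟨u, hu, hsol, huniq⟩ := hfix hu₀ hF hsmall.le
  exact ⟨Function.curry u, hu.1, hu.2, (hiff (u := Function.curry u) hu ENNReal.coe_ne_top).2 hsol,
    fun v hvm hvR hv => huniq _ ⟨hvm, hvR⟩ ((hiff ⟨hvm, hvR⟩ ENNReal.coe_ne_top).1 hv)⟩

/-- Global well-posedness (γ = 1) for small data in mixed variable Lebesgue spaces. -/
theorem stmt1 (n b : ℕ) (hn : 1 ≤ n) (hb : 1 ≤ b) (α : ℝ) (hα : 1/2 < α ∧ α ≤ 1)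
    (h2α : 2 * α - 1 < n) (hnb : (2 * α - 1) * ((b:ℝ) + 1) < (n:ℝ) * b)
    (p : Rn n → ℝ) (hplog : IsPLog univ p)
    (hpminus : ∃ pm : ℝ, (b:ℝ) + 1 < pm ∧ ∀ᵐ x ∂(volume : Measure (Rn n)), pm ≤ p x)
    (hpplus : ∃ P : ℝ, (∀ᵐ x ∂(volume : Measure (Rn n)), p x ≤ P) ∧
      (2 * α - 1) * P < (n:ℝ) * ((b:ℝ) + 1)) :
    ∃ ε > (0:ℝ), ∀ (u₀ : Rn n → ℝ) (F : ℝ → Rn n → ℝ),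
      Measurable u₀ → Measurable (Function.uncurry F) →
      mixedNorm n p ((n:ℝ) * b / (2 * α - 1)) u₀
        + mixedN n (fun x => p x / ((b:ℝ) + 1)) ((n:ℝ) * b / (((b:ℝ) + 1) * (2 * α - 1))) F
        < ENNReal.ofReal ε →
      ∃ R > (0:ℝ), ∃ u : ℝ → Rn n → ℝ, Measurable (Function.uncurry u) ∧
        mixedN n p ((n:ℝ) * b / (2 * α - 1)) u ≤ ENNReal.ofReal R ∧
        IsMildSol1 n α b (Ioi 0) F u₀ u ∧
        ∀ v : ℝ → Rn n → ℝ, Measurable (Function.uncurry v) →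
          mixedN n p ((n:ℝ) * b / (2 * α - 1)) v ≤ ENNReal.ofReal R →
          IsMildSol1 n α b (Ioi 0) F u₀ v →
          ∀ᵐ tx : ℝ × Rn n ∂((volume.restrict (Ioi (0:ℝ))).prod volume),
            v tx.1 tx.2 = u tx.1 tx.2 :=
  stmt1_general n b α hα hnb p hplog hpminus (hpplus.imp fun _ h => h.1)
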